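/- Suppose 1 < H₀ < H and y₀ < y ≤ exp(log H/(c·log log H)) with c = 1.4·10⁴ and y₀ a sufficiently large absolute constant. Then for any real T, any real α, and any integer ν with 0 ≤ ν ≤ exp((log y)^{1/4}), one has ∫_T^{T+H} sgn(V_y(t) − α) dt = (H/√(2π))·Σ_{n=0}^{ν} (Φ_n/(2σ)ⁿ)·∫_{−∞}^{+∞} e^{−u²/2} H_{2n}(u)·sgn(u·√(σ/2) − α) du + O(H·Δ), where Δ = (log y)^{−1/2}/(log log y) + (log y/log H)^{1/2} + (1/(ν+1))·((log log(ν+2)+1)/σ)^{ν+1}, and the implied O-constant is absolute. -/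

import Mathlib

open MeasureTheory Real Complex Filter

/-- The set of primes `p ≤ y`. -/
noncomputable def primesLe (y : ℝ) : Finset ℕ :=
  (Finset.range (⌊y⌋₊ + 1)).filter Nat.Prime

/-- `V_y(t) = ∑_{p ≤ y} sin(t log p)/√p`. -/
noncomputable def Vy (y t : ℝ) : ℝ :=
  ∑ p ∈ primesLe y, Real.sin (t * Real.log p) / Real.sqrt p

/-- `σ = σ(y) = ∑_{p ≤ y} 1/p`. -/
noncomputable def sigmay (y : ℝ) : ℝ := ∑ p ∈ primesLe y, (1 : ℝ) / p

/-- `J0twoISqrt w = J₀(2i√w) = ∑_{n≥0} wⁿ/(n!)²`, where `J₀` is the Bessel function of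
the first kind of order 0. -/
noncomputable def J0twoISqrt (w : ℂ) : ℂ := ∑' n : ℕ, w ^ n / ((n.factorial : ℂ)) ^ 2

/-- `G(z) = ∏_{p ≤ y} J₀(2i√(z/p))`. -/
noncomputable def Gfun (y : ℝ) (z : ℂ) : ℂ := ∏ p ∈ primesLe y, J0twoISqrt (z / (p : ℂ))

/-- `φ(z) = e^{-z} J₀(2i√z)`. -/
noncomputable def phifun (z : ℂ) : ℂ := Complex.exp (-z) * J0twoISqrt z

/-- `Φ(z) = ∏_{p ≤ y} φ(z/p)`. -/
noncomputable def Phifun (y : ℝ) (z : ℂ) : ℂ := ∏ p ∈ primesLe y, phifun (z / (p : ℂ))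

/-- The `n`-th Taylor coefficient of `Φ` at `0`. -/
noncomputable def PhiCoef (y : ℝ) (n : ℕ) : ℂ := iteratedDeriv n (Phifun y) 0 / (n.factorial : ℂ)

/-- Evaluation of the (probabilists') Hermite polynomial
`H_n(x) = (-1)ⁿ e^{x²/2} (d/dx)ⁿ e^{-x²/2}`. -/
noncomputable def hermiteEval (n : ℕ) (x : ℝ) : ℝ := Polynomial.aeval x (Polynomial.hermite n)

/-- The `n`-th Taylor coefficient `Φ_n` of `Φ` at `0` (a real number). -/
noncomputable def PhiCoefR (y : ℝ) (n : ℕ) : ℝ := (PhiCoef y n).re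

/-!
Esseen smoothing with the kernel `K(x) = ∫₀¹ (1 - l) cos(lx) dl` compares the mean value of
`sgn(V_y(t) - a)` over `(T, T + H]` with the integral of `sgn(√(σ/2) u - a)` against
`W(u) = (2π)^{-1/2} e^{-u²/2} ∑_{n ≤ ν} (Φ_n/(2σ)ⁿ) H_{2n}(u)`. Writing `f` and `g` for the two
characteristic functions and `L` for the smoothing scale, the error is
`O(∫₀¹ |f(Ll) - g(Ll)| dl/l + 1/(L√σ))`.

The function `f(t)` is first replaced by `∏_{p ≤ y} J₀(t/√p)`, the characteristic function of
`V_y` when the phases `t log p` are independent and uniform: expand the exponential up to a moment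
of even order `k`, and use that a nonzero integer combination of the `log p` with coefficients of
total size `k` is at least `y^{-k}`. This product equals `e^{-σt²/4} Φ(-t²/4)`, and `g` is the same
expression with the Taylor series of `Φ` cut at `ν`. Since `φ(z) = 1 + O(z²)`, Cauchy's estimate on
the circle of radius about `n / log log n` gives `|Φ_n| ≤ C (log log (n + 1) + 1)ⁿ / n!`, which
bounds the tail. Finally `L` is the minimum of `√(k/(4σ))` and `√(log y · log log y)`, with `k` of
order `log H / log y`.
-/

/-! ### Sums over primes -/

section PrimeSums

lemma prod_primesLE_pow_div_dvd_factorial (n : ℕ) :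
    ∏ p ∈ n.primesLE, p ^ (n / p) ∣ n.factorial := by
  refine Finset.prod_dvd_of_isRelPrime (fun p hp q hq hpq ↦ ?_) fun p hp ↦ ?_
  · exact Nat.coprime_iff_isRelPrime.1 <| Nat.Coprime.pow _ _ <|
      (Nat.coprime_primes (Nat.prime_of_mem_primesLE hp) (Nat.prime_of_mem_primesLE hq)).2 hpq
  · have hp' := Nat.prime_of_mem_primesLE hp
    rw [hp'.pow_dvd_iff_le_factorization n.factorial_ne_zero,
      Nat.factorization_factorial hp' (b := Nat.log p n + 2) (by omega)]
    calc n / p = n / p ^ 1 := by rw [pow_one]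
      _ ≤ _ := Finset.single_le_sum (f := fun i ↦ n / p ^ i) (fun _ _ ↦ Nat.zero_le _) (by simp)

lemma sum_primesLE_div_mul_log_le (n : ℕ) :
    ∑ p ∈ n.primesLE, ((n / p : ℕ) : ℝ) * Real.log p ≤ n * Real.log n := by
  have hpos : ∀ p ∈ n.primesLE, 0 < p ^ (n / p) := fun p hp ↦
    pow_pos (Nat.prime_of_mem_primesLE hp).pos _
  have hle : ∏ p ∈ n.primesLE, p ^ (n / p) ≤ n ^ n :=
    (Nat.le_of_dvd n.factorial_pos (prod_primesLE_pow_div_dvd_factorial n)).trans n.factorial_le_pow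
  have hlog := Real.log_le_log (mod_cast Finset.prod_pos hpos)
    (show ((∏ p ∈ n.primesLE, p ^ (n / p) : ℕ) : ℝ) ≤ (n : ℝ) ^ n by exact_mod_cast hle)
  rw [Nat.cast_prod, Real.log_prod fun p hp ↦ mod_cast (hpos p hp).ne'] at hlog
  simpa using hlog

lemma sum_primesLE_log_div_le (n : ℕ) :
    ∑ p ∈ n.primesLE, Real.log p / p ≤ Real.log n + Real.log 4 := by
  rcases n.eq_zero_or_pos with rfl | hn
  · simp [Nat.primesLE_eq_filter_Icc_one, Real.log_nonneg]
  have hn' : (0 : ℝ) < n := mod_cast hn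
  have htheta : ∑ p ∈ n.primesLE, Real.log p ≤ Real.log 4 * n := by
    simpa [Chebyshev.theta_eq_sum_primesLE_log] using Chebyshev.theta_le_log4_mul_x hn'.le
  have hsum : n * ∑ p ∈ n.primesLE, Real.log p / p ≤
      ∑ p ∈ n.primesLE, (((n / p : ℕ) : ℝ) * Real.log p + Real.log p) := by
    rw [Finset.mul_sum]
    refine Finset.sum_le_sum fun p _ ↦ ?_
    have hfloor : (n : ℝ) / p ≤ (n / p : ℕ) + 1 := by
      simpa [Nat.floor_div_natCast] using (Nat.lt_floor_add_one ((n : ℝ) / p)).le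
    calc n * (Real.log p / p) = n / p * Real.log p := by ring
      _ ≤ ((n / p : ℕ) + 1) * Real.log p := by gcongr
      _ = _ := by ring
  rw [Finset.sum_add_distrib] at hsum
  refine le_of_mul_le_mul_left (hsum.trans ?_) hn'
  linarith [sum_primesLE_div_mul_log_le n]

/-- `n ↦ n ^ (-s)` as a completely multiplicative function, the form required by the library's
Euler products. -/
noncomputable def rpowNegHom (s : ℝ) : ℕ →* ℝ where
  toFun n := (n : ℝ) ^ (-s)
  map_one' := by simp
  map_mul' a b := by rw [Nat.cast_mul, Real.mul_rpow a.cast_nonneg b.cast_nonneg]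

lemma rpowNegHom_apply (s : ℝ) (n : ℕ) : rpowNegHom s n = (n : ℝ) ^ (-s) := rfl

lemma rpow_neg_lt_one_of_prime {s : ℝ} (hs : 0 < s) {p : ℕ} (hp : p.Prime) : (p : ℝ) ^ (-s) < 1 :=
  Real.rpow_lt_one_of_one_lt_of_neg (mod_cast hp.one_lt) (by linarith)

lemma hasSum_smoothNumbers_rpow_neg {s : ℝ} (hs : 0 < s) (n : ℕ) :
    HasSum (fun k : Nat.smoothNumbers (n + 1) ↦ ((k : ℕ) : ℝ) ^ (-s))
      (∏ p ∈ n.primesLE, (1 - (p : ℝ) ^ (-s))⁻¹) := by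
  refine (EulerProduct.summable_and_hasSum_smoothNumbers_prod_primesBelow_geometric
    (f := rpowNegHom s) (fun {p} hp ↦ ?_) (n + 1)).2
  rw [rpowNegHom_apply, Real.norm_of_nonneg (by positivity)]
  exact rpow_neg_lt_one_of_prime hs hp

lemma prod_primesLE_inv_le_tsum {s : ℝ} (hs : 1 < s) (n : ℕ) :
    ∏ p ∈ n.primesLE, (1 - (p : ℝ) ^ (-s))⁻¹ ≤ ∑' k : ℕ, 1 / (k : ℝ) ^ s := by
  rw [← (hasSum_smoothNumbers_rpow_neg (by linarith) n).tsum_eq]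
  simp only [Real.rpow_neg (Nat.cast_nonneg _), ← one_div]
  exact (Real.summable_one_div_nat_rpow.2 hs).tsum_subtype_le _ _ fun k ↦ by positivity

lemma log_le_prod_primesLE_inv (n : ℕ) :
    Real.log (n + 1) ≤ ∏ p ∈ n.primesLE, (1 - (p : ℝ)⁻¹)⁻¹ := by
  have hE := hasSum_smoothNumbers_rpow_neg one_pos n
  simp only [Real.rpow_neg_one] at hE
  have hmem : ∀ i ∈ Finset.Icc 1 n, i ∈ Nat.smoothNumbers (n + 1) := fun i hi ↦ by
    rw [Finset.mem_Icc] at hi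
    exact Nat.mem_smoothNumbers_of_lt (by omega) (by omega)
  calc Real.log (n + 1) ≤ (harmonic n : ℝ) := mod_cast log_add_one_le_harmonic n
    _ = ∑ i ∈ Finset.Icc 1 n, (i : ℝ)⁻¹ := by rw [harmonic_eq_sum_Icc]; push_cast; rfl
    _ = ∑ i ∈ (Finset.Icc 1 n).subtype (· ∈ Nat.smoothNumbers (n + 1)), ((i : ℕ) : ℝ)⁻¹ :=
      (Finset.sum_subtype_of_mem (fun i : ℕ ↦ (i : ℝ)⁻¹) hmem).symm
    _ ≤ _ := sum_le_hasSum _ (fun i _ ↦ by positivity) hE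

lemma inv_le_rpow_neg_one_add {x δ : ℝ} (hx : 1 ≤ x) :
    x⁻¹ ≤ x ^ (-(1 + δ)) + δ * (Real.log x / x) := by
  have hx0 : 0 < x := by linarith
  have hexp : 1 - δ * Real.log x ≤ x ^ (-δ) := by
    rw [Real.rpow_def_of_pos hx0]
    linarith [Real.add_one_le_exp (Real.log x * -δ)]
  calc x⁻¹ = (1 - δ * Real.log x) * x⁻¹ + δ * (Real.log x / x) := by ring
    _ ≤ x ^ (-δ) * x⁻¹ + δ * (Real.log x / x) := by gcongr
    _ = _ := by rw [← Real.rpow_neg_one x, ← Real.rpow_add hx0]; ring_nf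

lemma add_sq_div_two_le_neg_log {x : ℝ} (hx : 0 ≤ x) (hx1 : x < 1) :
    x + x ^ 2 / 2 ≤ -Real.log (1 - x) := by
  have h := Real.hasSum_pow_div_log_of_abs_lt_one (x := x) (by rwa [abs_of_nonneg hx])
  have := sum_le_hasSum (Finset.range 2) (fun i _ ↦ by positivity) h
  norm_num [Finset.sum_range_succ] at this
  linarith

lemma sum_primesLE_rpow_neg_le {s : ℝ} (hs : 1 < s) {n : ℕ} (hn : 2 ≤ n) :
    ∑ p ∈ n.primesLE, (p : ℝ) ^ (-s) + ((2 : ℝ) ^ (-s)) ^ 2 / 2 ≤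
      Real.log (∑' k : ℕ, 1 / (k : ℝ) ^ s) := by
  have hs0 : 0 < s := by linarith
  have hlt : ∀ p ∈ n.primesLE, (p : ℝ) ^ (-s) < 1 := fun p hp ↦
    rpow_neg_lt_one_of_prime hs0 (Nat.prime_of_mem_primesLE hp)
  have hinv : ∀ p ∈ n.primesLE, 0 < (1 - (p : ℝ) ^ (-s))⁻¹ := fun p hp ↦
    inv_pos.2 (sub_pos.2 (hlt p hp))
  have h2 : 2 ∈ n.primesLE := Nat.mem_primesLE.2 ⟨hn, Nat.prime_two⟩
  calc ∑ p ∈ n.primesLE, (p : ℝ) ^ (-s) + ((2 : ℝ) ^ (-s)) ^ 2 / 2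
      ≤ ∑ p ∈ n.primesLE, (p : ℝ) ^ (-s) + ∑ p ∈ n.primesLE, ((p : ℝ) ^ (-s)) ^ 2 / 2 := by
        gcongr
        simpa using Finset.single_le_sum (f := fun p : ℕ ↦ ((p : ℝ) ^ (-s)) ^ 2 / 2)
          (fun p _ ↦ by positivity) h2
    _ ≤ ∑ p ∈ n.primesLE, Real.log (1 - (p : ℝ) ^ (-s))⁻¹ := by
        rw [← Finset.sum_add_distrib]
        refine Finset.sum_le_sum fun p hp ↦ ?_
        rw [Real.log_inv]
        exact add_sq_div_two_le_neg_log (by positivity) (hlt p hp)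
    _ = Real.log (∏ p ∈ n.primesLE, (1 - (p : ℝ) ^ (-s))⁻¹) :=
        (Real.log_prod fun p hp ↦ (hinv p hp).ne').symm
    _ ≤ _ := Real.log_le_log (Finset.prod_pos hinv) (prod_primesLE_inv_le_tsum hs n)

lemma sum_primesLE_inv_le_of_pos {δ : ℝ} (hδ : 0 < δ) {n : ℕ} (hn : 2 ≤ n) :
    ∑ p ∈ n.primesLE, (1 : ℝ) / p ≤ Real.log (∑' k : ℕ, 1 / (k : ℝ) ^ (1 + δ))
      - ((2 : ℝ) ^ (-(1 + δ))) ^ 2 / 2 + δ * (Real.log n + Real.log 4) := by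
  have hterm : ∀ p ∈ n.primesLE, (1 : ℝ) / p ≤ (p : ℝ) ^ (-(1 + δ)) + δ * (Real.log p / p) :=
    fun p hp ↦ (one_div (p : ℝ)).trans_le <|
      inv_le_rpow_neg_one_add (mod_cast (Nat.prime_of_mem_primesLE hp).one_le)
  have hsum := Finset.sum_le_sum hterm
  rw [Finset.sum_add_distrib, ← Finset.mul_sum] at hsum
  have hlog := mul_le_mul_of_nonneg_left (sum_primesLE_log_div_le n) hδ.le
  linarith [sum_primesLE_rpow_neg_le (s := 1 + δ) (by linarith) hn]

lemma tendsto_mul_tsum_one_div_rpow_one_add :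
    Tendsto (fun δ : ℝ ↦ δ * ∑' k : ℕ, 1 / (k : ℝ) ^ (1 + δ)) (nhdsWithin 0 (Set.Ioi 0))
      (nhds 1) := by
  have hshift : Tendsto (fun δ : ℝ ↦ 1 + δ) (nhdsWithin 0 (Set.Ioi 0))
      (nhdsWithin 1 (Set.Ioi 1)) := by
    refine tendsto_nhdsWithin_iff.2 ⟨?_, ?_⟩
    · exact (Continuous.tendsto' (by fun_prop) _ _ (by simp)).mono_left nhdsWithin_le_nhds
    · filter_upwards [self_mem_nhdsWithin] with δ hδ
      simpa using hδ
  simpa [Function.comp_def] using tendsto_sub_mul_tsum_nat_rpow.comp hshift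

/-- Rankin's trick with exponent `1 + 1 / log n`; any constant below `1` would do in place of
`9 / 10`. -/
lemma eventually_sum_primesLE_inv_le :
    ∀ᶠ n : ℕ in atTop, ∑ p ∈ n.primesLE, (1 : ℝ) / p ≤ Real.log (Real.log n) + 9 / 10 := by
  set ζ : ℝ → ℝ := fun δ ↦ ∑' k : ℕ, 1 / (k : ℝ) ^ (1 + δ)
  have hlog : Tendsto (fun n : ℕ ↦ Real.log n) atTop atTop :=
    Real.tendsto_log_atTop.comp tendsto_natCast_atTop_atTop
  have hδ : Tendsto (fun n : ℕ ↦ (Real.log n)⁻¹) atTop (nhdsWithin 0 (Set.Ioi 0)) :=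
    tendsto_inv_atTop_nhdsGT_zero.comp hlog
  have hlim : Tendsto (fun δ : ℝ ↦ Real.log (δ * ζ δ) - ((2 : ℝ) ^ (-(1 + δ))) ^ 2 / 2
      + (1 + δ * Real.log 4)) (nhdsWithin 0 (Set.Ioi 0)) (nhds (7 / 8)) := by
    have hζ := tendsto_mul_tsum_one_div_rpow_one_add.log one_ne_zero
    have hpow : Tendsto (fun δ : ℝ ↦ ((2 : ℝ) ^ (-(1 + δ))) ^ 2 / 2) (nhdsWithin 0 (Set.Ioi 0))
        (nhds (1 / 8)) := by
      refine (Continuous.tendsto' ?_ _ _ ?_).mono_left nhdsWithin_le_nhds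
      · fun_prop (disch := norm_num)
      · norm_num [Real.rpow_neg_one]
    have hlin : Tendsto (fun δ : ℝ ↦ 1 + δ * Real.log 4) (nhdsWithin 0 (Set.Ioi 0)) (nhds 1) :=
      (Continuous.tendsto' (by fun_prop) _ _ (by simp)).mono_left nhdsWithin_le_nhds
    convert (hζ.sub hpow).add hlin using 2
    norm_num
  filter_upwards [(hlim.comp hδ).eventually_le_const (by norm_num : (7 / 8 : ℝ) < 9 / 10),
    (tendsto_mul_tsum_one_div_rpow_one_add.comp hδ).eventually_const_lt one_pos,
    hlog.eventually_gt_atTop 0, eventually_ge_atTop 2] with n hsmall hpos hn hn2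
  have hζ : Real.log ((Real.log n)⁻¹ * ζ (Real.log n)⁻¹) =
      Real.log (ζ (Real.log n)⁻¹) - Real.log (Real.log n) := by
    rw [Real.log_mul (left_ne_zero_of_mul hpos.ne') (right_ne_zero_of_mul hpos.ne'), Real.log_inv]
    ring
  have hone : (Real.log n)⁻¹ * Real.log n = 1 := inv_mul_cancel₀ hn.ne'
  have hle := sum_primesLE_inv_le_of_pos (inv_pos.2 hn) hn2
  simp only [Function.comp_apply, hζ] at hsmall
  linarith

lemma sum_primesLE_inv_mul_sub_one_le {n : ℕ} (hn : 1 ≤ n) :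
    ∑ p ∈ n.primesLE, (1 : ℝ) / (p * (p - 1)) ≤ 1 - 1 / n := by
  induction n, hn using Nat.le_induction with
  | base => simp [show Nat.primesLE 1 = ∅ by decide]
  | succ n hn ih =>
    have : (0 : ℝ) < n := mod_cast hn
    have htel : (1 : ℝ) / ((n + 1 : ℕ) * ((n + 1 : ℕ) - 1)) = 1 / n - 1 / (n + 1 : ℕ) := by
      push_cast
      rw [add_sub_cancel_right]
      field_simp
      ring
    have hpos : (0 : ℝ) < 1 / ((n + 1 : ℕ) * ((n + 1 : ℕ) - 1)) := by
      push_cast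
      rw [add_sub_cancel_right]
      positivity
    rw [Nat.primesLE_succ]
    split_ifs with hp
    · rw [Finset.sum_insert (by simp [Nat.mem_primesLE])]
      linarith
    · linarith

lemma log_log_sub_one_le_sum_primesLE_inv {n : ℕ} (hn : 1 ≤ n) :
    Real.log (Real.log (n + 1)) - 1 ≤ ∑ p ∈ n.primesLE, (1 : ℝ) / p := by
  have hlt : ∀ p ∈ n.primesLE, (1 : ℝ) < p := fun p hp ↦ mod_cast Nat.one_lt_of_mem_primesLE hp
  have hterm : ∀ p ∈ n.primesLE,
      Real.log (1 - (p : ℝ)⁻¹)⁻¹ ≤ 1 / p + 1 / (p * (p - 1)) := fun p hp ↦ by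
    have hp1 : (0 : ℝ) < p - 1 := sub_pos.2 (hlt p hp)
    have hp0 : (0 : ℝ) < p := by linarith
    have hinv : (1 - (p : ℝ)⁻¹)⁻¹ = p / (p - 1) := by field_simp
    rw [hinv]
    refine (Real.log_le_sub_one_of_pos (by positivity)).trans_eq ?_
    field_simp
    ring
  have hlog : 0 < Real.log ((n : ℝ) + 1) := Real.log_pos (by norm_cast; omega)
  have hE := Real.log_le_log hlog (log_le_prod_primesLE_inv n)
  rw [Real.log_prod fun p hp ↦ inv_ne_zero (sub_pos.2 (inv_lt_one_of_one_lt₀ (hlt p hp))).ne'] at hE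
  have hsum := Finset.sum_le_sum hterm
  rw [Finset.sum_add_distrib] at hsum
  have : (0 : ℝ) ≤ 1 / n := by positivity
  linarith [sum_primesLE_inv_mul_sub_one_le hn]

lemma primesLe_eq_primesLE (y : ℝ) : primesLe y = ⌊y⌋₊.primesLE := rfl

lemma log_log_sub_one_le_sigmay {y : ℝ} (hy : 2 ≤ y) : Real.log (Real.log y) - 1 ≤ sigmay y := by
  have hfloor : 1 ≤ ⌊y⌋₊ := Nat.le_floor (by norm_num; linarith)
  have hlog : 0 < Real.log y := Real.log_pos (by linarith)
  have hle : y ≤ ⌊y⌋₊ + 1 := (Nat.lt_floor_add_one y).le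
  exact le_trans (by gcongr) (log_log_sub_one_le_sum_primesLE_inv hfloor)

lemma inv_sq_sub_inv_sq_le {x : ℝ} (hx : 0 < x) :
    0 ≤ (x ^ 2)⁻¹ - ((x + 1) ^ 2)⁻¹ ∧
      x * ((x ^ 2)⁻¹ - ((x + 1) ^ 2)⁻¹) ≤ 2 * (x⁻¹ - (x + 1)⁻¹) := by
  refine ⟨sub_nonneg.2 (by gcongr; linarith), ?_⟩
  have hdiff : 2 * (x⁻¹ - (x + 1)⁻¹) - x * ((x ^ 2)⁻¹ - ((x + 1) ^ 2)⁻¹) =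
      (x * (x + 1) ^ 2)⁻¹ := by
    field_simp
    ring
  have : 0 < (x * (x + 1) ^ 2)⁻¹ := by positivity
  linarith

/-- Abel summation; the boundary term `A(M) / (M + 1) ^ 2` makes the induction work. -/
lemma sum_Ioc_div_sq_le_boundary_add {a : ℕ → ℝ} {c : ℝ} (ha : ∀ n, 0 ≤ a n)
    (hsum : ∀ n, ∑ k ∈ Finset.range (n + 1), a k ≤ c * n) {N M : ℕ} (hNM : N ≤ M) :
    ∑ k ∈ Finset.Ioc N M, a k / (k : ℝ) ^ 2 ≤
      (∑ k ∈ Finset.range (M + 1), a k) * (((M : ℝ) + 1) ^ 2)⁻¹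
        + 2 * c * (((N : ℝ) + 1)⁻¹ - ((M : ℝ) + 1)⁻¹) := by
  induction M, hNM using Nat.le_induction with
  | base =>
    have := Finset.sum_nonneg fun k (_ : k ∈ Finset.range (N + 1)) ↦ ha k
    simp only [Finset.Ioc_self, Finset.sum_empty, sub_self, mul_zero, add_zero]
    positivity
  | succ M hM ih =>
    obtain ⟨hdrop0, hdrop⟩ := inv_sq_sub_inv_sq_le (x := (M : ℝ) + 1) (by positivity)
    have hA := mul_le_mul_of_nonneg_right (hsum (M + 1)) hdrop0
    have hc : 0 ≤ c := by
      simpa using (Finset.sum_nonneg fun k (_ : k ∈ Finset.range 2) ↦ ha k).trans (hsum 1)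
    have hcdrop := mul_le_mul_of_nonneg_left hdrop hc
    rw [Finset.sum_Ioc_succ_top (by omega)]
    rw [Finset.sum_range_succ] at hA ⊢
    push_cast at hA ⊢
    rw [div_eq_mul_inv]
    nlinarith

lemma sum_Ioc_div_sq_le {a : ℕ → ℝ} {c : ℝ} (ha : ∀ n, 0 ≤ a n)
    (hsum : ∀ n, ∑ k ∈ Finset.range (n + 1), a k ≤ c * n) {N M : ℕ} (hNM : N ≤ M) :
    ∑ k ∈ Finset.Ioc N M, a k / (k : ℝ) ^ 2 ≤ 2 * c / (N + 1) := by
  have hc : 0 ≤ c := by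
    simpa using (Finset.sum_nonneg fun k (_ : k ∈ Finset.range 2) ↦ ha k).trans (hsum 1)
  have hboundary : (∑ k ∈ Finset.range (M + 1), a k) * (((M : ℝ) + 1) ^ 2)⁻¹ ≤
      c * ((M : ℝ) + 1)⁻¹ := by
    rw [← div_eq_mul_inv, ← div_eq_mul_inv, div_le_div_iff₀ (by positivity) (by positivity)]
    nlinarith [hsum M, (M.cast_nonneg : (0 : ℝ) ≤ M)]
  have hnonneg : 0 ≤ c * ((M : ℝ) + 1)⁻¹ := by positivity
  rw [div_eq_mul_inv]
  linarith [sum_Ioc_div_sq_le_boundary_add ha hsum hNM]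

lemma sum_primesLE_inv_sq_tail_le {N : ℕ} (hN : 1 ≤ N) (M : ℕ) :
    ∑ p ∈ M.primesLE with N < p, (1 : ℝ) / p ^ 2 ≤
      2 * Real.log 4 / ((N + 1) * Real.log (N + 1)) := by
  have hlog : 0 < Real.log ((N : ℝ) + 1) := Real.log_pos (by norm_cast; omega)
  rcases le_total M N with hMN | hNM
  · rw [Finset.filter_false_of_mem fun p hp ↦ by have := Nat.le_of_mem_primesLE hp; omega]
    rw [Finset.sum_empty]
    positivity
  set a : ℕ → ℝ := fun k ↦ if k.Prime then Real.log k else 0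
  have ha : ∀ k, 0 ≤ a k := fun k ↦ by
    simp only [a]
    split_ifs <;> positivity
  have hsum : ∀ n, ∑ k ∈ Finset.range (n + 1), a k ≤ Real.log 4 * n := fun n ↦ by
    rw [← Finset.sum_filter, ← Nat.primesLE_eq_filter_range]
    simpa [Chebyshev.theta_eq_sum_primesLE_log] using
      Chebyshev.theta_le_log4_mul_x (x := n) n.cast_nonneg
  have hle : Real.log (N + 1) * ∑ p ∈ M.primesLE with N < p, (1 : ℝ) / p ^ 2 ≤
      ∑ k ∈ Finset.Ioc N M, a k / (k : ℝ) ^ 2 := by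
    rw [Finset.mul_sum]
    refine (Finset.sum_le_sum fun p hp ↦ ?_).trans <|
      Finset.sum_le_sum_of_subset_of_nonneg (fun p hp ↦ ?_) fun k _ _ ↦
        div_nonneg (ha k) (by positivity)
    · obtain ⟨hpM, hNp⟩ := Finset.mem_filter.1 hp
      have hNp' : (N : ℝ) + 1 ≤ p := mod_cast hNp
      simp only [a, if_pos (Nat.prime_of_mem_primesLE hpM), mul_one_div]
      gcongr
    · obtain ⟨hpM, hNp⟩ := Finset.mem_filter.1 hp
      exact Finset.mem_Ioc.2 ⟨hNp, Nat.le_of_mem_primesLE hpM⟩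
  rw [← div_div, le_div_iff₀ hlog, mul_comm]
  exact hle.trans (sum_Ioc_div_sq_le ha hsum hNM)

end PrimeSums

/-! ### The functions `J₀(2i√w)` and `φ` -/

section Bessel

lemma integral_sin_pow_odd_zero_two_pi (n : ℕ) :
    ∫ x in (0 : ℝ)..(2 * π), Real.sin x ^ (2 * n + 1) = 0 := by
  induction n with
  | zero => simp
  | succ n ih => simp [show 2 * (n + 1) + 1 = (2 * n + 1) + 2 by ring, integral_sin_pow, ih]

lemma integral_sin_pow_even_zero_two_pi (n : ℕ) :
    ∫ x in (0 : ℝ)..(2 * π), Real.sin x ^ (2 * n) =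
      2 * π * ((2 * n).factorial / (4 ^ n * (n.factorial : ℝ) ^ 2)) := by
  induction n with
  | zero => simp
  | succ n ih =>
    rw [show 2 * (n + 1) = 2 * n + 2 by ring, integral_sin_pow, ih]
    simp only [Nat.factorial_succ, Real.sin_zero, Real.sin_two_pi, pow_succ]
    push_cast
    field_simp
    ring

lemma norm_pow_div_factorial_sq_le (w : ℂ) (n : ℕ) :
    ‖w ^ n / (n.factorial : ℂ) ^ 2‖ ≤ ‖w‖ ^ n / n.factorial := by
  have hfac : (1 : ℝ) ≤ n.factorial := mod_cast n.factorial_pos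
  rw [norm_div, norm_pow, norm_pow, Complex.norm_natCast]
  gcongr
  exact le_self_pow₀ hfac two_ne_zero

lemma summable_J0twoISqrt (w : ℂ) : Summable fun n : ℕ ↦ w ^ n / (n.factorial : ℂ) ^ 2 :=
  .of_norm_bounded (Real.summable_pow_div_factorial ‖w‖) (norm_pow_div_factorial_sq_le w)

lemma norm_J0twoISqrt_le (w : ℂ) : ‖J0twoISqrt w‖ ≤ Real.exp ‖w‖ := by
  rw [Real.exp_eq_exp_ℝ, NormedSpace.exp_eq_tsum_div]
  exact tsum_of_norm_bounded (Real.summable_pow_div_factorial ‖w‖).hasSum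
    (norm_pow_div_factorial_sq_le w)

lemma differentiable_J0twoISqrt : Differentiable ℂ J0twoISqrt := by
  intro z
  refine (differentiableOn_tsum_of_summable_norm (Real.summable_pow_div_factorial (‖z‖ + 1))
    (fun n ↦ ((differentiable_pow n).div_const _).differentiableOn) Metric.isOpen_ball
    fun n w hw ↦ (norm_pow_div_factorial_sq_le w n).trans ?_).differentiableAt
    (Metric.isOpen_ball.mem_nhds (by simp : z ∈ Metric.ball 0 (‖z‖ + 1)))
  have := (mem_ball_zero_iff.1 hw).le
  gcongr

lemma hasSum_integral_exp_mul_sin (w : ℂ) :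
    HasSum (fun n : ℕ ↦
        w ^ n / (n.factorial : ℂ) * ((∫ x in (0 : ℝ)..(2 * π), Real.sin x ^ n : ℝ) : ℂ))
      (∫ x in (0 : ℝ)..(2 * π), Complex.exp (w * (Real.sin x : ℝ))) := by
  have hterm : ∀ n : ℕ, w ^ n / (n.factorial : ℂ) *
      ((∫ x in (0 : ℝ)..(2 * π), Real.sin x ^ n : ℝ) : ℂ) =
        ∫ x in (0 : ℝ)..(2 * π), (w * (Real.sin x : ℝ)) ^ n / (n.factorial : ℂ) := fun n ↦ by
    rw [← intervalIntegral.integral_ofReal, ← intervalIntegral.integral_const_mul]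
    refine intervalIntegral.integral_congr fun x _ ↦ ?_
    push_cast
    ring
  simp only [hterm]
  refine intervalIntegral.hasSum_integral_of_dominated_convergence
    (bound := fun n _ ↦ ‖w‖ ^ n / n.factorial) (fun n ↦ ?_) (fun n ↦ .of_forall fun x _ ↦ ?_)
    (.of_forall fun x _ ↦ Real.summable_pow_div_factorial _) (by simp) (.of_forall fun x _ ↦ ?_)
  · exact Continuous.aestronglyMeasurable (by fun_prop)
  · rw [norm_div, norm_pow, norm_mul, Complex.norm_natCast, Complex.norm_real]
    gcongr
    exact mul_le_of_le_one_right (norm_nonneg w) (Real.abs_sin_le_one x)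
  · rw [Complex.exp_eq_exp_ℂ]
    exact NormedSpace.expSeries_div_hasSum_exp _

lemma J0twoISqrt_sq (s : ℂ) :
    J0twoISqrt (s ^ 2) = ((2 * π : ℝ) : ℂ)⁻¹ *
      ∫ x in (0 : ℝ)..(2 * π), Complex.exp (2 * s * (Real.sin x : ℝ)) := by
  have hinj : Function.Injective fun n : ℕ ↦ 2 * n := fun a b h ↦ by simpa using h
  have heven := (hinj.hasSum_iff fun n hn ↦ by
    obtain ⟨m, rfl | rfl⟩ := n.even_or_odd'
    · exact absurd ⟨m, rfl⟩ hn
    · simp [integral_sin_pow_odd_zero_two_pi]).2 (hasSum_integral_exp_mul_sin (2 * s))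
  rw [← (heven.mul_left _).tsum_eq, J0twoISqrt]
  refine tsum_congr fun n ↦ ?_
  have hfac : ((2 * n).factorial : ℂ) ≠ 0 := mod_cast Nat.factorial_ne_zero _
  have hpi : (π : ℂ) ≠ 0 := mod_cast Real.pi_ne_zero
  have hfour : (4 : ℂ) ^ n = 2 ^ (2 * n) := by rw [pow_mul]; norm_num
  simp only [Function.comp, integral_sin_pow_even_zero_two_pi]
  push_cast
  rw [hfour, mul_pow, ← pow_mul]
  field_simp

lemma norm_J0twoISqrt_sq_le (s : ℂ) : ‖J0twoISqrt (s ^ 2)‖ ≤ Real.exp (s.re ^ 2) := by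
  have hreal : (∫ x in (0 : ℝ)..(2 * π), Complex.exp (2 * (s.re : ℂ) * (Real.sin x : ℝ))) =
      ((∫ x in (0 : ℝ)..(2 * π), Real.exp (2 * s.re * Real.sin x) : ℝ) : ℂ) := by
    rw [← intervalIntegral.integral_ofReal]
    exact intervalIntegral.integral_congr fun x _ ↦ by push_cast; rfl
  calc ‖J0twoISqrt (s ^ 2)‖ ≤ ‖J0twoISqrt ((s.re : ℂ) ^ 2)‖ := by
        rw [J0twoISqrt_sq, J0twoISqrt_sq, norm_mul, norm_mul, hreal, Complex.norm_real]
        gcongr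
        refine (intervalIntegral.norm_integral_le_of_norm_le (by positivity)
          (.of_forall fun x _ ↦ ?_) ?_).trans (le_abs_self _)
        · simp [Complex.norm_exp, Complex.sin_ofReal_re]
        · exact Continuous.intervalIntegrable (by fun_prop) _ _
    _ ≤ Real.exp ‖(s.re : ℂ) ^ 2‖ := norm_J0twoISqrt_le _
    _ = _ := by rw [norm_pow, Complex.norm_real, Real.norm_eq_abs, sq_abs]

lemma norm_phifun_le (w : ℂ) : ‖phifun w‖ ≤ Real.exp ‖w‖ := by
  obtain ⟨s, rfl⟩ : ∃ s : ℂ, s ^ 2 = w := IsAlgClosed.exists_pow_nat_eq w two_pos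
  calc ‖phifun (s ^ 2)‖ = Real.exp (-s ^ 2).re * ‖J0twoISqrt (s ^ 2)‖ := by
        rw [phifun, norm_mul, Complex.norm_exp]
    _ ≤ Real.exp (-s ^ 2).re * Real.exp (s.re ^ 2) := by gcongr; exact norm_J0twoISqrt_sq_le s
    _ = Real.exp (s.im ^ 2) := by
        rw [← Real.exp_add]
        congr 1
        simp [sq]
    _ ≤ Real.exp ‖s ^ 2‖ := by
        rw [norm_pow, ← sq_abs]
        gcongr
        exact Complex.abs_im_le_norm s

lemma differentiable_phifun : Differentiable ℂ phifun := by
  have := differentiable_J0twoISqrt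
  unfold phifun
  fun_prop

lemma norm_J0twoISqrt_sub_one_sub_le {w : ℂ} (hw : ‖w‖ ≤ 1) :
    ‖J0twoISqrt w - 1 - w‖ ≤ Real.exp 1 * ‖w‖ ^ 2 := by
  have htail : J0twoISqrt w - 1 - w =
      ∑' n : ℕ, w ^ (n + 2) / ((n + 2).factorial : ℂ) ^ 2 := by
    rw [J0twoISqrt, ← (summable_J0twoISqrt w).sum_add_tsum_nat_add 2]
    rw [Finset.sum_range_succ, Finset.sum_range_one]
    simp only [pow_zero, pow_one, Nat.factorial, Nat.cast_one, one_pow, div_one, mul_one]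
    ring
  have hexp : HasSum (fun n : ℕ ↦ 1 / (n.factorial : ℝ) * ‖w‖ ^ 2) (Real.exp 1 * ‖w‖ ^ 2) := by
    refine HasSum.mul_right _ ?_
    rw [Real.exp_eq_exp_ℝ]
    simpa using NormedSpace.expSeries_div_hasSum_exp (𝔸 := ℝ) 1
  rw [htail]
  refine tsum_of_norm_bounded hexp fun n ↦ (norm_pow_div_factorial_sq_le w (n + 2)).trans ?_
  have hfac : n.factorial ≤ (n + 2).factorial := Nat.factorial_le (by omega)
  have hpow : ‖w‖ ^ n ≤ 1 := pow_le_one₀ (norm_nonneg w) hw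
  rw [pow_add, mul_div_right_comm]
  gcongr

lemma exists_norm_phifun_le_exp_sq :
    ∃ C : ℝ, 0 < C ∧ ∀ w : ℂ, ‖w‖ ≤ 1 → ‖phifun w‖ ≤ Real.exp (C * ‖w‖ ^ 2) := by
  refine ⟨1 + 2 + Real.exp 1 * Real.exp 1, by positivity, fun w hw ↦ ?_⟩
  have hexp_sub : ‖Complex.exp (-w) - 1 - -w‖ ≤ ‖w‖ ^ 2 := by
    simpa using Complex.norm_exp_sub_one_sub_id_le (x := -w) (by simpa using hw)
  have hexp : ‖Complex.exp (-w)‖ ≤ Real.exp 1 := by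
    rw [Complex.norm_exp]
    gcongr
    exact (Complex.re_le_norm _).trans (by simpa using hw)
  have hone : ‖1 + w‖ ≤ 2 := (norm_add_le _ _).trans (by rw [norm_one]; linarith)
  have hdecomp : phifun w = 1 + (-w ^ 2 + (1 + w) * (Complex.exp (-w) - 1 - -w)
      + Complex.exp (-w) * (J0twoISqrt w - 1 - w)) := by
    rw [phifun]
    ring
  calc ‖phifun w‖ ≤ 1 + (‖w‖ ^ 2 + ‖1 + w‖ * ‖Complex.exp (-w) - 1 - -w‖
        + ‖Complex.exp (-w)‖ * ‖J0twoISqrt w - 1 - w‖) := by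
        rw [hdecomp, ← norm_mul, ← norm_mul, ← norm_pow, ← norm_neg (w ^ 2)]
        exact (norm_add_le _ _).trans <| by
          rw [norm_one]
          gcongr
          exact norm_add₃_le
    _ ≤ 1 + (‖w‖ ^ 2 + 2 * ‖w‖ ^ 2 + Real.exp 1 * (Real.exp 1 * ‖w‖ ^ 2)) := by
        gcongr
        exact norm_J0twoISqrt_sub_one_sub_le hw
    _ = (1 + 2 + Real.exp 1 * Real.exp 1) * ‖w‖ ^ 2 + 1 := by ring
    _ ≤ _ := Real.add_one_le_exp _

lemma J0twoISqrt_zero : J0twoISqrt 0 = 1 := by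
  simpa [sub_eq_zero] using norm_J0twoISqrt_sub_one_sub_le (w := 0) (by simp)

end Bessel

/-! ### Bounds for `Φ` and its Taylor coefficients -/

section TaylorCoefficients

lemma differentiable_Phifun (y : ℝ) : Differentiable ℂ (Phifun y) := by
  have := differentiable_phifun
  unfold Phifun
  fun_prop

lemma hasSum_PhiCoef (y : ℝ) (z : ℂ) : HasSum (fun n ↦ PhiCoef y n * z ^ n) (Phifun y z) := by
  have hterm (n : ℕ) : PhiCoef y n * z ^ n =
      (n.factorial : ℂ)⁻¹ • (z - 0) ^ n • iteratedDeriv n (Phifun y) 0 := by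
    simp only [PhiCoef, sub_zero, smul_eq_mul]
    ring
  simpa only [hterm] using
    Complex.hasSum_taylorSeries_of_entire (differentiable_Phifun y) 0 z

lemma PhiCoef_zero (y : ℝ) : PhiCoef y 0 = 1 := by
  simp [PhiCoef, Phifun, phifun, J0twoISqrt_zero]

lemma norm_PhiCoef_le_of_norm_Phifun_le {y R M : ℝ} (hR : 0 < R)
    (hM : ∀ z : ℂ, ‖z‖ = R → ‖Phifun y z‖ ≤ M) (n : ℕ) : ‖PhiCoef y n‖ ≤ M / R ^ n := by
  have := Complex.norm_iteratedDeriv_le_of_forall_mem_sphere_norm_le n hR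
    (differentiable_Phifun y).diffContOnCl fun z hz ↦ hM z (mem_sphere_zero_iff_norm.1 hz)
  rw [PhiCoef, norm_div, Complex.norm_natCast, div_le_iff₀ (by positivity)]
  exact this.trans_eq (by ring)

/-- The primes `p ≤ ‖z‖` are controlled by `|φ(w)| ≤ exp |w|`, the others by
`|φ(w)| ≤ exp (C |w| ^ 2)`. -/
lemma exists_norm_Phifun_le : ∃ C : ℝ, 0 < C ∧ ∀ (y : ℝ) (z : ℂ), 1 ≤ ‖z‖ →
    ‖Phifun y z‖ ≤ Real.exp (‖z‖ * (∑ p ∈ ⌊‖z‖⌋₊.primesLE, (1 : ℝ) / p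
      + C / Real.log (⌊‖z‖⌋₊ + 1))) := by
  obtain ⟨C, hC, hφ⟩ := exists_norm_phifun_le_exp_sq
  refine ⟨C * (2 * Real.log 4), by positivity, fun y z hz ↦ ?_⟩
  set R := ‖z‖
  set N := ⌊R⌋₊
  have hN : 1 ≤ N := Nat.le_floor (mod_cast hz)
  have hRN : R ≤ N + 1 := (Nat.lt_floor_add_one R).le
  have hlog : 0 < Real.log ((N : ℝ) + 1) := Real.log_pos (by norm_cast; omega)
  have hterm : ∀ p ∈ primesLe y, ‖phifun (z / (p : ℂ))‖ ≤
      Real.exp (if N < p then C * R ^ 2 * (1 / (p : ℝ) ^ 2) else R * (1 / p)) := fun p hp ↦ by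
    have hp0 : (0 : ℝ) < p := mod_cast (Finset.mem_filter.1 hp).2.pos
    have hnorm : ‖z / (p : ℂ)‖ = R / p := by rw [norm_div, Complex.norm_natCast]
    split_ifs with hNp
    · have hNp' : (N : ℝ) + 1 ≤ p := mod_cast hNp
      refine (hφ _ (by rw [hnorm, div_le_one hp0]; linarith)).trans_eq ?_
      rw [hnorm]
      ring_nf
    · exact (norm_phifun_le _).trans_eq (by rw [hnorm, mul_one_div])
  have htail : ∑ p ∈ primesLe y with N < p, (1 : ℝ) / p ^ 2 ≤
      2 * Real.log 4 / (R * Real.log (N + 1)) :=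
    (sum_primesLE_inv_sq_tail_le hN ⌊y⌋₊).trans (by gcongr)
  have hhead : ∑ p ∈ primesLe y with ¬N < p, (1 : ℝ) / p ≤ ∑ p ∈ N.primesLE, (1 : ℝ) / p := by
    refine Finset.sum_le_sum_of_subset_of_nonneg (fun p hp ↦ ?_) fun p _ _ ↦ by positivity
    obtain ⟨hpy, hpN⟩ := Finset.mem_filter.1 hp
    exact Nat.mem_primesLE.2 ⟨not_lt.1 hpN, (Finset.mem_filter.1 hpy).2⟩
  calc ‖Phifun y z‖ ≤ ∏ p ∈ primesLe y,
        Real.exp (if N < p then C * R ^ 2 * (1 / (p : ℝ) ^ 2) else R * (1 / p)) := by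
        rw [Phifun, norm_prod]
        exact Finset.prod_le_prod (fun _ _ ↦ norm_nonneg _) hterm
    _ ≤ Real.exp (C * R ^ 2 * (2 * Real.log 4 / (R * Real.log (N + 1)))
          + R * ∑ p ∈ N.primesLE, (1 : ℝ) / p) := by
        rw [← Real.exp_sum, Finset.sum_ite, ← Finset.mul_sum, ← Finset.mul_sum]
        gcongr
    _ = _ := by
        congr 1
        field_simp
        ring

lemma exists_norm_Phifun_le_of_norm_eq_one :
    ∃ M : ℝ, 0 < M ∧ ∀ (y : ℝ) (z : ℂ), ‖z‖ = 1 → ‖Phifun y z‖ ≤ M := by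
  obtain ⟨C, -, hΦ⟩ := exists_norm_Phifun_le
  refine ⟨_, Real.exp_pos (1 * (∑ p ∈ ⌊(1 : ℝ)⌋₊.primesLE, (1 : ℝ) / p
    + C / Real.log (⌊(1 : ℝ)⌋₊ + 1))), fun y z hz ↦ ?_⟩
  simpa only [hz] using hΦ y z hz.ge

lemma eventually_norm_Phifun_le : ∀ᶠ R : ℝ in atTop, ∀ (y : ℝ) (z : ℂ), ‖z‖ = R →
    ‖Phifun y z‖ ≤ Real.exp (R * (Real.log (Real.log (R + 1)) + 19 / 20)) := by
  obtain ⟨C, -, hΦ⟩ := exists_norm_Phifun_le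
  have hfloor := tendsto_nat_floor_atTop (α := ℝ)
  have hlog : Tendsto (fun R : ℝ ↦ Real.log ((⌊R⌋₊ : ℝ) + 1)) atTop atTop :=
    Real.tendsto_log_atTop.comp <|
      tendsto_atTop_add_const_right _ _ (tendsto_natCast_atTop_atTop.comp hfloor)
  filter_upwards [hfloor.eventually eventually_sum_primesLE_inv_le,
    ((tendsto_const_nhds (x := C)).div_atTop hlog).eventually_le_const
      (show (0 : ℝ) < 1 / 20 by norm_num),
    eventually_ge_atTop 2] with R hsum htail hR y z hz
  have hfloorR : (⌊R⌋₊ : ℝ) ≤ R := Nat.floor_le (by linarith)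
  have hfloor2 : (2 : ℝ) ≤ ⌊R⌋₊ := mod_cast Nat.le_floor (mod_cast hR)
  have hloglog : Real.log (Real.log ⌊R⌋₊) ≤ Real.log (Real.log (R + 1)) := by
    have : 0 < Real.log ⌊R⌋₊ := Real.log_pos (by linarith)
    gcongr
    linarith
  refine (hΦ y z (by linarith)).trans ?_
  rw [hz]
  exact Real.exp_le_exp.2 (mul_le_mul_of_nonneg_left (by linarith) (by linarith))

/-- `ℓ(n) = log log (n + 1) + 1`, the growth rate in the coefficient bound `Φ_n ≪ ℓ(n)ⁿ / n!`. -/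
noncomputable def ell (n : ℕ) : ℝ := Real.log (Real.log (n + 1)) + 1

lemma ell_mono {m n : ℕ} (hm : 1 ≤ m) (hmn : m ≤ n) : ell m ≤ ell n := by
  have : 0 < Real.log ((m : ℝ) + 1) := Real.log_pos (by norm_cast; omega)
  unfold ell
  gcongr

lemma ell_one_pos : 0 < ell 1 := by
  have hexp : Real.exp (-1) < Real.log 2 :=
    Real.exp_neg_one_lt_half.trans (by linarith [Real.log_two_gt_d9])
  have := Real.log_lt_log (Real.exp_pos _) hexp
  rw [Real.log_exp] at this
  rw [ell, Nat.cast_one, one_add_one_eq_two]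
  linarith

lemma ell_pos {n : ℕ} (hn : 1 ≤ n) : 0 < ell n := ell_one_pos.trans_le (ell_mono le_rfl hn)

lemma ell_le_log {n : ℕ} (hn : 1 ≤ n) : ell n ≤ Real.log (n + 1) := by
  have := Real.log_le_sub_one_of_pos (Real.log_pos (x := (n : ℝ) + 1) (by norm_cast; omega))
  rw [ell]
  linarith

lemma tendsto_ell_atTop : Tendsto ell atTop atTop :=
  tendsto_atTop_add_const_right _ _ <| Real.tendsto_log_atTop.comp <| Real.tendsto_log_atTop.comp <|
    tendsto_atTop_add_const_right _ _ tendsto_natCast_atTop_atTop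

lemma tendsto_log_nat_add_one_pow_div (k : ℕ) :
    Tendsto (fun n : ℕ ↦ Real.log ((n : ℝ) + 1) ^ k / n) atTop (nhds 0) := by
  have hlog : Tendsto (fun x : ℝ ↦ Real.log x ^ k / (1 * x + -1)) atTop (nhds 0) :=
    Real.tendsto_pow_log_div_mul_add_atTop 1 (-1) k one_ne_zero
  have hshift : Tendsto (fun n : ℕ ↦ (n : ℝ) + 1) atTop atTop :=
    tendsto_atTop_add_const_right _ _ tendsto_natCast_atTop_atTop
  simpa [Function.comp_def] using hlog.comp hshift

lemma tendsto_ell_div : Tendsto (fun n : ℕ ↦ ell n / n) atTop (nhds 0) := by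
  refine squeeze_zero' ?_ ?_ (by simpa using tendsto_log_nat_add_one_pow_div 1)
  · filter_upwards [eventually_ge_atTop 1] with n hn
    have := ell_pos hn
    positivity
  · filter_upwards [eventually_ge_atTop 1] with n hn
    have := ell_le_log hn
    gcongr

lemma eventually_log_le_mul_div_ell {c : ℝ} (hc : 0 < c) :
    ∀ᶠ n : ℕ in atTop, Real.log n ≤ c * (n / ell n) := by
  filter_upwards [(tendsto_log_nat_add_one_pow_div 2).eventually_le_const hc,
    eventually_ge_atTop 1] with n hn hn1
  have hn0 : (0 : ℝ) < n := mod_cast hn1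
  have hell := ell_pos hn1
  rw [div_le_iff₀ hn0] at hn
  rw [mul_div_assoc', le_div_iff₀ hell]
  calc Real.log n * ell n ≤ Real.log (n + 1) * Real.log (n + 1) := by
        gcongr
        · exact Real.log_nonneg (by norm_cast; omega)
        · linarith
        · exact ell_le_log hn1
    _ ≤ c * n := by rwa [← sq]

lemma factorial_le_exp_one_mul_sqrt_mul {n : ℕ} (hn : 1 ≤ n) :
    (n.factorial : ℝ) ≤ Real.exp 1 * √n * (n / Real.exp 1) ^ n := by
  have : (0 : ℝ) < n := mod_cast hn
  have hanti := Stirling.stirlingSeq'_antitone (Nat.zero_le (n - 1))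
  simp only [Function.comp_apply, Nat.succ_eq_add_one, Nat.sub_add_cancel hn, zero_add,
    Stirling.stirlingSeq_one] at hanti
  rw [Stirling.stirlingSeq, div_le_iff₀ (by positivity)] at hanti
  refine hanti.trans_eq ?_
  rw [Real.sqrt_mul two_pos.le]
  field_simp

lemma tendsto_div_ell_atTop : Tendsto (fun n : ℕ ↦ n / ell n) atTop atTop := by
  have hpos : ∀ᶠ n : ℕ in atTop, 0 < ell n / n := by
    filter_upwards [eventually_ge_atTop 1] with n hn
    have := ell_pos hn
    positivity
  refine (tendsto_inv_nhdsGT_zero.comp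
    (tendsto_nhdsWithin_iff.2 ⟨tendsto_ell_div, hpos⟩)).congr fun n ↦ ?_
  rw [Function.comp_apply, inv_div]

lemma eventually_norm_PhiCoef_le : ∀ᶠ n : ℕ in atTop, ∀ y : ℝ,
    ‖PhiCoef y n‖ ≤ Real.exp 1 * (ell n ^ n / n.factorial) := by
  filter_upwards [tendsto_div_ell_atTop.eventually eventually_norm_Phifun_le,
    eventually_log_le_mul_div_ell (show (0 : ℝ) < 1 / 20 by norm_num),
    tendsto_ell_atTop.eventually_ge_atTop 1, eventually_ge_atTop 1] with n hΦ hlog hell hn y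
  have hn1 : (1 : ℝ) ≤ n := mod_cast hn
  set R := n / ell n
  have hR0 : 0 < R := by positivity
  have hRn : R ≤ n := div_le_self (by linarith) hell
  have hexp : R * (Real.log (Real.log (R + 1)) + 19 / 20) ≤ n - Real.log n := by
    have hloglog : Real.log (Real.log (R + 1)) ≤ Real.log (Real.log (n + 1)) := by
      have : 0 < Real.log (R + 1) := Real.log_pos (by linarith)
      gcongr
    have hRell : R * ell n = n := div_mul_cancel₀ _ (by positivity)
    have := mul_le_mul_of_nonneg_left hloglog hR0.le
    unfold ell at hRell
    linarith
  have hfac : (n.factorial : ℝ) * Real.exp n ≤ Real.exp 1 * n * n ^ n := by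
    have hsqrt : √(n : ℝ) ≤ n := Real.sqrt_le_iff.2 ⟨by linarith, by nlinarith⟩
    have hstirling := factorial_le_exp_one_mul_sqrt_mul hn
    rw [div_pow, ← Real.exp_nat_mul, mul_one, mul_div_assoc', le_div_iff₀ (by positivity)]
      at hstirling
    exact hstirling.trans (by gcongr)
  calc ‖PhiCoef y n‖ ≤ Real.exp (n - Real.log n) / R ^ n :=
        norm_PhiCoef_le_of_norm_Phifun_le hR0 (fun z hz ↦ (hΦ y z hz).trans (by gcongr)) n
    _ = Real.exp n * ell n ^ n / (n * n ^ n) := by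
        rw [Real.exp_sub, Real.exp_log (by linarith), div_pow]
        field_simp
    _ ≤ Real.exp 1 * (ell n ^ n / n.factorial) := by
        rw [mul_div_assoc', div_le_div_iff₀ (by positivity) (by positivity)]
        nlinarith [mul_le_mul_of_nonneg_right hfac (show 0 ≤ ell n ^ n by positivity)]

lemma exists_norm_PhiCoef_le : ∃ C : ℝ, 0 < C ∧ ∀ (y : ℝ) (n : ℕ), 1 ≤ n →
    ‖PhiCoef y n‖ ≤ C * (ell n ^ n / n.factorial) := by
  obtain ⟨M, -, hM⟩ := exists_norm_Phifun_le_of_norm_eq_one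
  have hbdd : ∀ n, BddAbove (Set.range fun y ↦ ‖PhiCoef y n‖) := fun n ↦
    ⟨M / 1 ^ n, Set.forall_mem_range.2 fun y ↦ norm_PhiCoef_le_of_norm_Phifun_le one_pos (hM y) n⟩
  have hO : (fun n ↦ ⨆ y, ‖PhiCoef y n‖) =O[atTop] fun n ↦ ell n ^ n / n.factorial := by
    refine Asymptotics.IsBigO.of_bound (Real.exp 1) ?_
    filter_upwards [eventually_norm_PhiCoef_le, eventually_ge_atTop 1] with n hn hn1
    have := ell_pos hn1
    rw [Real.norm_of_nonneg (Real.iSup_nonneg fun _ ↦ norm_nonneg _),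
      Real.norm_of_nonneg (by positivity)]
    exact ciSup_le hn
  obtain ⟨C, hC, hbound⟩ := Asymptotics.bound_of_isBigO_nat_atTop hO
  refine ⟨C, hC, fun y n hn ↦ (le_ciSup (hbdd n) y).trans ?_⟩
  have hell := ell_pos hn
  have hpos : 0 < ell n ^ n / n.factorial := by positivity
  simpa only [Real.norm_of_nonneg hpos.le] using (Real.le_norm_self _).trans (hbound hpos.ne')

end TaylorCoefficients

/-! ### Trigonometric sums on the torus -/

section ExpRemainder

lemma hasDerivAt_cexp_I_mul_sub_sum (k : ℕ) (x : ℝ) :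
    HasDerivAt (fun x : ℝ ↦ cexp (I * x) - ∑ j ∈ Finset.range (k + 1), (I * x) ^ j / j.factorial)
      (I * (cexp (I * x) - ∑ j ∈ Finset.range k, (I * x) ^ j / j.factorial)) x := by
  have hlin : HasDerivAt (fun x : ℝ ↦ (I * x : ℂ)) I x := by
    simpa using (Complex.ofRealCLM.hasDerivAt (x := x)).const_mul I
  refine (hlin.cexp.sub (HasDerivAt.fun_sum (u := Finset.range (k + 1)) fun j _ ↦
    (hlin.pow j).div_const (j.factorial : ℂ))).congr_deriv ?_
  rw [Finset.sum_range_succ', mul_sub, Finset.mul_sum, mul_comm I (cexp _)]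
  simp only [Nat.cast_zero, zero_mul, zero_div, add_zero]
  congr 1
  refine Finset.sum_congr rfl fun j _ ↦ ?_
  have : (j.factorial : ℂ) ≠ 0 := mod_cast j.factorial_ne_zero
  rw [Nat.factorial_succ]
  push_cast
  field_simp

lemma norm_cexp_I_mul_sub_sum_le_of_nonneg (k : ℕ) {x : ℝ} (hx : 0 ≤ x) :
    ‖cexp (I * x) - ∑ j ∈ Finset.range k, (I * x) ^ j / j.factorial‖ ≤ x ^ k / k.factorial := by
  induction k generalizing x with
  | zero => simp [Complex.norm_exp_I_mul_ofReal]
  | succ k ih =>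
    have hftc := intervalIntegral.integral_eq_sub_of_hasDerivAt (a := 0) (b := x)
      (fun u _ ↦ hasDerivAt_cexp_I_mul_sub_sum k u)
      (Continuous.intervalIntegrable (by fun_prop) _ _)
    have hzero : cexp (I * (0 : ℝ)) - ∑ j ∈ Finset.range (k + 1), (I * (0 : ℝ)) ^ j / j.factorial
        = 0 := by
      rw [Finset.sum_range_succ']
      simp
    have hpow : ∫ u in (0 : ℝ)..x, u ^ k / (k.factorial : ℝ) = x ^ (k + 1) / (k + 1).factorial := by
      rw [intervalIntegral.integral_div, integral_pow, Nat.factorial_succ]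
      push_cast
      field_simp
      simp
    rw [hzero, sub_zero] at hftc
    rw [← hftc, ← hpow]
    refine intervalIntegral.norm_integral_le_of_norm_le hx (.of_forall fun u hu ↦ ?_)
      (Continuous.intervalIntegrable (by fun_prop) _ _)
    rw [norm_mul, Complex.norm_I, one_mul]
    exact ih hu.1.le

lemma norm_cexp_I_mul_sub_sum_le (k : ℕ) (x : ℝ) :
    ‖cexp (I * x) - ∑ j ∈ Finset.range k, (I * x) ^ j / j.factorial‖ ≤ |x| ^ k / k.factorial := by
  rcases le_total 0 x with hx | hx
  · simpa only [abs_of_nonneg hx] using norm_cexp_I_mul_sub_sum_le_of_nonneg k hx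
  · have hconj := norm_cexp_I_mul_sub_sum_le_of_nonneg k (neg_nonneg.2 hx)
    rw [← RCLike.norm_conj] at hconj
    simpa [← Complex.exp_conj, abs_of_nonpos hx] using hconj

end ExpRemainder

section Torus

variable {ι : Type*} [Fintype ι]

/-- The random model `∑ᵢ aᵢ sin θᵢ` of `V_y`, in which the angles `t log p` become independent. -/
noncomputable def sineSum (a θ : ι → ℝ) : ℝ := ∑ i, a i * Real.sin (θ i)

/-- The character `θ ↦ exp (i n·θ)` of the torus. -/
noncomputable def torusChar (n : ι → ℤ) (θ : ι → ℝ) : ℂ := cexp (I * (∑ i, n i * θ i : ℝ))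

/-- The `ℓ¹` norm of an integer frequency vector. -/
def freqNorm (n : ι → ℤ) : ℕ := ∑ i, (n i).natAbs

@[fun_prop]
lemma continuous_sineSum (a : ι → ℝ) : Continuous (sineSum a) := by
  unfold sineSum
  fun_prop

@[fun_prop]
lemma continuous_torusChar (n : ι → ℤ) : Continuous (torusChar n) := by
  unfold torusChar
  fun_prop

lemma norm_torusChar (n : ι → ℤ) (θ : ι → ℝ) : ‖torusChar n θ‖ = 1 :=
  Complex.norm_exp_I_mul_ofReal _

lemma torusChar_zero (θ : ι → ℝ) : torusChar 0 θ = 1 := by simp [torusChar]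

lemma abs_sineSum_le {a : ι → ℝ} (ha : ∀ i, |a i| ≤ 1) (θ : ι → ℝ) :
    |sineSum a θ| ≤ Fintype.card ι := by
  calc |sineSum a θ| ≤ ∑ i, |a i * Real.sin (θ i)| := Finset.abs_sum_le_sum_abs _ _
    _ ≤ ∑ _i : ι, (1 : ℝ) := Finset.sum_le_sum fun i _ ↦ by
        rw [abs_mul]
        exact mul_le_one₀ (ha i) (abs_nonneg _) (Real.abs_sin_le_one _)
    _ = Fintype.card ι := by simp

lemma torusChar_add_single [DecidableEq ι] (n : ι → ℤ) (i : ι) (e : ℤ) (θ : ι → ℝ) :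
    torusChar (n + Pi.single i e) θ = torusChar n θ * cexp (I * (e * θ i)) := by
  have hsum : ∑ j, ((n + Pi.single i e : ι → ℤ) j : ℝ) * θ j = ∑ j, n j * θ j + e * θ i := by
    simp [add_mul, Finset.sum_add_distrib, Pi.single_apply]
  rw [torusChar, hsum, torusChar, ← Complex.exp_add, ← mul_add]
  push_cast
  rfl

lemma torusChar_mul_sineSum_pow_succ [DecidableEq ι] (a : ι → ℝ) (n : ι → ℤ) (m : ℕ)
    (θ : ι → ℝ) : torusChar n θ * (sineSum a θ : ℂ) ^ (m + 1) =
      ∑ i, a i / (2 * I) * (torusChar (n + Pi.single i 1) θ * (sineSum a θ : ℂ) ^ m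
        - torusChar (n + Pi.single i (-1)) θ * (sineSum a θ : ℂ) ^ m) := by
  have hsin (i : ι) : (a i : ℂ) * Complex.sin (θ i) =
      a i / (2 * I) * (cexp (I * ((1 : ℤ) * θ i)) - cexp (I * ((-1 : ℤ) * θ i))) := by
    rw [Complex.sin, mul_comm I, mul_comm I]
    push_cast
    field_simp
    ring_nf
    simp only [Complex.I_sq]
    ring
  have hV : (sineSum a θ : ℂ) = ∑ i, (a i : ℂ) * Complex.sin (θ i) := by
    unfold sineSum
    push_cast
    rfl
  rw [pow_succ, ← mul_assoc]
  nth_rewrite 2 [hV]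
  rw [Finset.mul_sum]
  refine Finset.sum_congr rfl fun i _ ↦ ?_
  rw [torusChar_add_single, torusChar_add_single, hsin]
  ring

lemma freqNorm_zero : freqNorm (0 : ι → ℤ) = 0 := by simp [freqNorm]

lemma freqNorm_add_single_le [DecidableEq ι] (n : ι → ℤ) (i : ι) {e : ℤ} (he : e.natAbs ≤ 1) :
    freqNorm (n + Pi.single i e) ≤ freqNorm n + 1 := by
  calc freqNorm (n + Pi.single i e) ≤ ∑ j, ((n j).natAbs + if j = i then 1 else 0) :=
        Finset.sum_le_sum fun j _ ↦ by
          simp only [Pi.add_apply, Pi.single_apply]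
          split_ifs <;> omega
    _ = freqNorm n + 1 := by simp [freqNorm, Finset.sum_add_distrib]

section Integrability

variable {a : ι → ℝ} (ha : ∀ i, |a i| ≤ 1) (P : Measure (ι → ℝ)) [IsProbabilityMeasure P]
include ha

lemma integrable_torusChar_mul_sineSum_pow (n : ι → ℤ) (m : ℕ) :
    Integrable (fun θ ↦ torusChar n θ * (sineSum a θ : ℂ) ^ m) P := by
  refine .of_bound (Continuous.aestronglyMeasurable (by fun_prop)) ((Fintype.card ι : ℝ) ^ m)
    (.of_forall fun θ ↦ ?_)
  rw [norm_mul, norm_torusChar, one_mul, norm_pow, Complex.norm_real]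
  exact pow_le_pow_left₀ (abs_nonneg _) (abs_sineSum_le ha θ) m

lemma integrable_sineSum_pow (m : ℕ) : Integrable (fun θ ↦ sineSum a θ ^ m) P := by
  simpa [torusChar_zero, ← Complex.ofReal_pow] using
    (integrable_torusChar_mul_sineSum_pow ha P 0 m).re

lemma integral_torusChar_mul_sineSum_pow_succ [DecidableEq ι] (n : ι → ℤ) (m : ℕ) :
    ∫ θ, torusChar n θ * (sineSum a θ : ℂ) ^ (m + 1) ∂P =
      ∑ i, a i / (2 * I) * (∫ θ, torusChar (n + Pi.single i 1) θ * (sineSum a θ : ℂ) ^ m ∂P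
        - ∫ θ, torusChar (n + Pi.single i (-1)) θ * (sineSum a θ : ℂ) ^ m ∂P) := by
  have hint (n : ι → ℤ) := integrable_torusChar_mul_sineSum_pow ha P n m
  simp_rw [torusChar_mul_sineSum_pow_succ]
  rw [integral_finsetSum]
  swap
  · exact fun i _ ↦ ((hint _).sub (hint _)).const_mul _
  refine Finset.sum_congr rfl fun i _ ↦ ?_
  rw [integral_const_mul, integral_sub (hint _) (hint _)]

lemma norm_integral_cexp_sineSum_sub_sum_le (t : ℝ) {k : ℕ} (hk : Even k) :
    ‖∫ θ, cexp (I * (t * sineSum a θ : ℝ)) ∂P -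
      ∑ j ∈ Finset.range k, (I * t) ^ j / j.factorial * (∫ θ, sineSum a θ ^ j ∂P : ℝ)‖
      ≤ t ^ k / k.factorial * ∫ θ, sineSum a θ ^ k ∂P := by
  have hterm (j : ℕ) (θ : ι → ℝ) : (I * (t * sineSum a θ : ℝ)) ^ j / (j.factorial : ℂ) =
      (I * t) ^ j / j.factorial * (sineSum a θ ^ j : ℝ) := by
    push_cast
    ring
  have hint (j : ℕ) :
      Integrable (fun θ ↦ (I * (t * sineSum a θ : ℝ)) ^ j / (j.factorial : ℂ)) P := by
    simp_rw [hterm]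
    exact (integrable_sineSum_pow ha P j).ofReal.const_mul _
  have hexp : Integrable (fun θ ↦ cexp (I * (t * sineSum a θ : ℝ))) P :=
    .of_bound (Continuous.aestronglyMeasurable (by fun_prop)) 1
      (.of_forall fun θ ↦ (Complex.norm_exp_I_mul_ofReal _).le)
  have hsum : ∑ j ∈ Finset.range k, (I * t) ^ j / j.factorial * (∫ θ, sineSum a θ ^ j ∂P : ℝ) =
      ∫ θ, ∑ j ∈ Finset.range k, (I * (t * sineSum a θ : ℝ)) ^ j / (j.factorial : ℂ) ∂P := by
    rw [integral_finsetSum _ fun j _ ↦ hint j]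
    simp_rw [hterm, integral_const_mul, integral_complex_ofReal]
  rw [hsum, ← integral_sub hexp (integrable_finsetSum _ fun j _ ↦ hint j), ← integral_const_mul]
  refine norm_integral_le_of_norm_le ((integrable_sineSum_pow ha P k).const_mul _)
    (.of_forall fun θ ↦ (norm_cexp_I_mul_sub_sum_le k _).trans_eq ?_)
  rw [hk.pow_abs, mul_pow]
  ring

end Integrability

section Comparison

variable {a : ι → ℝ} (ha : ∀ i, |a i| ≤ 1) {P Q : Measure (ι → ℝ)} [IsProbabilityMeasure P]
  [IsProbabilityMeasure Q] {Y ε : ℝ} (hY : 1 ≤ Y) (hε : 0 ≤ ε) (hcard : Fintype.card ι ≤ Y)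
  (hchar : ∀ n : ι → ℤ,
    ‖∫ θ, torusChar n θ ∂P - ∫ θ, torusChar n θ ∂Q‖ ≤ ε * Y ^ freqNorm n)
include ha hY hε hcard hchar

lemma norm_integral_torusChar_mul_sineSum_pow_sub_le (m : ℕ) (n : ι → ℤ) :
    ‖∫ θ, torusChar n θ * (sineSum a θ : ℂ) ^ m ∂P
      - ∫ θ, torusChar n θ * (sineSum a θ : ℂ) ^ m ∂Q‖ ≤ ε * Y ^ (freqNorm n + 2 * m) := by
  classical
  induction m generalizing n with
  | zero => simpa using hchar n
  | succ m ih =>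
    have hcoef (i : ι) : ‖(a i : ℂ) / (2 * I)‖ ≤ 1 / 2 := by
      rw [norm_div, norm_mul, Complex.norm_I, Complex.norm_real, Complex.norm_ofNat, mul_one,
        Real.norm_eq_abs]
      linarith [ha i]
    have hshift (i : ι) {e : ℤ} (he : e.natAbs ≤ 1) :
        ‖∫ θ, torusChar (n + Pi.single i e) θ * (sineSum a θ : ℂ) ^ m ∂P
          - ∫ θ, torusChar (n + Pi.single i e) θ * (sineSum a θ : ℂ) ^ m ∂Q‖
          ≤ ε * Y ^ (freqNorm n + 1 + 2 * m) := by
      refine (ih _).trans ?_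
      gcongr
      exact freqNorm_add_single_le n i he
    rw [integral_torusChar_mul_sineSum_pow_succ ha P, integral_torusChar_mul_sineSum_pow_succ ha Q,
      ← Finset.sum_sub_distrib]
    calc _ ≤ ∑ _i : ι, ε * Y ^ (freqNorm n + 1 + 2 * m) := norm_sum_le_of_le _ fun i _ ↦ by
          rw [← mul_sub, norm_mul, sub_sub_sub_comm]
          have hdiff := (norm_sub_le _ _).trans
            (add_le_add (hshift i (e := 1) le_rfl) (hshift i (e := -1) le_rfl))
          calc _ ≤ 1 / 2 * (ε * Y ^ (freqNorm n + 1 + 2 * m) + ε * Y ^ (freqNorm n + 1 + 2 * m)) :=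
                mul_le_mul (hcoef i) hdiff (norm_nonneg _) (by norm_num)
            _ = _ := by ring
      _ = Fintype.card ι * (ε * Y ^ (freqNorm n + 1 + 2 * m)) := by simp
      _ ≤ Y * (ε * Y ^ (freqNorm n + 1 + 2 * m)) := by gcongr
      _ = ε * Y ^ (freqNorm n + 2 * (m + 1)) := by ring

lemma abs_integral_sineSum_pow_sub_le (m : ℕ) :
    |∫ θ, sineSum a θ ^ m ∂P - ∫ θ, sineSum a θ ^ m ∂Q| ≤ ε * Y ^ (2 * m) := by
  have h := norm_integral_torusChar_mul_sineSum_pow_sub_le ha hY hε hcard hchar m 0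
  simp only [torusChar_zero, one_mul, freqNorm_zero, zero_add, ← Complex.ofReal_pow,
    integral_complex_ofReal] at h
  rwa [← Complex.ofReal_sub, Complex.norm_real] at h

/-- The Taylor polynomials of degree `< k` have the same constant term under `P` and `Q`, which
is where the factor `l` comes from. -/
lemma norm_sum_moments_sub_le {L l : ℝ} (hL : 0 ≤ L) (hl : 0 ≤ l) (hl1 : l ≤ 1) (k : ℕ) :
    ‖∑ j ∈ Finset.range k,
        (I * (L * l : ℝ)) ^ j / j.factorial * ((∫ θ, sineSum a θ ^ j ∂P : ℝ) : ℂ)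
      - ∑ j ∈ Finset.range k,
        (I * (L * l : ℝ)) ^ j / j.factorial * ((∫ θ, sineSum a θ ^ j ∂Q : ℝ) : ℂ)‖
      ≤ l * (ε * Y ^ (2 * k)) * ∑ j ∈ Finset.range k, L ^ j / j.factorial := by
  rw [← Finset.sum_sub_distrib, Finset.mul_sum]
  refine norm_sum_le_of_le _ fun j hj ↦ ?_
  rcases Nat.eq_zero_or_pos j with rfl | hj0
  · simp only [pow_zero, integral_const, probReal_univ, sub_self, norm_zero]
    positivity
  have hjk : Y ^ (2 * j) ≤ Y ^ (2 * k) :=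
    pow_le_pow_right₀ hY (by have := Finset.mem_range.1 hj; omega)
  have hlj : l ^ j ≤ l := pow_le_of_le_one hl hl1 hj0.ne'
  rw [← mul_sub, norm_mul, ← Complex.ofReal_sub, Complex.norm_real, norm_div, norm_pow, norm_mul,
    Complex.norm_I, one_mul, Complex.norm_real, Complex.norm_natCast,
    Real.norm_of_nonneg (by positivity)]
  calc (L * l) ^ j / j.factorial * |∫ θ, sineSum a θ ^ j ∂P - ∫ θ, sineSum a θ ^ j ∂Q|
      ≤ (L * l) ^ j / j.factorial * (ε * Y ^ (2 * j)) := by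
        gcongr
        exact abs_integral_sineSum_pow_sub_le ha hY hε hcard hchar j
    _ = L ^ j / j.factorial * l ^ j * (ε * Y ^ (2 * j)) := by ring
    _ ≤ L ^ j / j.factorial * l * (ε * Y ^ (2 * k)) := by gcongr
    _ = _ := by ring

lemma norm_integral_cexp_sineSum_sub_le {L l : ℝ} (hL : 0 ≤ L) (hl : 0 ≤ l) (hl1 : l ≤ 1)
    {k : ℕ} (hk : Even k) (hk0 : k ≠ 0) :
    ‖∫ θ, cexp (I * (L * l * sineSum a θ : ℝ)) ∂P
      - ∫ θ, cexp (I * (L * l * sineSum a θ : ℝ)) ∂Q‖ ≤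
      l * (ε * Y ^ (2 * k) * Real.exp L + 2 * (L ^ k / k.factorial * ∫ θ, sineSum a θ ^ k ∂Q)) := by
  have hP := norm_integral_cexp_sineSum_sub_sum_le ha P (L * l) hk
  have hQ := norm_integral_cexp_sineSum_sub_sum_le ha Q (L * l) hk
  have hPQ := norm_sum_moments_sub_le ha hY hε hcard hchar hL hl hl1 k
  set FP := ∫ θ, cexp (I * (L * l * sineSum a θ : ℝ)) ∂P
  set FQ := ∫ θ, cexp (I * (L * l * sineSum a θ : ℝ)) ∂Q
  set SP := ∑ j ∈ Finset.range k,
    (I * (L * l : ℝ)) ^ j / j.factorial * ((∫ θ, sineSum a θ ^ j ∂P : ℝ) : ℂ)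
  set SQ := ∑ j ∈ Finset.range k,
    (I * (L * l : ℝ)) ^ j / j.factorial * ((∫ θ, sineSum a θ ^ j ∂Q : ℝ) : ℂ)
  set MP := ∫ θ, sineSum a θ ^ k ∂P
  set MQ := ∫ θ, sineSum a θ ^ k ∂Q
  have hMQ : 0 ≤ MQ := integral_nonneg fun θ ↦ hk.pow_nonneg _
  have hMP : MP ≤ MQ + ε * Y ^ (2 * k) := by
    linarith [(abs_le.1 (abs_integral_sineSum_pow_sub_le ha hY hε hcard hchar k)).2]
  have hcoef : (L * l) ^ k / k.factorial ≤ l * (L ^ k / k.factorial) := by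
    rw [mul_pow, mul_comm, ← mul_div_assoc']
    gcongr
    exact pow_le_of_le_one hl hl1 hk0
  have hexp : ∑ j ∈ Finset.range k, L ^ j / (j.factorial : ℝ) + L ^ k / k.factorial ≤ Real.exp L :=
    (Finset.sum_range_succ (fun j ↦ L ^ j / (j.factorial : ℝ)) k).symm.trans_le
      (Real.sum_le_exp_of_nonneg hL _)
  calc ‖FP - FQ‖ ≤ ‖FP - SP‖ + ‖SP - SQ‖ + ‖SQ - FQ‖ := by
        simpa only [dist_eq_norm] using dist_triangle4 FP SP SQ FQ
    _ ≤ (L * l) ^ k / k.factorial * (MQ + ε * Y ^ (2 * k))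
          + l * (ε * Y ^ (2 * k)) * ∑ j ∈ Finset.range k, L ^ j / j.factorial
          + (L * l) ^ k / k.factorial * MQ := by
        rw [norm_sub_rev SQ]
        gcongr
        exact hP.trans (by gcongr)
    _ ≤ l * (L ^ k / k.factorial) * (MQ + ε * Y ^ (2 * k))
          + l * (ε * Y ^ (2 * k)) * ∑ j ∈ Finset.range k, L ^ j / j.factorial
          + l * (L ^ k / k.factorial) * MQ := by gcongr
    _ = l * (ε * Y ^ (2 * k) * (∑ j ∈ Finset.range k, L ^ j / j.factorial + L ^ k / k.factorial)
          + 2 * (L ^ k / k.factorial * MQ)) := by ring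
    _ ≤ _ := by gcongr

end Comparison

end Torus

section RandomModel

/-- The uniform probability measure on `(a, b]`. -/
noncomputable def uniformIoc (a b : ℝ) : Measure ℝ := ProbabilityTheory.cond volume (Set.Ioc a b)

lemma isProbabilityMeasure_uniformIoc {a b : ℝ} (hab : a < b) :
    IsProbabilityMeasure (uniformIoc a b) :=
  ProbabilityTheory.cond_isProbabilityMeasure_of_finite (by simp [hab]) (by simp)

lemma integral_uniformIoc {E : Type*} [NormedAddCommGroup E] [NormedSpace ℝ E] {a b : ℝ}
    (hab : a < b) (f : ℝ → E) :
    ∫ x, f x ∂uniformIoc a b = (b - a)⁻¹ • ∫ x in a..b, f x := by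
  rw [uniformIoc, ProbabilityTheory.cond, integral_smul_measure,
    intervalIntegral.integral_of_le hab.le, Real.volume_Ioc, ENNReal.toReal_inv,
    ENNReal.toReal_ofReal (sub_nonneg.2 hab.le)]

instance : IsProbabilityMeasure (uniformIoc 0 (2 * π)) :=
  isProbabilityMeasure_uniformIoc (by positivity)

variable {ι : Type*} [Fintype ι]

variable (ι) in
/-- Independent uniform angles `θᵢ`. -/
noncomputable def torusMeasure : Measure (ι → ℝ) := Measure.pi fun _ ↦ uniformIoc 0 (2 * π)

instance : IsProbabilityMeasure (torusMeasure ι) := by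
  unfold torusMeasure
  infer_instance

lemma integral_uniformIoc_cexp_int_mul {n : ℤ} (hn : n ≠ 0) :
    ∫ x, cexp (I * (n * x : ℝ)) ∂uniformIoc 0 (2 * π) = 0 := by
  have hc : (I * n : ℂ) ≠ 0 := mul_ne_zero I_ne_zero (mod_cast hn)
  have hexp : cexp (I * n * (2 * π : ℝ)) = 1 :=
    Complex.exp_eq_one_iff.2 ⟨n, by push_cast; ring⟩
  have hcast (x : ℝ) : cexp (I * (n * x : ℝ)) = cexp (I * n * x) := by
    push_cast
    ring_nf
  simp_rw [hcast]
  rw [integral_uniformIoc (by positivity), integral_exp_mul_complex hc, hexp]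
  simp

lemma integral_torusChar {n : ι → ℤ} (hn : n ≠ 0) : ∫ θ, torusChar n θ ∂torusMeasure ι = 0 := by
  have hprod (θ : ι → ℝ) : torusChar n θ = ∏ i, cexp (I * (n i * θ i : ℝ)) := by
    rw [torusChar, ← Complex.exp_sum, ← Finset.mul_sum]
    push_cast
    rfl
  obtain ⟨i, hi⟩ := Function.ne_iff.1 hn
  simp_rw [hprod]
  rw [torusMeasure, integral_fintype_prod_eq_prod (fun i x ↦ cexp (I * (n i * x : ℝ)))]
  exact Finset.prod_eq_zero (Finset.mem_univ i) (integral_uniformIoc_cexp_int_mul hi)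

lemma integral_cexp_sineSum (a : ι → ℝ) (s : ℂ) :
    ∫ θ, cexp (s * sineSum a θ) ∂torusMeasure ι = ∏ i, J0twoISqrt ((s * a i / 2) ^ 2) := by
  have hprod (θ : ι → ℝ) :
      cexp (s * sineSum a θ) = ∏ i, cexp (2 * (s * a i / 2) * (Real.sin (θ i) : ℝ)) := by
    rw [← Complex.exp_sum, sineSum, Complex.ofReal_sum, Finset.mul_sum]
    refine congrArg _ (Finset.sum_congr rfl fun i _ ↦ ?_)
    push_cast
    ring
  simp_rw [hprod]
  rw [torusMeasure, integral_fintype_prod_eq_prod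
    (fun i x ↦ cexp (2 * (s * a i / 2) * (Real.sin x : ℝ)))]
  refine Finset.prod_congr rfl fun i _ ↦ ?_
  rw [J0twoISqrt_sq, integral_uniformIoc (by positivity), sub_zero, Complex.real_smul,
    Complex.ofReal_inv]

lemma integral_exp_sineSum_le (a : ι → ℝ) (s : ℝ) :
    ∫ θ, Real.exp (s * sineSum a θ) ∂torusMeasure ι ≤ Real.exp (s ^ 2 / 4 * ∑ i, a i ^ 2) := by
  have hint : ((∫ θ, Real.exp (s * sineSum a θ) ∂torusMeasure ι : ℝ) : ℂ) =
      ∏ i, J0twoISqrt ((s * a i / 2) ^ 2) := by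
    rw [← integral_cexp_sineSum, ← integral_complex_ofReal]
    push_cast
    rfl
  calc _ ≤ ‖((∫ θ, Real.exp (s * sineSum a θ) ∂torusMeasure ι : ℝ) : ℂ)‖ :=
        (le_abs_self _).trans_eq (Complex.norm_real _).symm
    _ ≤ ∏ i, Real.exp ‖((s * a i / 2) ^ 2 : ℂ)‖ := by
        rw [hint, norm_prod]
        exact Finset.prod_le_prod (fun _ _ ↦ norm_nonneg _) fun i _ ↦ norm_J0twoISqrt_le _
    _ = _ := by
        rw [← Real.exp_sum, Finset.mul_sum]
        refine congrArg _ (Finset.sum_congr rfl fun i _ ↦ ?_)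
        rw [norm_pow, norm_div, norm_mul, Complex.norm_real, Complex.norm_real, Complex.norm_ofNat,
          div_pow, mul_pow, Real.norm_eq_abs, Real.norm_eq_abs, sq_abs, sq_abs]
        ring

lemma pow_div_factorial_mul_integral_sineSum_pow_le {a : ι → ℝ} (ha : ∀ i, |a i| ≤ 1) (s : ℝ)
    {k : ℕ} (hk : Even k) :
    s ^ k / k.factorial * ∫ θ, sineSum a θ ^ k ∂torusMeasure ι
      ≤ 2 * Real.exp (s ^ 2 / 4 * ∑ i, a i ^ 2) := by
  have hint (u : ℝ) : Integrable (fun θ ↦ Real.exp (u * sineSum a θ)) (torusMeasure ι) := by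
    refine .of_bound (Continuous.aestronglyMeasurable (by fun_prop))
      (Real.exp (|u| * Fintype.card ι)) (.of_forall fun θ ↦ ?_)
    rw [Real.norm_of_nonneg (Real.exp_pos _).le]
    refine Real.exp_le_exp.2 ((le_abs_self _).trans ?_)
    rw [abs_mul]
    gcongr
    exact abs_sineSum_le ha θ
  have hpos := integral_exp_sineSum_le a s
  have hneg := integral_exp_sineSum_le a (-s)
  rw [neg_sq] at hneg
  have hpow (θ : ι → ℝ) : s ^ k / k.factorial * sineSum a θ ^ k ≤
      Real.exp (s * sineSum a θ) + Real.exp (-s * sineSum a θ) := by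
    calc s ^ k / k.factorial * sineSum a θ ^ k = |s * sineSum a θ| ^ k / k.factorial := by
          rw [hk.pow_abs, mul_pow]
          ring
      _ ≤ Real.exp |s * sineSum a θ| := Real.pow_div_factorial_le_exp _ (abs_nonneg _) k
      _ ≤ _ := by
          rw [neg_mul]
          exact Real.exp_abs_le _
  rw [← integral_const_mul]
  calc _ ≤ ∫ θ, (Real.exp (s * sineSum a θ) + Real.exp (-s * sineSum a θ)) ∂torusMeasure ι :=
        integral_mono ((integrable_sineSum_pow ha _ k).const_mul _) ((hint s).add (hint (-s))) hpow
    _ ≤ _ := by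
        rw [integral_add (hint s) (hint (-s))]
        linarith

end RandomModel

/-! ### The characteristic function of `V_y` -/

section LogarithmsOfPrimes

lemma inv_le_abs_log_sub_log {a b : ℕ} (ha : 0 < a) (hb : 0 < b) (hab : a ≠ b) {M : ℝ}
    (haM : a ≤ M) (hbM : b ≤ M) : M⁻¹ ≤ |Real.log a - Real.log b| := by
  wlog hlt : b < a generalizing a b
  · rw [abs_sub_comm]
    exact this hb ha hab.symm hbM haM (by omega)
  have ha' : (0 : ℝ) < a := mod_cast ha
  have hb' : (0 : ℝ) < b := mod_cast hb
  have hlog := Real.one_sub_inv_le_log_of_pos (div_pos ha' hb')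
  rw [Real.log_div ha'.ne' hb'.ne', inv_div] at hlog
  have hlt' : (b : ℝ) + 1 ≤ a := mod_cast hlt
  calc M⁻¹ ≤ (a : ℝ)⁻¹ := by gcongr
    _ ≤ 1 - b / a := by
        rw [le_sub_iff_add_le, inv_eq_one_div, ← add_div, div_le_one ha']
        linarith
    _ ≤ _ := hlog.trans (le_abs_self _)

variable {s : Finset ℕ} (hs : ∀ p ∈ s, p.Prime)
include hs

lemma factorization_prod_primes_pow (e : s → ℕ) (q : s) :
    (∏ p : s, (p : ℕ) ^ e p).factorization q = e q := by
  have hprime (p : s) : (p : ℕ).Prime := hs p p.2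
  rw [Nat.factorization_prod fun p _ ↦ (pow_pos (hprime p).pos _).ne', Finsupp.finsetSum_apply]
  simp [(hprime _).factorization_pow, Finsupp.single_apply]

lemma log_prod_primes_pow (e : s → ℕ) :
    Real.log (∏ p : s, (p : ℕ) ^ e p : ℕ) = ∑ p, e p * Real.log p := by
  push_cast
  rw [Real.log_prod fun p _ ↦ by have := (hs p p.2).pos; positivity]
  simp only [Real.log_pow]

/-- Unique factorization: `∑ n_p log p` is the difference of the logarithms of two distinct
integers, both at most `Y ^ ∑ |n_p|`. -/
lemma inv_pow_freqNorm_le_abs_sum_log {Y : ℝ} (hY : 1 ≤ Y) (hsY : ∀ p ∈ s, (p : ℝ) ≤ Y)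
    {n : s → ℤ} (hn : n ≠ 0) : (Y ^ freqNorm n)⁻¹ ≤ |∑ p, n p * Real.log p| := by
  set A := ∏ p : s, (p : ℕ) ^ (n p).toNat
  set B := ∏ p : s, (p : ℕ) ^ (-n p).toNat
  have hpos (e : s → ℕ) : 0 < ∏ p : s, (p : ℕ) ^ e p :=
    Finset.prod_pos fun p _ ↦ pow_pos (hs p p.2).pos _
  have hAB : A ≠ B := fun h ↦ hn <| funext fun q ↦ by
    have hA := factorization_prod_primes_pow hs (fun p ↦ (n p).toNat) q
    have hB := factorization_prod_primes_pow hs (fun p ↦ (-n p).toNat) q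
    simp only [Pi.zero_apply]
    change A.factorization q = _ at hA
    change B.factorization q = _ at hB
    rw [h] at hA
    omega
  have hsum : ∑ p, n p * Real.log p = Real.log A - Real.log B := by
    rw [log_prod_primes_pow hs, log_prod_primes_pow hs, ← Finset.sum_sub_distrib]
    refine Finset.sum_congr rfl fun p _ ↦ ?_
    rw [← sub_mul]
    congr 1
    exact_mod_cast (by omega : n p = (n p).toNat - (-n p).toNat)
  have hbound (e : s → ℕ) (he : ∀ p, e p ≤ (n p).natAbs) :
      ((∏ p : s, (p : ℕ) ^ e p : ℕ) : ℝ) ≤ Y ^ freqNorm n := by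
    rw [freqNorm, ← Finset.prod_pow_eq_pow_sum]
    push_cast
    refine Finset.prod_le_prod (fun p _ ↦ by positivity) fun p _ ↦ ?_
    exact (pow_le_pow_left₀ (by positivity) (hsY p p.2) _).trans (pow_le_pow_right₀ hY (he p))
  rw [hsum]
  exact inv_le_abs_log_sub_log (hpos _) (hpos _) hAB (hbound _ fun p ↦ by omega)
    (hbound _ fun p ↦ by omega)

end LogarithmsOfPrimes

section CharacteristicFunction

lemma prime_of_mem_primesLe {y : ℝ} {p : ℕ} (hp : p ∈ primesLe y) : p.Prime :=
  (Finset.mem_filter.1 hp).2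

lemma le_of_mem_primesLe {y : ℝ} {p : ℕ} (hp : p ∈ primesLe y) : (p : ℝ) ≤ y := by
  rw [primesLe_eq_primesLE, Nat.mem_primesLE] at hp
  exact (Nat.le_floor_iff' hp.2.ne_zero).1 hp.1

lemma card_primesLe_le {y : ℝ} (hy : 0 ≤ y) : ((primesLe y).card : ℝ) ≤ y := by
  have hsub : primesLe y ⊆ Finset.Icc 1 ⌊y⌋₊ := fun p hp ↦
    Finset.mem_Icc.2 ⟨(prime_of_mem_primesLe hp).one_lt.le, Nat.le_floor (le_of_mem_primesLe hp)⟩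
  have hcard := Finset.card_le_card hsub
  rw [Nat.card_Icc, Nat.add_sub_cancel] at hcard
  exact (Nat.cast_le.2 hcard).trans (Nat.floor_le hy)

/-- The amplitudes `1 / √p` of `V_y`. -/
noncomputable def amplitude (y : ℝ) (p : primesLe y) : ℝ := 1 / √(p : ℕ)

lemma abs_amplitude_le_one (y : ℝ) (p : primesLe y) : |amplitude y p| ≤ 1 := by
  have : (1 : ℝ) ≤ (p : ℕ) := mod_cast (prime_of_mem_primesLe p.2).one_lt.le
  rw [amplitude, abs_of_nonneg (by positivity), div_le_one (by positivity)]
  exact Real.one_le_sqrt.2 this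

lemma sum_amplitude_sq (y : ℝ) : ∑ p, amplitude y p ^ 2 = sigmay y := by
  rw [sigmay, ← Finset.sum_coe_sort (primesLe y) (fun p : ℕ ↦ (1 : ℝ) / p)]
  exact Finset.sum_congr rfl fun p _ ↦ by
    rw [amplitude, div_pow, Real.sq_sqrt (by positivity), one_pow]

lemma sineSum_amplitude (y t : ℝ) :
    sineSum (amplitude y) (fun p ↦ t * Real.log (p : ℕ)) = Vy y t := by
  rw [sineSum, Vy, ← Finset.sum_coe_sort (primesLe y) (fun p : ℕ ↦ Real.sin (t * Real.log p) / √p)]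
  exact Finset.sum_congr rfl fun p _ ↦ by
    rw [amplitude]
    ring

/-- The distribution of the angles `(t log p)_{p ≤ y}` for `t` uniform in `(T, T + H]`. -/
noncomputable def logPrimeMeasure (y T H : ℝ) : Measure (primesLe y → ℝ) :=
  (uniformIoc T (T + H)).map fun t p ↦ t * Real.log (p : ℕ)

lemma isProbabilityMeasure_logPrimeMeasure (y T : ℝ) {H : ℝ} (hH : 0 < H) :
    IsProbabilityMeasure (logPrimeMeasure y T H) := by
  have := isProbabilityMeasure_uniformIoc (lt_add_of_pos_right T hH)
  exact Measure.isProbabilityMeasure_map (Measurable.aemeasurable (by fun_prop))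

lemma integral_logPrimeMeasure (y T H : ℝ) {f : (primesLe y → ℝ) → ℂ} (hf : Continuous f) :
    ∫ θ, f θ ∂logPrimeMeasure y T H =
      ∫ t, f (fun p ↦ t * Real.log (p : ℕ)) ∂uniformIoc T (T + H) :=
  integral_map (Measurable.aemeasurable (by fun_prop)) hf.aestronglyMeasurable

lemma norm_integral_uniformIoc_cexp_le (T : ℝ) {H κ : ℝ} (hH : 0 < H) (hκ : κ ≠ 0) :
    ‖∫ t, cexp (I * (κ * t : ℝ)) ∂uniformIoc T (T + H)‖ ≤ 2 / H * |κ|⁻¹ := by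
  have hc : (I * κ : ℂ) ≠ 0 := mul_ne_zero I_ne_zero (mod_cast hκ)
  have hcast (t : ℝ) : cexp (I * (κ * t : ℝ)) = cexp (I * κ * t) := by
    rw [Complex.ofReal_mul, mul_assoc]
  have hdiff : ‖cexp (I * κ * (T + H : ℝ)) - cexp (I * κ * T)‖ ≤ 2 := by
    rw [← hcast, ← hcast]
    refine (norm_sub_le _ _).trans_eq ?_
    rw [Complex.norm_exp_I_mul_ofReal, Complex.norm_exp_I_mul_ofReal]
    norm_num
  simp_rw [hcast]
  rw [integral_uniformIoc (by linarith), integral_exp_mul_complex hc, norm_smul, norm_div, norm_mul,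
    Complex.norm_I, one_mul, Complex.norm_real, Real.norm_eq_abs, Real.norm_eq_abs,
    add_sub_cancel_left, abs_of_pos (inv_pos.2 hH)]
  calc _ ≤ H⁻¹ * (2 / |κ|) := by gcongr
    _ = _ := by ring

lemma norm_integral_torusChar_sub_le {y : ℝ} (hy : 1 ≤ y) (T : ℝ) {H : ℝ} (hH : 0 < H)
    (n : primesLe y → ℤ) :
    ‖∫ θ, torusChar n θ ∂logPrimeMeasure y T H - ∫ θ, torusChar n θ ∂torusMeasure (primesLe y)‖
      ≤ 2 / H * y ^ freqNorm n := by
  have := isProbabilityMeasure_logPrimeMeasure y T hH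
  rcases eq_or_ne n 0 with rfl | hn
  · simp only [torusChar_zero, integral_const, probReal_univ, sub_self, norm_zero]
    positivity
  have hfreq := inv_pow_freqNorm_le_abs_sum_log (fun _ ↦ prime_of_mem_primesLe) hy
    (fun _ ↦ le_of_mem_primesLe) hn
  set κ := ∑ p, n p * Real.log (p : ℕ) with hκ
  have hκ0 : 0 < |κ| := lt_of_lt_of_le (by positivity) hfreq
  have hchar (t : ℝ) : torusChar n (fun p ↦ t * Real.log (p : ℕ)) = cexp (I * (κ * t : ℝ)) := by
    rw [torusChar, hκ, Finset.sum_mul]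
    simp_rw [mul_assoc, mul_comm t]
  rw [integral_torusChar hn, sub_zero, integral_logPrimeMeasure _ _ _ (continuous_torusChar n)]
  simp_rw [hchar]
  calc _ ≤ 2 / H * |κ|⁻¹ := norm_integral_uniformIoc_cexp_le T hH (abs_pos.1 hκ0)
    _ ≤ 2 / H * y ^ freqNorm n := by
        gcongr
        exact inv_le_of_inv_le₀ (by positivity) hfreq

/-- The characteristic function of `V_y(t)` for `t` uniform in `(T, T + H]`. -/
noncomputable def charFunVy (y T H t : ℝ) : ℂ :=
  ∫ u, cexp (I * (t * Vy y u : ℝ)) ∂uniformIoc T (T + H)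

/-- The characteristic function `∏_{p ≤ y} J₀(t / √p)` of the random model of `V_y`. -/
noncomputable def charFunModel (y t : ℝ) : ℂ :=
  ∏ p ∈ primesLe y, J0twoISqrt (-((t ^ 2 / 4 : ℝ) : ℂ) / (p : ℂ))

lemma charFunVy_eq_integral (y T H t : ℝ) : charFunVy y T H t =
    ∫ θ, cexp (I * (t * sineSum (amplitude y) θ : ℝ)) ∂logPrimeMeasure y T H := by
  rw [integral_logPrimeMeasure _ _ _ (by fun_prop)]
  simp_rw [sineSum_amplitude]
  rfl

lemma charFunModel_eq_integral (y t : ℝ) : charFunModel y t =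
    ∫ θ, cexp (I * (t * sineSum (amplitude y) θ : ℝ)) ∂torusMeasure (primesLe y) := by
  have hcast (θ : primesLe y → ℝ) : cexp (I * (t * sineSum (amplitude y) θ : ℝ)) =
      cexp (I * t * sineSum (amplitude y) θ) := by
    rw [Complex.ofReal_mul, mul_assoc]
  simp_rw [hcast]
  rw [integral_cexp_sineSum, charFunModel, ← Finset.prod_coe_sort (primesLe y)
    (fun p : ℕ ↦ J0twoISqrt (-((t ^ 2 / 4 : ℝ) : ℂ) / (p : ℂ)))]
  refine Finset.prod_congr rfl fun p _ ↦ ?_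
  have hsq : ((√(p : ℕ) : ℝ) : ℂ) ^ 2 = (p : ℕ) := by
    rw [← Complex.ofReal_pow, Real.sq_sqrt (by positivity), Complex.ofReal_natCast]
  rw [amplitude]
  push_cast
  rw [div_pow, mul_pow, mul_pow, div_pow, hsq, Complex.I_sq]
  ring_nf

/-- Chernoff's bound with parameter `e L`. -/
lemma pow_div_factorial_mul_integral_amplitude_le (y L : ℝ) {k : ℕ} (hk : Even k) :
    L ^ k / k.factorial * ∫ θ, sineSum (amplitude y) θ ^ k ∂torusMeasure (primesLe y)
      ≤ 2 * Real.exp (2 * L ^ 2 * sigmay y - k) := by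
  have hmoment := pow_div_factorial_mul_integral_sineSum_pow_le (abs_amplitude_le_one y)
    (Real.exp 1 * L) hk
  rw [sum_amplitude_sq] at hmoment
  set M := ∫ θ, sineSum (amplitude y) θ ^ k ∂torusMeasure (primesLe y)
  have hσ : 0 ≤ sigmay y := by
    unfold sigmay
    positivity
  have he : Real.exp 1 ^ 2 ≤ 8 := by nlinarith [Real.exp_one_lt_d9, Real.exp_pos 1]
  calc L ^ k / k.factorial * M = Real.exp (-k) * ((Real.exp 1 * L) ^ k / k.factorial * M) := by
        rw [mul_pow, ← Real.exp_nat_mul, mul_one, Real.exp_neg]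
        field_simp
    _ ≤ Real.exp (-k) * (2 * Real.exp ((Real.exp 1 * L) ^ 2 / 4 * sigmay y)) := by gcongr
    _ = 2 * Real.exp ((Real.exp 1 * L) ^ 2 / 4 * sigmay y - k) := by
        rw [sub_eq_add_neg, Real.exp_add]
        ring
    _ ≤ 2 * Real.exp (2 * L ^ 2 * sigmay y - k) := by
        gcongr
        rw [mul_pow]
        nlinarith [sq_nonneg L]

lemma norm_charFunVy_sub_charFunModel_le {y : ℝ} (hy : 1 ≤ y) (T : ℝ) {H L l : ℝ} (hH : 0 < H)
    (hL : 0 ≤ L) (hl : 0 ≤ l) (hl1 : l ≤ 1) {k : ℕ} (hk : Even k) (hk0 : k ≠ 0) :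
    ‖charFunVy y T H (L * l) - charFunModel y (L * l)‖ ≤
      l * (2 / H * y ^ (2 * k) * Real.exp L + 4 * Real.exp (2 * L ^ 2 * sigmay y - k)) := by
  have := isProbabilityMeasure_logPrimeMeasure y T hH
  rw [charFunVy_eq_integral, charFunModel_eq_integral]
  refine (norm_integral_cexp_sineSum_sub_le (abs_amplitude_le_one y) hy (by positivity)
    (by simpa using card_primesLe_le (by linarith)) (norm_integral_torusChar_sub_le hy T hH)
    hL hl hl1 hk hk0).trans (mul_le_mul_of_nonneg_left ?_ hl)
  linarith [pow_div_factorial_mul_integral_amplitude_le y L hk]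

end CharacteristicFunction

/-! ### Truncating the expansion of the model characteristic function -/

section Truncation

/-- The approximation `exp (-σ t²/4) ∑_{n ≤ ν} Φₙ (-t²/4)ⁿ` to `charFunModel y t`, which is
`exp (-σ t²/4) Φ(-t²/4)`. -/
noncomputable def charFunTrunc (y : ℝ) (ν : ℕ) (t : ℝ) : ℝ :=
  Real.exp (-(sigmay y * (t ^ 2 / 4))) *
    ∑ n ∈ Finset.range (ν + 1), PhiCoefR y n * (-(t ^ 2 / 4)) ^ n

lemma PhiCoefR_zero (y : ℝ) : PhiCoefR y 0 = 1 := by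
  rw [PhiCoefR, PhiCoef_zero, Complex.one_re]

lemma exists_abs_PhiCoefR_le : ∃ C : ℝ, 0 < C ∧ ∀ (y : ℝ) (n : ℕ), 1 ≤ n →
    |PhiCoefR y n| ≤ C * (ell n ^ n / n.factorial) := by
  obtain ⟨C, hC, h⟩ := exists_norm_PhiCoef_le
  exact ⟨C, hC, fun y n hn ↦ (Complex.abs_re_le_norm _).trans (h y n hn)⟩

lemma Phifun_eq_exp_mul_prod (y : ℝ) (z : ℂ) :
    Phifun y z = cexp (-(sigmay y * z)) * ∏ p ∈ primesLe y, J0twoISqrt (z / p) := by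
  simp only [Phifun, phifun, sigmay]
  rw [Finset.prod_mul_distrib, ← Complex.exp_sum]
  congr 2
  push_cast
  rw [Finset.sum_mul, ← Finset.sum_neg_distrib]
  exact Finset.sum_congr rfl fun p _ ↦ by ring

lemma J0twoISqrt_ofReal (x : ℝ) :
    J0twoISqrt x = ((∑' n : ℕ, x ^ n / (n.factorial : ℝ) ^ 2 : ℝ) : ℂ) := by
  simp [J0twoISqrt, Complex.ofReal_tsum]

lemma charFunModel_eq_ofReal (y t : ℝ) : charFunModel y t = ((charFunModel y t).re : ℂ) := by
  have (p : ℕ) : ((-(t ^ 2 / 4) : ℝ) : ℂ) / p = ((-(t ^ 2 / 4) / p : ℝ) : ℂ) := by push_cast; rfl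
  simp only [charFunModel, ← Complex.ofReal_neg, this, J0twoISqrt_ofReal, ← Complex.ofReal_prod,
    Complex.ofReal_re]

lemma hasSum_exp_mul_re_charFunModel (y t : ℝ) :
    HasSum (fun n ↦ PhiCoefR y n * (-(t ^ 2 / 4)) ^ n)
      (Real.exp (sigmay y * (t ^ 2 / 4)) * (charFunModel y t).re) := by
  have h := Complex.hasSum_re (hasSum_PhiCoef y ((-(t ^ 2 / 4) : ℝ) : ℂ))
  have hPhi : Phifun y ((-(t ^ 2 / 4) : ℝ) : ℂ) =
      (Real.exp (sigmay y * (t ^ 2 / 4)) : ℂ) * charFunModel y t := by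
    rw [Phifun_eq_exp_mul_prod, charFunModel]
    push_cast
    simp only [mul_neg, neg_neg]
  simpa only [hPhi, ← Complex.ofReal_pow, Complex.re_mul_ofReal, Complex.re_ofReal_mul,
    PhiCoefR] using h

/-- The quantity `(1/n) (ℓ(n)/s) ^ n`, which for `s = σ` and `n = ν + 1` is the truncation error
in the theorem. -/
noncomputable def ellTerm (s : ℝ) (n : ℕ) : ℝ := 1 / (n : ℝ) * (ell n / s) ^ n

lemma ellTerm_nonneg {s : ℝ} (hs : 0 ≤ s) {n : ℕ} (hn : 1 ≤ n) : 0 ≤ ellTerm s n := by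
  have := ell_pos hn
  unfold ellTerm
  positivity

lemma ell_succ_sub_le {n : ℕ} (hn : 1 ≤ n) :
    ell (n + 1) - ell n ≤ 1 / ((n + 1) * Real.log (n + 1)) := by
  have hu : 0 < Real.log ((n : ℝ) + 1) := Real.log_pos (by norm_cast; omega)
  have hv : 0 < Real.log ((n : ℝ) + 1 + 1) := Real.log_pos (by norm_cast; omega)
  have hlog {a b : ℝ} (ha : 0 < a) (hb : 0 < b) : Real.log b - Real.log a ≤ (b - a) / a := by
    rw [← Real.log_div hb.ne' ha.ne', sub_div, div_self ha.ne']
    exact Real.log_le_sub_one_of_pos (by positivity)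
  calc ell (n + 1) - ell n
      = Real.log (Real.log (n + 1 + 1)) - Real.log (Real.log (n + 1)) := by
        simp only [ell]; push_cast; ring
    _ ≤ (Real.log (n + 1 + 1) - Real.log (n + 1)) / Real.log (n + 1) := hlog hu hv
    _ ≤ ((n + 1 + 1 - (n + 1)) / (n + 1)) / Real.log (n + 1) := by
        gcongr
        exact hlog (by positivity) (by positivity)
    _ = _ := by rw [div_div, add_sub_cancel_left]

lemma exists_ell_succ_pow_le :
    ∃ K : ℝ, 0 < K ∧ ∀ n : ℕ, 1 ≤ n → ell (n + 1) ^ n ≤ K * ell n ^ n := by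
  refine ⟨Real.exp (1 / (Real.log 2 * ell 1)), Real.exp_pos _, fun n hn ↦ ?_⟩
  have hell := ell_pos hn
  have hell1 := ell_one_pos
  have hlog2 : 0 < Real.log 2 := Real.log_pos one_lt_two
  have hlog : Real.log 2 ≤ Real.log ((n : ℝ) + 1) :=
    Real.log_le_log two_pos (by norm_cast; omega)
  have hlog0 : 0 < Real.log ((n : ℝ) + 1) := by linarith
  have hexponent : n * ((ell (n + 1) - ell n) / ell n) ≤ 1 / (Real.log 2 * ell 1) :=
    calc n * ((ell (n + 1) - ell n) / ell n)
        ≤ n * (1 / ((n + 1) * Real.log (n + 1)) / ell n) := by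
          gcongr
          exact ell_succ_sub_le hn
      _ = n / (n + 1) * (1 / (Real.log (n + 1) * ell n)) := by
          field_simp
      _ ≤ 1 * (1 / (Real.log 2 * ell 1)) := by
          have hfrac : (n : ℝ) / (n + 1) ≤ 1 := div_le_one_of_le₀ (by linarith) (by positivity)
          have := ell_mono le_rfl hn
          gcongr
      _ = _ := one_mul _
  have hsucc : ell (n + 1) ≤ ell n * Real.exp ((ell (n + 1) - ell n) / ell n) :=
    calc ell (n + 1) = ell n * ((ell (n + 1) - ell n) / ell n + 1) := by field_simp; ring
      _ ≤ _ := by gcongr; exact Real.add_one_le_exp _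
  have := ell_pos (Nat.le_add_left 1 n)
  calc ell (n + 1) ^ n ≤ (ell n * Real.exp ((ell (n + 1) - ell n) / ell n)) ^ n := by gcongr
    _ = Real.exp (n * ((ell (n + 1) - ell n) / ell n)) * ell n ^ n := by
        rw [mul_pow, ← Real.exp_nat_mul, mul_comm]
    _ ≤ _ := by gcongr

lemma exists_ellTerm_succ_le : ∃ K : ℝ, 0 < K ∧ ∀ (s : ℝ) (n : ℕ), 0 < s → 1 ≤ n →
    K * ell (n + 1) ≤ s → ellTerm s (n + 1) ≤ ellTerm s n * (1 / 2) := by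
  obtain ⟨K, hK, hell⟩ := exists_ell_succ_pow_le
  refine ⟨2 * K, by positivity, fun s n hs hn hle ↦ ?_⟩
  have := ell_pos hn
  have := ell_pos (Nat.le_add_left 1 n)
  have hratio : K * (ell (n + 1) / s) ≤ 1 / 2 := by
    rw [mul_div_assoc', div_le_iff₀ hs]
    linarith
  calc ellTerm s (n + 1)
      = 1 / ((n + 1 : ℕ) : ℝ) * (ell (n + 1) ^ n / s ^ n * (ell (n + 1) / s)) := by
        rw [ellTerm, pow_succ, div_pow]
    _ ≤ 1 / (n : ℝ) * (K * ell n ^ n / s ^ n * (ell (n + 1) / s)) := by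
        gcongr
        · linarith
        · exact hell n hn
    _ = ellTerm s n * (K * (ell (n + 1) / s)) := by
        rw [ellTerm, div_pow]
        ring
    _ ≤ _ := by
        gcongr
        exact ellTerm_nonneg hs.le hn

lemma sum_Ico_le_two_mul_of_halving {a : ℕ → ℝ} {m N : ℕ} (hm : 0 ≤ a m)
    (h : ∀ n, m ≤ n → n < N → a (n + 1) ≤ a n * (1 / 2)) :
    ∑ n ∈ Finset.Ico m (N + 1), a n ≤ 2 * a m := by
  have hgeom (j : ℕ) : m + j ≤ N → a (m + j) ≤ (1 / 2) ^ j * a m := by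
    induction j with
    | zero => simp
    | succ j ih =>
      intro hj
      rw [pow_succ]
      have := h (m + j) (by omega) (by omega)
      have := ih (by omega)
      rw [← add_assoc]
      linarith
  rw [Finset.sum_Ico_eq_sum_range]
  calc ∑ j ∈ Finset.range (N + 1 - m), a (m + j)
      ≤ ∑ j ∈ Finset.range (N + 1 - m), (1 / 2 : ℝ) ^ j * a m :=
        Finset.sum_le_sum fun j hj ↦ hgeom j (by have := Finset.mem_range.1 hj; omega)
    _ ≤ 2 * a m := by
        rw [← Finset.sum_mul]
        gcongr
        exact sum_geometric_two_le _

lemma exists_sum_ellTerm_le : ∃ K : ℝ, 0 < K ∧ ∀ (s : ℝ) (N m : ℕ), 0 < s → 1 ≤ m →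
    K * ell (N + 1) ≤ s → ∑ n ∈ Finset.Ico m (N + 1), ellTerm s n ≤ 2 * ellTerm s m := by
  obtain ⟨K, hK, hsucc⟩ := exists_ellTerm_succ_le
  refine ⟨K, hK, fun s N m hs hm hN ↦ sum_Ico_le_two_mul_of_halving (ellTerm_nonneg hs.le hm)
    fun n hmn hnN ↦ hsucc s n hs (hm.trans hmn) (le_trans ?_ hN)⟩
  gcongr
  exact ell_mono (by omega) (by omega)

lemma integral_exp_neg_mul_sq_mul_pow_le {b : ℝ} (hb : 0 < b) (n : ℕ) :
    ∫ l in (0 : ℝ)..1, Real.exp (-(b * l ^ 2)) * l ^ (2 * n + 1) ≤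
      n.factorial / (2 * b ^ (n + 1)) := by
  have hn : ((2 * n + 1 : ℝ) + 1) / 2 = ((n + 1 : ℕ) : ℝ) := by push_cast; ring
  have hIoi : ∫ l in Set.Ioi (0 : ℝ), Real.exp (-(b * l ^ 2)) * l ^ (2 * n + 1) =
      n.factorial / (2 * b ^ (n + 1)) := by
    have h := _root_.integral_rpow_mul_exp_neg_mul_rpow (p := 2) (q := 2 * n + 1) two_pos
      (by linarith [n.cast_nonneg (α := ℝ)]) hb
    rw [neg_div, hn, Real.rpow_neg hb.le, Real.rpow_natCast, Nat.cast_succ,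
      Real.Gamma_nat_eq_factorial] at h
    calc _ = ∫ x in Set.Ioi (0 : ℝ), x ^ (2 * (n : ℝ) + 1) * Real.exp (-b * x ^ (2 : ℝ)) :=
          integral_congr_ae (Eventually.of_forall fun x ↦ by
            have : x ^ (2 * (n : ℝ) + 1) = x ^ (2 * n + 1) :=
              mod_cast Real.rpow_natCast x _
            simp only [this, Real.rpow_two]
            ring_nf)
      _ = _ := by rw [h]; field_simp
  have hint : IntegrableOn (fun l ↦ Real.exp (-(b * l ^ 2)) * l ^ (2 * n + 1)) (Set.Ioi 0) :=
    Integrable.of_integral_ne_zero (by rw [hIoi]; positivity)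
  rw [← hIoi, intervalIntegral.integral_of_le zero_le_one]
  refine setIntegral_mono_set hint ?_ (Eventually.of_forall fun x hx ↦ hx.1)
  filter_upwards [ae_restrict_mem measurableSet_Ioi] with x hx
  have : 0 < x := hx
  positivity

lemma abs_sub_sum_range_le_of_geometric_tail {a : ℕ → ℝ} {S B : ℝ} {N : ℕ} (hS : HasSum a S)
    (ha : ∀ n, N < n → |a n| ≤ B * (1 / 2) ^ n) (m : ℕ) :
    |S - ∑ n ∈ Finset.range m, a n| ≤ ∑ n ∈ Finset.Ico m (N + 1), |a n| + B * (1 / 2) ^ N := by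
  set M := max m (N + 1)
  have hB : 0 ≤ B * (1 / 2) ^ N := by
    have := (abs_nonneg _).trans (ha (N + 1) N.lt_succ_self)
    rw [pow_succ] at this
    linarith
  have htail : |∑' n, a (n + M)| ≤ B * (1 / 2) ^ N := by
    have hgeom : HasSum (fun n ↦ B * (1 / 2) ^ N * (1 / 2) * (1 / 2 : ℝ) ^ n)
        (B * (1 / 2) ^ N) := by
      simpa only [mul_assoc, one_div_mul_cancel (two_ne_zero (α := ℝ)), mul_one]
        using hasSum_geometric_two.mul_left (B * (1 / 2) ^ N * (1 / 2))
    refine tsum_of_norm_bounded (f := fun n ↦ a (n + M)) hgeom fun n ↦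
      (ha (n + M) (by omega)).trans ?_
    have hM : (1 / 2 : ℝ) ^ (M - (N + 1)) ≤ 1 := pow_le_one₀ (by norm_num) (by norm_num)
    calc B * (1 / 2) ^ (n + M)
        = B * (1 / 2) ^ N * (1 / 2) * (1 / 2) ^ n * (1 / 2) ^ (M - (N + 1)) := by
          rw [show n + M = N + 1 + n + (M - (N + 1)) by omega]
          ring
      _ ≤ _ := mul_le_of_le_one_right (by positivity) hM
  have hIco : Finset.Ico m M = Finset.Ico m (N + 1) := by
    ext n
    simp only [Finset.mem_Ico, M]
    omega
  have hsplit : S - ∑ n ∈ Finset.range m, a n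
      = ∑ n ∈ Finset.Ico m (N + 1), a n + ∑' n, a (n + M) := by
    rw [← hS.tsum_eq, ← hS.summable.sum_add_tsum_nat_add M, ← hIco,
      Finset.sum_Ico_eq_sub _ (le_max_left _ _)]
    ring
  rw [hsplit]
  exact (abs_add_le _ _).trans (add_le_add (Finset.abs_sum_le_sum_abs _ _) htail)

/-- The terms `ν < n ≤ N` of the expansion of `charFunModel y (L * l)`, with `X = L²/4`, bounded
in absolute value and divided by `l`. -/
noncomputable def truncMajorant (y : ℝ) (ν N : ℕ) (X l : ℝ) : ℝ :=
  ∑ n ∈ Finset.Ico ν N,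
    |PhiCoefR y (n + 1)| * X ^ (n + 1) * (Real.exp (-(sigmay y * X * l ^ 2)) * l ^ (2 * n + 1))

@[fun_prop]
lemma continuous_truncMajorant (y : ℝ) (ν N : ℕ) (X : ℝ) : Continuous (truncMajorant y ν N X) := by
  unfold truncMajorant
  fun_prop

lemma norm_charFunModel_sub_charFunTrunc_le {y B L l : ℝ} {N : ℕ} (hl : 0 ≤ l) (hl1 : l ≤ 1)
    (hB : ∀ n, N < n → |PhiCoefR y n| * (L ^ 2 / 4) ^ n ≤ B * (1 / 2) ^ n) (ν : ℕ) :
    ‖charFunModel y (L * l) - (charFunTrunc y ν (L * l) : ℂ)‖ ≤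
      l * (truncMajorant y ν N (L ^ 2 / 4) l + B * (1 / 2) ^ N) := by
  set X := L ^ 2 / 4
  have : 0 ≤ X := by positivity
  have hXl : (L * l) ^ 2 / 4 = X * l ^ 2 := by ring
  set E := Real.exp (-(sigmay y * X * l ^ 2))
  have hE : Real.exp (-(sigmay y * (X * l ^ 2))) = E := by rw [← mul_assoc]
  have hE1 : E ≤ 1 := Real.exp_le_one_iff.2 (neg_nonpos.2 (by unfold sigmay; positivity))
  have hS := hasSum_exp_mul_re_charFunModel y (L * l)
  set S := Real.exp (sigmay y * ((L * l) ^ 2 / 4)) * (charFunModel y (L * l)).re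
  have hmodel : charFunModel y (L * l) = ((E * S : ℝ) : ℂ) := by
    rw [charFunModel_eq_ofReal, ← hE, ← mul_assoc, ← Real.exp_add, hXl, neg_add_cancel,
      Real.exp_zero, one_mul]
  simp only [hXl] at hS
  have hterm (n : ℕ) :
      |PhiCoefR y n * (-(X * l ^ 2)) ^ n| = |PhiCoefR y n| * X ^ n * l ^ (2 * n) := by
    rw [abs_mul, abs_pow, abs_neg, abs_of_nonneg (by positivity : 0 ≤ X * l ^ 2), mul_pow,
      ← pow_mul, mul_assoc]
  have htail (n : ℕ) (hn : N < n) :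
      |PhiCoefR y n * (-(X * l ^ 2)) ^ n| ≤ l * B * (1 / 2) ^ n := by
    rw [hterm, mul_comm _ (l ^ _), mul_assoc]
    exact mul_le_mul (pow_le_of_le_one hl hl1 (by omega)) (hB n hn) (by positivity) hl
  have hB0 : 0 ≤ l * B * (1 / 2) ^ N := by
    have := (abs_nonneg _).trans (htail (N + 1) N.lt_succ_self)
    rw [pow_succ] at this
    linarith
  have hdiff := abs_sub_sum_range_le_of_geometric_tail hS htail (ν + 1)
  rw [← Finset.sum_Ico_add'] at hdiff
  simp only [hterm] at hdiff
  rw [hmodel, charFunTrunc, hXl, hE, ← Complex.ofReal_sub, Complex.norm_real, ← mul_sub, norm_mul,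
    Real.norm_of_nonneg (Real.exp_pos _).le, Real.norm_eq_abs]
  refine (mul_le_mul_of_nonneg_left hdiff (Real.exp_pos _).le).trans ?_
  rw [mul_add, mul_add, truncMajorant, Finset.mul_sum, Finset.mul_sum, ← mul_assoc l]
  refine add_le_add (Finset.sum_le_sum fun n _ ↦ le_of_eq ?_) (mul_le_of_le_one_left hB0 hE1)
  ring

lemma exists_integral_truncMajorant_le : ∃ C : ℝ, 0 < C ∧ ∀ (y X : ℝ) (ν N : ℕ), 0 < sigmay y →
    0 < X → ∫ l in (0 : ℝ)..1, truncMajorant y ν N X l ≤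
      C * ∑ n ∈ Finset.Ico (ν + 1) (N + 1), ellTerm (sigmay y) n := by
  obtain ⟨C, hC, hPhi⟩ := exists_abs_PhiCoefR_le
  refine ⟨C / 2, by positivity, fun y X ν N hs hX ↦ ?_⟩
  set s := sigmay y
  have hterm (n : ℕ) : ∫ l in (0 : ℝ)..1, |PhiCoefR y (n + 1)| * X ^ (n + 1) *
      (Real.exp (-(s * X * l ^ 2)) * l ^ (2 * n + 1)) ≤ C / 2 * ellTerm s (n + 1) := by
    rw [intervalIntegral.integral_const_mul]
    have hell := ell_pos (Nat.le_add_left 1 n)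
    calc _ ≤ |PhiCoefR y (n + 1)| * X ^ (n + 1) * (n.factorial / (2 * (s * X) ^ (n + 1))) := by
          gcongr
          exact integral_exp_neg_mul_sq_mul_pow_le (by positivity) n
      _ ≤ C * (ell (n + 1) ^ (n + 1) / (n + 1).factorial) * X ^ (n + 1) *
            (n.factorial / (2 * (s * X) ^ (n + 1))) := by
          gcongr
          exact hPhi y _ (Nat.le_add_left 1 n)
      _ = _ := by
          rw [ellTerm, Nat.factorial_succ, div_pow, mul_pow]
          push_cast
          field_simp
  unfold truncMajorant
  rw [intervalIntegral.integral_finsetSum fun n _ ↦ by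
    apply Continuous.intervalIntegrable; fun_prop, Finset.mul_sum, ← Finset.sum_Ico_add']
  exact Finset.sum_le_sum fun n _ ↦ hterm n

lemma eventually_ell_le_sqrt : ∀ᶠ n : ℕ in atTop, 2 * Real.exp 1 * ell n ≤ √n := by
  filter_upwards [(tendsto_log_nat_add_one_pow_div 2).eventually_le_const
    (show (0 : ℝ) < 1 / 36 by norm_num), eventually_ge_atTop 1] with n hlog hn
  have hn0 : (0 : ℝ) < n := mod_cast hn
  have hell0 := ell_pos hn
  rw [div_le_iff₀ hn0] at hlog
  apply Real.le_sqrt_of_sq_le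
  calc (2 * Real.exp 1 * ell n) ^ 2 ≤ ((2 * 3 * Real.log (n + 1)) ^ 2 : ℝ) := by
        gcongr
        · linarith [Real.exp_one_lt_d9]
        · exact ell_le_log hn
    _ ≤ n := by linarith

lemma exists_eventually_abs_PhiCoefR_mul_pow_le : ∃ C : ℝ, 0 < C ∧ ∀ᶠ n : ℕ in atTop,
    ∀ y X : ℝ, 0 ≤ X → X ^ 2 ≤ n → |PhiCoefR y n| * X ^ n ≤ C * (1 / 2) ^ n := by
  obtain ⟨C, hC, hPhi⟩ := exists_abs_PhiCoefR_le
  refine ⟨C, hC, ?_⟩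
  filter_upwards [eventually_ell_le_sqrt, eventually_ge_atTop 1] with n hell hn y X hX hXn
  have hn0 : (0 : ℝ) < n := mod_cast hn
  have hell0 := ell_pos hn
  have hfac : ell n ^ n / n.factorial ≤ (Real.exp 1 * ell n / n) ^ n := by
    have := Real.pow_div_factorial_le_exp (n : ℝ) hn0.le n
    rw [div_le_iff₀ (by positivity)] at this
    rw [div_pow, mul_pow, ← Real.exp_nat_mul, mul_one,
      div_le_div_iff₀ (by positivity) (by positivity)]
    nlinarith [pow_pos hell0 n]
  have hhalf : Real.exp 1 * ell n / n * X ≤ 1 / 2 := by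
    rw [div_mul_eq_mul_div, div_le_iff₀ hn0]
    calc Real.exp 1 * ell n * X ≤ √n / 2 * √n := by
          gcongr
          · linarith
          · exact Real.le_sqrt_of_sq_le hXn
      _ = _ := by rw [div_mul_eq_mul_div, Real.mul_self_sqrt hn0.le]; ring
  calc |PhiCoefR y n| * X ^ n ≤ C * (Real.exp 1 * ell n / n) ^ n * X ^ n := by
        gcongr
        exact (hPhi y n hn).trans (by gcongr)
    _ = C * (Real.exp 1 * ell n / n * X) ^ n := by rw [mul_pow]; ring
    _ ≤ _ := by gcongr

lemma eventually_mul_ell_ceil_le_sigmay {K : ℝ} (hK : 0 < K) :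
    ∀ᶠ y : ℝ in atTop, K * ell (⌈Real.log y ^ 4⌉₊ + 1) ≤ sigmay y := by
  have hlittle : ∀ᶠ u : ℝ in atTop, K * (Real.log (5 * u) + 1) ≤ u - 1 := by
    filter_upwards [Real.isLittleO_log_id_atTop.bound (c := 1 / (2 * K)) (by positivity),
      eventually_ge_atTop 1, eventually_ge_atTop (2 * (K * (Real.log 5 + 1) + 1))] with u hu hu1 hu2
    rw [Real.norm_of_nonneg (Real.log_nonneg hu1), id, Real.norm_of_nonneg (by linarith)] at hu
    rw [Real.log_mul (by norm_num) (by linarith)]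
    have : K * Real.log u ≤ u / 2 :=
      calc K * Real.log u ≤ K * (1 / (2 * K) * u) := by gcongr
        _ = u / 2 := by field_simp
    linarith
  filter_upwards [(Real.tendsto_log_atTop.comp Real.tendsto_log_atTop).eventually hlittle,
    Real.tendsto_log_atTop.eventually_ge_atTop 3, eventually_ge_atTop 2] with y hu hl hy
  refine le_trans ?_ (hu.trans (log_log_sub_one_le_sigmay hy))
  simp only [Function.comp_apply]
  set l := Real.log y
  have hceil : (⌈l ^ 4⌉₊ : ℝ) < l ^ 4 + 1 := Nat.ceil_lt_add_one (by positivity)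
  have hpow : (3 : ℝ) ^ 4 ≤ l ^ 4 := by gcongr
  have hlog : Real.log ((⌈l ^ 4⌉₊ + 1 : ℕ) + 1) ≤ 5 * Real.log l :=
    calc Real.log ((⌈l ^ 4⌉₊ + 1 : ℕ) + 1) ≤ Real.log (l ^ 5) := by
          apply Real.log_le_log (by positivity)
          push_cast
          rw [pow_succ l 4]
          nlinarith
      _ = 5 * Real.log l := by rw [Real.log_pow]; norm_num
  unfold ell
  gcongr
  exact Real.log_pos (by norm_cast; omega)

/-- The majorant cuts the expansion at `N = ⌈(log y) ^ 4⌉`: up to `N` the summands of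
`∑ ellTerm σ n` decay geometrically, and beyond `N ≥ (L²/4)²` those of `∑ Φₙ (L²/4)ⁿ` do. -/
lemma exists_charFunTrunc_majorant : ∃ C : ℝ, 0 < C ∧ ∀ᶠ y : ℝ in atTop, ∀ (ν : ℕ) (L : ℝ),
    0 < L → L ^ 2 ≤ 4 * Real.log y ^ 2 → ∃ w : ℝ → ℝ, Continuous w ∧
      (∀ l, 0 ≤ l → l ≤ 1 →
        ‖charFunModel y (L * l) - (charFunTrunc y ν (L * l) : ℂ)‖ ≤ l * w l) ∧
      ∫ l in (0 : ℝ)..1, w l ≤ C * (ellTerm (sigmay y) (ν + 1) + 1 / Real.log y) := by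
  obtain ⟨B, hB, hPhi⟩ := exists_eventually_abs_PhiCoefR_mul_pow_le
  obtain ⟨C, hC, hint⟩ := exists_integral_truncMajorant_le
  obtain ⟨K, hK, hsum⟩ := exists_sum_ellTerm_le
  obtain ⟨N₀, hN₀⟩ := eventually_atTop.1 hPhi
  refine ⟨2 * C + B, by positivity, ?_⟩
  filter_upwards [eventually_mul_ell_ceil_le_sigmay hK,
    Real.tendsto_log_atTop.eventually_ge_atTop (N₀ + 1)] with y hell hy ν L hL hLy
  have hlog1 : 1 ≤ Real.log y := by linarith [N₀.cast_nonneg (α := ℝ)]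
  set N := ⌈Real.log y ^ 4⌉₊
  have hN : Real.log y ^ 4 ≤ N := Nat.le_ceil _
  have hlogN : Real.log y ≤ N := (le_self_pow₀ hlog1 (by norm_num)).trans hN
  have hN₀N : N₀ ≤ N := by exact_mod_cast (by linarith : (N₀ : ℝ) ≤ N)
  have hs : 0 < sigmay y := (mul_pos hK (ell_pos (Nat.le_add_left 1 N))).trans_le hell
  have hXN : (L ^ 2 / 4) ^ 2 ≤ N :=
    calc (L ^ 2 / 4) ^ 2 ≤ ((Real.log y ^ 2) ^ 2 : ℝ) := by gcongr; linarith
      _ ≤ N := by rwa [← pow_mul]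
  refine ⟨fun l ↦ truncMajorant y ν N (L ^ 2 / 4) l + B * (1 / 2) ^ N, by fun_prop,
    fun l hl hl1 ↦ norm_charFunModel_sub_charFunTrunc_le hl hl1 (fun n hn ↦ ?_) ν, ?_⟩
  · exact hN₀ n (by omega) y _ (by positivity) (hXN.trans (mod_cast hn.le))
  have hpow : (1 / 2 : ℝ) ^ N ≤ 1 / Real.log y := by
    rw [one_div_pow]
    exact one_div_le_one_div_of_le (by linarith)
      (hlogN.trans (mod_cast Nat.lt_two_pow_self.le))
  rw [intervalIntegral.integral_add (Continuous.intervalIntegrable (by fun_prop) _ _)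
    intervalIntegrable_const, intervalIntegral.integral_const, sub_zero, one_smul]
  have hellTerm := ellTerm_nonneg hs.le (Nat.le_add_left 1 ν)
  calc _ ≤ C * (2 * ellTerm (sigmay y) (ν + 1)) + B * (1 / Real.log y) := by
        gcongr
        exact (hint y _ ν N hs (by positivity)).trans
          (by gcongr; exact hsum _ N _ hs (Nat.le_add_left 1 ν) hell)
    _ ≤ _ := by
        have : 0 < 1 / Real.log y := by positivity
        nlinarith

end Truncation

/-! ### Smoothing with the Fejér kernel -/

section Smoothing

section Kernel

variable {K : ℝ → ℝ}

lemma exists_integral_indicator_compl_Icc_le (hKi : Integrable K) (hK : 0 < ∫ x, K x) :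
    ∃ h : ℝ, 0 < h ∧ ∫ x, (Set.Icc (-h) h)ᶜ.indicator K x ≤ (∫ x, K x) / 8 := by
  have hlim := intervalIntegral_tendsto_integral hKi tendsto_neg_atTop_atBot tendsto_id
  obtain ⟨h, hh, hpos⟩ := ((hlim.eventually (lt_mem_nhds
    (show (∫ x, K x) * (7 / 8) < ∫ x, K x by linarith))).and (eventually_gt_atTop 0)).exists
  refine ⟨h, hpos, ?_⟩
  rw [id, intervalIntegral.integral_of_le (by linarith), ← integral_Icc_eq_integral_Ioc] at hh
  rw [integral_indicator measurableSet_Icc.compl]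
  linarith [integral_add_compl (measurableSet_Icc (a := -h) (b := h)) hKi]

/-- On `[-h, h]` the one-sided Lipschitz bound gives `D (a - h + s) ≥ D a - 2 h m`, and outside
it the difference is at most `2 η`. -/
lemma le_of_abs_integral_mul_kernel_le (hK0 : ∀ x, 0 ≤ K x) (hKi : Integrable K)
    (hK : 0 < ∫ x, K x) {h : ℝ} (hh : 0 < h)
    (htail : ∫ x, (Set.Icc (-h) h)ᶜ.indicator K x ≤ (∫ x, K x) / 8) {D : ℝ → ℝ}
    (hD : Measurable D) {m ε η : ℝ} (hm : 0 ≤ m) (hη : ∀ x, |D x| ≤ η)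
    (hLip : ∀ a s, 0 ≤ s → D (a + s) ≤ D a + m * s)
    (hε : ∀ a, |∫ s, D (a + s) * K s| ≤ ε) (a : ℝ) :
    D a ≤ ε / (∫ x, K x) + 2 * h * m + η / 4 := by
  have hη0 : 0 ≤ η := (abs_nonneg _).trans (hη 0)
  have hind : Integrable ((Set.Icc (-h) h)ᶜ.indicator K) := hKi.indicator measurableSet_Icc.compl
  have hDK : Integrable fun s ↦ D (a - h + s) * K s :=
    hKi.bdd_mul (hD.comp (measurable_const_add _)).aestronglyMeasurable
      (Eventually.of_forall fun s ↦ hη _)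
  have hpointwise (s : ℝ) : (D a - 2 * h * m) * K s - 2 * η * (Set.Icc (-h) h)ᶜ.indicator K s ≤
      D (a - h + s) * K s := by
    by_cases hs : s ∈ Set.Icc (-h) h
    · have hstep := hLip (a - h + s) (h - s) (by linarith [hs.2])
      rw [show a - h + s + (h - s) = a by ring] at hstep
      rw [Set.indicator_of_notMem (Set.notMem_compl_iff.2 hs), mul_zero, sub_zero]
      exact mul_le_mul_of_nonneg_right (by nlinarith [hs.1]) (hK0 s)
    · have hhm : 0 ≤ 2 * h * m := by positivity
      rw [Set.indicator_of_mem (Set.mem_compl hs), ← sub_mul]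
      refine mul_le_mul_of_nonneg_right ?_ (hK0 s)
      linarith [(abs_le.1 (hη (a - h + s))).1, (abs_le.1 (hη a)).2]
  have hint := (integral_mono ((hKi.const_mul _).sub (hind.const_mul _)) hDK hpointwise).trans
    (abs_le.1 (hε (a - h))).2
  simp only [Pi.sub_apply] at hint
  rw [integral_sub (hKi.const_mul _) (hind.const_mul _), integral_const_mul,
    integral_const_mul] at hint
  have : (D a - 2 * h * m - η / 4) * (∫ x, K x) ≤ ε := by nlinarith
  rw [← le_div_iff₀ hK] at this
  linarith

lemma exists_abs_le_of_abs_integral_mul_kernel_le (hK0 : ∀ x, 0 ≤ K x) (hKi : Integrable K)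
    (hK : 0 < ∫ x, K x) (hKeven : ∀ x, K (-x) = K x) :
    ∃ C : ℝ, 0 < C ∧ ∀ (D : ℝ → ℝ) (m ε η : ℝ), Measurable D → 0 ≤ m → (∀ x, |D x| ≤ η) →
      (∀ a s, 0 ≤ s → D (a + s) ≤ D a + m * s) → (∀ a, |∫ s, D (a + s) * K s| ≤ ε) →
      ∀ x, |D x| ≤ C * (ε + m) := by
  obtain ⟨h, hh, htail⟩ := exists_integral_indicator_compl_Icc_le hKi hK
  set κ := ∫ x, K x
  refine ⟨2 * (1 / κ + 2 * h), by positivity, fun D m ε η hD hm hη hLip hε x ↦ ?_⟩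
  set M := ⨆ x, |D x|
  have hM (x : ℝ) : |D x| ≤ M := le_ciSup ⟨η, Set.forall_mem_range.2 hη⟩ x
  have hreflect (a : ℝ) : |∫ s, -D (-(a + s)) * K s| ≤ ε := by
    have : ∫ s, -D (-(a + s)) * K s = -∫ s, D (-a + s) * K s := by
      rw [← integral_neg, ← integral_neg_eq_self]
      refine integral_congr_ae (Eventually.of_forall fun s ↦ ?_)
      simp only [hKeven]
      rw [show -(a + -s) = -a + s by ring, neg_mul]
    rw [this, abs_neg]
    exact hε (-a)
  have hsup : M ≤ ε / κ + 2 * h * m + M / 4 := ciSup_le fun x ↦ by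
    refine abs_le'.2 ⟨le_of_abs_integral_mul_kernel_le hK0 hKi hK hh htail hD hm hM hLip hε x, ?_⟩
    simpa only [neg_neg] using le_of_abs_integral_mul_kernel_le hK0 hKi hK hh htail
      (D := fun x ↦ -D (-x)) (hD.comp measurable_neg).neg hm
      (fun x ↦ (abs_neg _).trans_le (hM _))
      (fun a s hs ↦ by
        have := hLip (-(a + s)) s hs
        rw [show -(a + s) + s = -a by ring] at this
        linarith) hreflect (-x)
  have hε0 : 0 ≤ ε := (abs_nonneg _).trans (hε 0)
  have hcross : 0 ≤ m / κ + 2 * h * ε := by positivity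
  have : (1 / κ + 2 * h) * (ε + m) = ε / κ + 2 * h * m + (m / κ + 2 * h * ε) := by ring
  have : 0 ≤ (1 / κ + 2 * h) * (ε + m) := by positivity
  linarith [hM x]

end Kernel

/-- The Fejér kernel `∫₀¹ (1 - l) cos (l x) dl = (1 - cos x) / x²`. -/
noncomputable def fejerKernel (x : ℝ) : ℝ := ∫ l in (0 : ℝ)..1, (1 - l) * Real.cos (l * x)

lemma fejerKernel_neg (x : ℝ) : fejerKernel (-x) = fejerKernel x := by
  simp [fejerKernel]

lemma continuous_fejerKernel : Continuous fejerKernel := by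
  unfold fejerKernel
  apply intervalIntegral.continuous_parametric_intervalIntegral_of_continuous'
  fun_prop

lemma fejerKernel_zero : fejerKernel 0 = 1 / 2 := by
  simp only [fejerKernel, mul_zero, Real.cos_zero, mul_one]
  rw [intervalIntegral.integral_sub (by simp) (by simp), integral_id]
  norm_num

lemma fejerKernel_mul_sq (x : ℝ) : fejerKernel x * x ^ 2 = 1 - Real.cos x := by
  rcases eq_or_ne x 0 with rfl | hx
  · simp
  have hderiv (l : ℝ) (_ : l ∈ Set.uIcc (0 : ℝ) 1) : HasDerivAt
      (fun l ↦ (1 - l) * Real.sin (l * x) / x - Real.cos (l * x) / x ^ 2)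
      ((1 - l) * Real.cos (l * x)) l := by
    have hmul : HasDerivAt (fun l : ℝ ↦ l * x) x l := hasDerivAt_mul_const x
    have hsub : HasDerivAt (fun l : ℝ ↦ 1 - l) (-1) l := (hasDerivAt_id l).const_sub 1
    refine (((hsub.mul hmul.sin).div_const x).sub (hmul.cos.div_const (x ^ 2))).congr_deriv ?_
    field_simp
    ring
  rw [fejerKernel, intervalIntegral.integral_eq_sub_of_hasDerivAt hderiv
    (Continuous.intervalIntegrable (by fun_prop) _ _)]
  simp only [sub_self, zero_mul, one_mul, zero_div, zero_sub, sub_zero, Real.sin_zero,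
    Real.cos_zero]
  field_simp
  ring

lemma fejerKernel_nonneg (x : ℝ) : 0 ≤ fejerKernel x := by
  rcases eq_or_ne x 0 with rfl | hx
  · rw [fejerKernel_zero]
    norm_num
  · refine nonneg_of_mul_nonneg_left ?_ (by positivity : 0 < x ^ 2)
    rw [fejerKernel_mul_sq]
    linarith [Real.cos_le_one x]

lemma fejerKernel_le (x : ℝ) : fejerKernel x ≤ 4 * (1 + x ^ 2)⁻¹ := by
  have hsq := fejerKernel_mul_sq x
  have hone : fejerKernel x ≤ 1 := by
    rcases eq_or_ne x 0 with rfl | hx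
    · rw [fejerKernel_zero]
      norm_num
    · have : 0 < x ^ 2 := by positivity
      nlinarith [Real.one_sub_sq_div_two_le_cos (x := x)]
  rw [← div_eq_mul_inv, le_div_iff₀ (by positivity)]
  linarith [Real.neg_one_le_cos x]

lemma integrable_fejerKernel : Integrable fejerKernel :=
  (integrable_inv_one_add_sq.const_mul 4).mono' continuous_fejerKernel.aestronglyMeasurable
    (Eventually.of_forall fun x ↦
      (Real.norm_of_nonneg (fejerKernel_nonneg x)).trans_le (fejerKernel_le x))

lemma integral_fejerKernel_pos : 0 < ∫ x, fejerKernel x := by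
  rw [integral_pos_iff_support_of_nonneg fejerKernel_nonneg integrable_fejerKernel]
  exact continuous_fejerKernel.isOpen_support.measure_pos volume
    ⟨0, by rw [Function.mem_support, fejerKernel_zero]; norm_num⟩

lemma measurable_real_sign : Measurable Real.sign :=
  Measurable.ite measurableSet_Iio measurable_const
    (Measurable.ite measurableSet_Ioi measurable_const measurable_const)

lemma abs_real_sign_le_one (x : ℝ) : |Real.sign x| ≤ 1 := by
  rcases Real.sign_apply_eq x with h | h | h <;> simp [h]

lemma abs_sin_mul_div_le (l x : ℝ) : |Real.sin (l * x) / l| ≤ |x| := by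
  rcases eq_or_ne l 0 with rfl | hl
  · simp
  · rw [abs_div, div_le_iff₀ (abs_pos.2 hl), ← abs_mul, mul_comm x]
    exact Real.abs_sin_le_abs

lemma integral_zero_fejerKernel (x : ℝ) :
    ∫ s in (0 : ℝ)..x, fejerKernel s = ∫ l in (0 : ℝ)..1, (1 - l) * (Real.sin (l * x) / l) := by
  have hcont : Continuous (Function.uncurry fun s l : ℝ ↦ (1 - l) * Real.cos (l * s)) := by
    unfold Function.uncurry
    fun_prop
  unfold fejerKernel
  rw [intervalIntegral_intervalIntegral_swap]
  · refine intervalIntegral.integral_congr_ae ?_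
    filter_upwards [Measure.ae_ne volume 0] with l hl _
    rw [intervalIntegral.integral_const_mul,
      intervalIntegral.integral_comp_mul_left (fun u ↦ Real.cos u) hl, integral_cos, mul_zero,
      Real.sin_zero, sub_zero, smul_eq_mul, inv_mul_eq_div]
  · exact (hcont.continuousOn.integrableOn_compact (isCompact_uIcc.prod isCompact_uIcc)).mono_set
      (Set.prod_mono Set.uIoc_subset_uIcc Set.uIoc_subset_uIcc)

lemma integral_sign_sub_mul_fejerKernel (x : ℝ) : ∫ s, Real.sign (x - s) * fejerKernel s =
    2 * ∫ l in (0 : ℝ)..1, (1 - l) * (Real.sin (l * x) / l) := by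
  have hint := integrable_fejerKernel
  have hsign : ∫ s, Real.sign (x - s) * fejerKernel s =
      ∫ s, (2 * (Set.Iic x).indicator fejerKernel s - fejerKernel s) := by
    refine integral_congr_ae ?_
    filter_upwards [Measure.ae_ne volume x] with s hs
    rcases hs.lt_or_gt with h | h
    · rw [Real.sign_of_pos (by linarith), Set.indicator_of_mem (Set.mem_Iic.2 h.le)]
      ring
    · rw [Real.sign_of_neg (by linarith), Set.indicator_of_notMem (Set.notMem_Iic.2 h)]
      ring
  have hzero_x := intervalIntegral.integral_Iic_sub_Iic (a := 0) (b := x) (μ := volume)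
    hint.integrableOn hint.integrableOn
  have hsplit := intervalIntegral.integral_Iic_add_Ioi (b := 0) (μ := volume)
    hint.integrableOn hint.integrableOn
  have heven := integral_comp_neg_Iic 0 fejerKernel
  simp only [fejerKernel_neg, neg_zero] at heven
  rw [hsign, integral_sub ((hint.indicator measurableSet_Iic).const_mul _) hint,
    integral_const_mul, integral_indicator measurableSet_Iic, ← integral_zero_fejerKernel]
  linarith

section Transform

variable {Ω : Type*} [MeasurableSpace Ω] {μ : Measure Ω} {X w : Ω → ℝ}

lemma integrable_sin_mul_div_mul (hX : Measurable X) (hw : Measurable w) (hwi : Integrable w μ)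
    (hXw : Integrable (fun ω ↦ X ω * w ω) μ) (a : ℝ) :
    Integrable (Function.uncurry fun (l : ℝ) (ω : Ω) ↦
      (1 - l) * (Real.sin (l * (X ω - a)) / l) * w ω)
      ((volume.restrict (Set.uIoc (0 : ℝ) 1)).prod μ) := by
  have hdom : Integrable (fun z : ℝ × Ω ↦ (1 : ℝ) * ((X z.2 - a) * w z.2))
      ((volume.restrict (Set.uIoc (0 : ℝ) 1)).prod μ) := by
    apply Integrable.mul_prod (f := fun _ : ℝ ↦ (1 : ℝ)) (g := fun ω ↦ (X ω - a) * w ω)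
    · rw [Set.uIoc_of_le zero_le_one]
      exact integrable_const _
    · simp only [sub_mul]
      exact hXw.sub (hwi.const_mul a)
  refine hdom.mono (Measurable.aestronglyMeasurable (by unfold Function.uncurry; fun_prop)) ?_
  have hmem : ∀ᵐ z ∂((volume.restrict (Set.uIoc (0 : ℝ) 1)).prod μ), z.1 ∈ Set.uIoc (0 : ℝ) 1 :=
    Measure.quasiMeasurePreserving_fst.ae (ae_restrict_mem measurableSet_uIoc)
  filter_upwards [hmem] with z hz
  rw [Set.uIoc_of_le zero_le_one] at hz
  have hfactor : ‖1 - z.1‖ ≤ 1 := by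
    rw [Real.norm_eq_abs, abs_le]
    constructor <;> linarith [hz.1, hz.2]
  have hsin : ‖Real.sin (z.1 * (X z.2 - a)) / z.1‖ ≤ ‖X z.2 - a‖ := abs_sin_mul_div_le _ _
  simp only [Function.uncurry, norm_mul, one_mul]
  gcongr
  exact (mul_le_mul hfactor hsin (norm_nonneg _) zero_le_one).trans_eq (one_mul _)

variable [SFinite μ]

lemma intervalIntegrable_integral_sin_mul (hX : Measurable X) (hw : Measurable w)
    (hwi : Integrable w μ) (hXw : Integrable (fun ω ↦ X ω * w ω) μ) (a : ℝ) :
    IntervalIntegrable (fun l : ℝ ↦ (1 - l) / l * ∫ ω, Real.sin (l * (X ω - a)) * w ω ∂μ)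
      volume 0 1 := by
  rw [intervalIntegrable_iff]
  refine (integrable_sin_mul_div_mul hX hw hwi hXw a).integral_prod_left.congr
    (Eventually.of_forall fun l ↦ ?_)
  simp only [Function.uncurry]
  rw [← integral_const_mul]
  congr with ω
  ring

lemma integral_integral_sign_mul_fejerKernel (hX : Measurable X) (hw : Measurable w)
    (hwi : Integrable w μ) (hXw : Integrable (fun ω ↦ X ω * w ω) μ) (a : ℝ) :
    ∫ s, (∫ ω, Real.sign (X ω - (a + s)) * w ω ∂μ) * fejerKernel s =
      2 * ∫ l in (0 : ℝ)..1, (1 - l) / l * ∫ ω, Real.sin (l * (X ω - a)) * w ω ∂μ := by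
  have hprod : Integrable (fun z : ℝ × Ω ↦ fejerKernel z.1 * w z.2) (volume.prod μ) :=
    integrable_fejerKernel.mul_prod hwi
  have hinner (ω : Ω) : ∫ s, Real.sign (X ω - (a + s)) * (fejerKernel s * w ω) =
      2 * ∫ l in (0 : ℝ)..1, (1 - l) * (Real.sin (l * (X ω - a)) / l) * w ω := by
    simp only [← mul_assoc, ← sub_sub]
    rw [integral_mul_const, intervalIntegral.integral_mul_const, ← mul_assoc,
      ← integral_sign_sub_mul_fejerKernel]
  have hsmul (s : ℝ) : (∫ ω, Real.sign (X ω - (a + s)) * w ω ∂μ) * fejerKernel s =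
      ∫ ω, Real.sign (X ω - (a + s)) * (fejerKernel s * w ω) ∂μ := by
    rw [← integral_mul_const]
    congr with ω
    ring
  simp only [hsmul]
  rw [integral_integral_swap]
  · simp only [hinner]
    rw [integral_const_mul, ← intervalIntegral_integral_swap
      (integrable_sin_mul_div_mul hX hw hwi hXw a)]
    congr 1
    refine intervalIntegral.integral_congr fun l _ ↦ ?_
    simp only [← integral_const_mul]
    congr with ω
    ring
  · refine hprod.bdd_mul (c := 1) (Measurable.aestronglyMeasurable ?_)
      (Eventually.of_forall fun z ↦ abs_real_sign_le_one _)
    exact measurable_real_sign.comp (by fun_prop)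

end Transform

end Smoothing

/-! ### Esseen's inequality -/

section Esseen

section Sign

variable {Ω : Type*} [MeasurableSpace Ω] {μ : Measure Ω} {X w : Ω → ℝ}

lemma real_sign_mono : Monotone Real.sign := by
  intro a b h
  unfold Real.sign
  split_ifs <;> linarith

lemma integrable_sign_sub_mul (hX : Measurable X) (hw : Integrable w μ) (a : ℝ) :
    Integrable (fun ω ↦ Real.sign (X ω - a) * w ω) μ :=
  hw.bdd_mul (measurable_real_sign.comp (hX.sub_const a)).aestronglyMeasurable
    (Eventually.of_forall fun _ ↦ abs_real_sign_le_one _)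

lemma abs_integral_sign_sub_mul_le (hw : Integrable w μ) (a : ℝ) :
    |∫ ω, Real.sign (X ω - a) * w ω ∂μ| ≤ ∫ ω, |w ω| ∂μ := by
  rw [← Real.norm_eq_abs]
  refine norm_integral_le_of_norm_le hw.abs (Eventually.of_forall fun ω ↦ ?_)
  rw [norm_mul]
  exact mul_le_of_le_one_left (norm_nonneg _) (abs_real_sign_le_one _)

lemma antitone_integral_sign_sub_mul (hX : Measurable X) (hw : Integrable w μ)
    (hw0 : ∀ ω, 0 ≤ w ω) : Antitone fun a ↦ ∫ ω, Real.sign (X ω - a) * w ω ∂μ :=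
  fun _ _ hab ↦ integral_mono (integrable_sign_sub_mul hX hw _) (integrable_sign_sub_mul hX hw _)
    fun ω ↦ mul_le_mul_of_nonneg_right (real_sign_mono (by linarith)) (hw0 ω)

lemma measurable_integral_sign_sub_mul [SFinite μ] (hX : Measurable X) (hw : Measurable w) :
    Measurable fun a ↦ ∫ ω, Real.sign (X ω - a) * w ω ∂μ := by
  refine (StronglyMeasurable.integral_prod_right (Measurable.stronglyMeasurable
    (f := Function.uncurry fun a ω ↦ Real.sign (X ω - a) * w ω) ?_)).measurable
  exact (measurable_real_sign.comp ((hX.comp measurable_snd).sub measurable_fst)).mul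
    (hw.comp measurable_snd)

lemma integrable_integral_sign_sub_mul_mul_fejerKernel [SFinite μ] (hX : Measurable X)
    (hw : Measurable w) (hwi : Integrable w μ) (a : ℝ) :
    Integrable fun s ↦ (∫ ω, Real.sign (X ω - (a + s)) * w ω ∂μ) * fejerKernel s :=
  integrable_fejerKernel.bdd_mul ((measurable_integral_sign_sub_mul hX hw).comp
    (measurable_const_add a)).aestronglyMeasurable
    (Eventually.of_forall fun _ ↦ abs_integral_sign_sub_mul_le hwi _)

lemma integral_sin_mul_sub_mul (hX : Measurable X) (hw : Integrable w μ) (l a : ℝ) :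
    ∫ ω, Real.sin (l * (X ω - a)) * w ω ∂μ =
      (cexp (I * (-(l * a) : ℝ)) * ∫ ω, w ω * cexp (I * (l * X ω : ℝ)) ∂μ).im := by
  have hint : Integrable (fun ω ↦ cexp (I * (-(l * a) : ℝ)) * (w ω * cexp (I * (l * X ω : ℝ)))) μ :=
    ((hw.ofReal (𝕜 := ℂ)).mul_bdd (c := 1) (by fun_prop)
      (Eventually.of_forall fun ω ↦ (norm_exp_I_mul_ofReal _).le)).const_mul _
  rw [← integral_const_mul, ← Complex.imCLM_apply, ← Complex.imCLM.integral_comp_comm hint]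
  congr with ω
  have hexp : cexp (I * (-(l * a) : ℝ)) * (w ω * cexp (I * (l * X ω : ℝ))) =
      w ω * cexp ((l * (X ω - a) : ℝ) * I) := by
    rw [mul_left_comm, ← Complex.exp_add]
    congr 2
    push_cast
    ring
  rw [hexp, Complex.imCLM_apply, Complex.im_ofReal_mul, Complex.exp_ofReal_mul_I_im, mul_comm]

end Sign

lemma integral_sign_mul_sub_mul {g : ℝ → ℝ} (hg : Integrable g) {r : ℝ} (hr : 0 < r) (a : ℝ) :
    ∫ u, Real.sign (r * u - a) * g u = (∫ u, g u) - 2 * ∫ u in Set.Iic (a / r), g u := by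
  have hind : Integrable ((Set.Iic (a / r)).indicator g) := hg.indicator measurableSet_Iic
  rw [← integral_indicator measurableSet_Iic, ← integral_const_mul,
    ← integral_sub hg (hind.const_mul _)]
  refine integral_congr_ae ?_
  filter_upwards [Measure.ae_ne volume (a / r)] with u hu
  rcases lt_or_gt_of_ne hu with h | h
  · rw [Set.indicator_of_mem (Set.mem_Iic.2 h.le),
      Real.sign_of_neg (by linarith [(lt_div_iff₀' hr).1 h])]
    ring
  · rw [Set.indicator_of_notMem (Set.notMem_Iic.2 h),
      Real.sign_of_pos (by linarith [(div_lt_iff₀' hr).1 h])]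
    ring

lemma abs_integral_sign_mul_sub_sub_le {g : ℝ → ℝ} (hg : Integrable g) {M : ℝ}
    (hM : ∀ u, |g u| ≤ M) {r : ℝ} (hr : 0 < r) (a b : ℝ) :
    |(∫ u, Real.sign (r * u - b) * g u) - ∫ u, Real.sign (r * u - a) * g u| ≤
      2 * M / r * |b - a| := by
  have hdiff := intervalIntegral.integral_Iic_sub_Iic (a := a / r) (b := b / r) (μ := volume)
    hg.integrableOn hg.integrableOn
  have hbound : |∫ u in (a / r)..(b / r), g u| ≤ M * |b / r - a / r| :=
    intervalIntegral.norm_integral_le_of_norm_le_const (E := ℝ) fun u _ ↦ hM u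
  rw [← sub_div, abs_div, abs_of_pos hr] at hbound
  rw [integral_sign_mul_sub_mul hg hr, integral_sign_mul_sub_mul hg hr]
  calc _ = 2 * |∫ u in (a / r)..(b / r), g u| := by
        rw [← hdiff, ← abs_two (α := ℝ), ← abs_mul, abs_two, ← abs_neg]
        congr 1
        ring
    _ ≤ 2 * (M * (|b - a| / r)) := by gcongr
    _ = _ := by ring

variable {Ω : Type*} [MeasurableSpace Ω] {μ : Measure Ω} [SFinite μ] {X v : Ω → ℝ}
  {Ω' : Type*} [MeasurableSpace Ω'] {μ' : Measure Ω'} [SFinite μ'] {X' v' : Ω' → ℝ}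

lemma abs_integral_sub_mul_fejerKernel_le (hX : Measurable X) (hv : Measurable v)
    (hvi : Integrable v μ) (hXv : Integrable (fun ω ↦ X ω * v ω) μ) (hX' : Measurable X')
    (hv' : Measurable v') (hvi' : Integrable v' μ') (hXv' : Integrable (fun ω ↦ X' ω * v' ω) μ')
    {w : ℝ → ℝ} (hw : Continuous w)
    (hle : ∀ l, 0 < l → l ≤ 1 → ‖(∫ ω, v ω * cexp (I * (l * X ω : ℝ)) ∂μ) -
      ∫ ω, v' ω * cexp (I * (l * X' ω : ℝ)) ∂μ'‖ ≤ l * w l) (a : ℝ) :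
    |∫ s, ((∫ ω, Real.sign (X ω - (a + s)) * v ω ∂μ) -
      ∫ ω, Real.sign (X' ω - (a + s)) * v' ω ∂μ') * fejerKernel s| ≤
      2 * ∫ l in (0 : ℝ)..1, w l := by
  simp only [sub_mul]
  rw [integral_sub (integrable_integral_sign_sub_mul_mul_fejerKernel hX hv hvi a)
      (integrable_integral_sign_sub_mul_mul_fejerKernel hX' hv' hvi' a),
    integral_integral_sign_mul_fejerKernel hX hv hvi hXv,
    integral_integral_sign_mul_fejerKernel hX' hv' hvi' hXv', ← mul_sub,
    ← intervalIntegral.integral_sub (intervalIntegrable_integral_sin_mul hX hv hvi hXv a)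
      (intervalIntegrable_integral_sin_mul hX' hv' hvi' hXv' a), abs_mul, abs_two]
  gcongr
  rw [← Real.norm_eq_abs]
  refine intervalIntegral.norm_integral_le_of_norm_le zero_le_one
    (Eventually.of_forall fun l hl ↦ ?_) (hw.intervalIntegrable _ _)
  have hl0 : 0 < l := hl.1
  rw [integral_sin_mul_sub_mul hX hvi, integral_sin_mul_sub_mul hX' hvi', ← mul_sub,
    ← Complex.sub_im, ← mul_sub, norm_mul]
  have hfactor : ‖(1 - l) / l‖ ≤ 1 / l := by
    rw [norm_div, Real.norm_of_nonneg hl0.le, Real.norm_of_nonneg (sub_nonneg.2 hl.2)]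
    gcongr
    linarith
  calc _ ≤ 1 / l * (l * w l) := by
        gcongr
        refine (Complex.abs_im_le_norm _).trans ?_
        rw [norm_mul, norm_exp_I_mul_ofReal, one_mul]
        exact hle l hl0 hl.2
    _ = w l := by field_simp

/-- `w` only bounds the difference of the transforms on `(0, 1]`: scaling `X` and `r` moves the
cut-off frequency. -/
lemma exists_abs_integral_sign_sub_le : ∃ C : ℝ, 0 < C ∧
    ∀ {Ω : Type*} [MeasurableSpace Ω] {μ : Measure Ω} [IsProbabilityMeasure μ] {X : Ω → ℝ}
      {g w : ℝ → ℝ} {r M : ℝ}, Measurable X → Integrable X μ → Measurable g → Integrable g →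
      Integrable (fun u ↦ u * g u) → (∀ u, |g u| ≤ M) → 0 < r → Continuous w →
      (∀ l, 0 < l → l ≤ 1 → ‖(∫ ω, cexp (I * (l * X ω : ℝ)) ∂μ) -
        ∫ u, g u * cexp (I * (l * (r * u) : ℝ))‖ ≤ l * w l) →
      ∀ a, |(∫ ω, Real.sign (X ω - a) ∂μ) - ∫ u, Real.sign (r * u - a) * g u| ≤
        C * ((∫ l in (0 : ℝ)..1, w l) + M / r) := by
  obtain ⟨C, hC, hsmooth⟩ := exists_abs_le_of_abs_integral_mul_kernel_le fejerKernel_nonneg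
    integrable_fejerKernel integral_fejerKernel_pos fejerKernel_neg
  refine ⟨C * 2, by positivity, ?_⟩
  intro Ω _ μ _ X g w r M hX hXi hg hgi hugi hM hr hw hle a
  have hM0 : 0 ≤ M := (abs_nonneg _).trans (hM 0)
  have hone : Integrable (fun _ : Ω ↦ (1 : ℝ)) μ := integrable_const _
  set F : ℝ → ℝ := fun b ↦ ∫ ω, Real.sign (X ω - b) * 1 ∂μ
  set G : ℝ → ℝ := fun b ↦ ∫ u, Real.sign (r * u - b) * g u
  have hFanti : Antitone F := antitone_integral_sign_sub_mul hX hone fun _ ↦ zero_le_one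
  have hFle (b : ℝ) : |F b| ≤ ∫ _, |(1 : ℝ)| ∂μ := abs_integral_sign_sub_mul_le hone b
  have hGle (b : ℝ) : |G b| ≤ ∫ u, |g u| := abs_integral_sign_sub_mul_le hgi b
  have hGLip (b c : ℝ) : |G c - G b| ≤ 2 * M / r * |c - b| :=
    abs_integral_sign_mul_sub_sub_le hgi hM hr b c
  have hmain := hsmooth (fun b ↦ F b - G b) (2 * M / r) (2 * ∫ l in (0 : ℝ)..1, w l) _
    (hFanti.measurable.sub (measurable_integral_sign_sub_mul (measurable_const_mul r) hg))
    (by positivity)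
    (fun b ↦ (abs_sub _ _).trans (add_le_add (hFle b) (hGle b)))
    (fun b s hs ↦ by
      have hF := hFanti (le_add_of_nonneg_right hs : b ≤ b + s)
      have hG := (abs_le.1 (hGLip b (b + s))).1
      rw [add_sub_cancel_left, abs_of_nonneg hs] at hG
      linarith)
    (abs_integral_sub_mul_fejerKernel_le hX measurable_const hone (by simpa using hXi)
      (measurable_const_mul r) hg hgi (by simpa [mul_assoc] using hugi.const_mul r) hw
      (by simpa using hle)) a
  simp only [F, mul_one] at hmain
  exact hmain.trans_eq (by ring)

end Esseen

/-! ### Hermite functions with Gaussian weight -/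

section GaussHermite

lemma integrable_pow_mul_exp_neg_mul_sq {b : ℝ} (hb : 0 < b) (n : ℕ) :
    Integrable fun u : ℝ ↦ u ^ n * Real.exp (-b * u ^ 2) := by
  simpa only [Real.rpow_natCast] using
    integrable_rpow_mul_exp_neg_mul_sq hb (neg_one_lt_zero.trans_le n.cast_nonneg)

lemma integrable_exp_neg_sq_div_two_mul_eval (P : Polynomial ℝ) :
    Integrable fun u : ℝ ↦ Real.exp (-u ^ 2 / 2) * P.eval u := by
  induction P using Polynomial.induction_on' with
  | add p q hp hq =>
    simp only [Polynomial.eval_add, mul_add]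
    exact hp.add hq
  | monomial n a =>
    refine ((integrable_pow_mul_exp_neg_mul_sq one_half_pos n).const_mul a).congr
      (Eventually.of_forall fun u ↦ ?_)
    simp only [Polynomial.eval_monomial]
    ring_nf

/-- The Hermite function `e^{-u²/2} Hₙ(u)`, which is `(-1)ⁿ` times the `n`-th derivative of
`e^{-u²/2}`. -/
noncomputable def gaussHermite (n : ℕ) (u : ℝ) : ℝ := Real.exp (-u ^ 2 / 2) * hermiteEval n u

@[simp]
lemma gaussHermite_zero (u : ℝ) : gaussHermite 0 u = Real.exp (-u ^ 2 / 2) := by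
  simp [gaussHermite, hermiteEval]

lemma hasDerivAt_gaussHermite (n : ℕ) (u : ℝ) :
    HasDerivAt (gaussHermite n) (-gaussHermite (n + 1) u) u := by
  have hexp : HasDerivAt (fun u : ℝ ↦ -u ^ 2 / 2) (-u) u := by
    refine ((hasDerivAt_pow 2 u).neg.div_const 2).congr_deriv ?_
    push_cast
    ring
  refine (hexp.exp.mul ((Polynomial.hermite n).hasDerivAt_aeval u)).congr_deriv ?_
  rw [gaussHermite, hermiteEval, Polynomial.hermite_succ]
  simp only [map_sub, map_mul, Polynomial.aeval_X]
  ring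

lemma continuous_gaussHermite (n : ℕ) : Continuous (gaussHermite n) :=
  continuous_iff_continuousAt.2 fun u ↦ (hasDerivAt_gaussHermite n u).continuousAt

lemma integrable_pow_mul_gaussHermite (k n : ℕ) : Integrable fun u ↦ u ^ k * gaussHermite n u := by
  refine (integrable_exp_neg_sq_div_two_mul_eval (Polynomial.X ^ k *
    (Polynomial.hermite n).map (Int.castRingHom ℝ))).congr (Eventually.of_forall fun u ↦ ?_)
  simp only [gaussHermite, hermiteEval, Polynomial.eval_mul, Polynomial.eval_pow,
    Polynomial.eval_X, Polynomial.eval_map, Polynomial.aeval_def, algebraMap_int_eq]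
  ring

lemma integrable_gaussHermite (n : ℕ) : Integrable (gaussHermite n) := by
  simpa using integrable_pow_mul_gaussHermite 0 n

lemma integrable_gaussHermite_mul_cexp (n : ℕ) (k : ℝ) :
    Integrable fun u : ℝ ↦ gaussHermite n u * cexp (I * (k * u : ℝ)) :=
  (integrable_gaussHermite n).ofReal.mul_bdd (c := 1) (by fun_prop)
    (Eventually.of_forall fun _ ↦ (norm_exp_I_mul_ofReal _).le)

lemma two_pi_cpow_half : (2 * π : ℂ) ^ (1 / 2 : ℂ) = (√(2 * π) : ℝ) := by
  rw [Real.sqrt_eq_rpow, Complex.ofReal_cpow (by positivity)]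
  norm_num

lemma integral_gaussHermite_zero_mul_cexp (k : ℝ) :
    ∫ u, gaussHermite 0 u * cexp (I * (k * u : ℝ)) = (√(2 * π) * Real.exp (-k ^ 2 / 2) : ℝ) := by
  have h := fourierIntegral_gaussian (b := 1 / 2) (by norm_num) (k : ℂ)
  rw [show (π : ℂ) / (1 / 2) = 2 * π by ring, two_pi_cpow_half] at h
  calc _ = ∫ u : ℝ, cexp (I * k * u) * cexp (-(1 / 2) * u ^ 2) := by
        congr with u
        rw [gaussHermite_zero, mul_comm]
        push_cast
        ring_nf
    _ = _ := by
        rw [h]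
        push_cast
        ring_nf

lemma integral_gaussHermite_mul_cexp (n : ℕ) (k : ℝ) :
    ∫ u, gaussHermite n u * cexp (I * (k * u : ℝ)) =
      (I * k) ^ n * (√(2 * π) * Real.exp (-k ^ 2 / 2) : ℝ) := by
  induction n with
  | zero => rw [integral_gaussHermite_zero_mul_cexp, pow_zero, one_mul]
  | succ n ih =>
    have hcexp (u : ℝ) : HasDerivAt (fun u : ℝ ↦ cexp (I * (k * u : ℝ)))
        (cexp (I * (k * u : ℝ)) * (I * k)) u := by
      simpa using (((hasDerivAt_id u).const_mul k).ofReal_comp.const_mul I).cexp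
    have hderiv (u : ℝ) : HasDerivAt (fun u : ℝ ↦ gaussHermite n u * cexp (I * (k * u : ℝ)))
        (I * k * (gaussHermite n u * cexp (I * (k * u : ℝ))) -
          gaussHermite (n + 1) u * cexp (I * (k * u : ℝ))) u := by
      refine ((hasDerivAt_gaussHermite n u).ofReal_comp.mul (hcexp u)).congr_deriv ?_
      push_cast
      ring
    have hint (m : ℕ) := integrable_gaussHermite_mul_cexp m k
    have hparts := integral_eq_zero_of_hasDerivAt_of_integrable hderiv
      (((hint n).const_mul _).sub (hint (n + 1))) (hint n)
    rw [integral_sub ((hint n).const_mul _) (hint (n + 1)), integral_const_mul, ih] at hparts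
    rw [pow_succ', mul_assoc]
    exact (sub_eq_zero.1 hparts).symm

/-- The absolute moment `∫ |k|ⁿ e^{-k²/2} dk`; by Fourier inversion it bounds `gaussHermite n`. -/
noncomputable def gaussAbsMoment (n : ℕ) : ℝ := ∫ k : ℝ, |k| ^ n * Real.exp (-k ^ 2 / 2)

lemma iteratedDeriv_const_mul_gaussHermite_zero (c : ℂ) (n : ℕ) :
    iteratedDeriv n (fun u ↦ c * (gaussHermite 0 u : ℂ)) =
      fun u ↦ c * ((-1) ^ n * (gaussHermite n u : ℂ)) := by
  induction n with
  | zero => simp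
  | succ n ih =>
    ext u
    rw [iteratedDeriv_succ, ih]
    refine ((((hasDerivAt_gaussHermite n u).ofReal_comp).const_mul _).const_mul c).deriv.trans ?_
    push_cast
    ring

open FourierTransform in
lemma fourier_cexp_neg_two_pi_sq_mul_sq :
    𝓕 (fun x : ℝ ↦ cexp (-π * (2 * π) * x ^ 2)) =
      fun u : ℝ ↦ ((√(2 * π))⁻¹ : ℂ) * (gaussHermite 0 u : ℂ) := by
  rw [fourier_gaussian_pi (b := 2 * π) (by norm_num [Real.pi_pos])]
  ext u
  have hpi : (π : ℂ) ≠ 0 := mod_cast Real.pi_ne_zero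
  rw [two_pi_cpow_half, gaussHermite_zero, one_div]
  push_cast
  congr 2
  field_simp

open FourierTransform in
lemma abs_gaussHermite_le (n : ℕ) (u : ℝ) : √(2 * π) * |gaussHermite n u| ≤ gaussAbsMoment n := by
  set f : ℝ → ℂ := fun x ↦ cexp (-π * (2 * π) * x ^ 2)
  have hf (x : ℝ) : f x = Real.exp (-(2 * π ^ 2) * x ^ 2) := by
    simp only [f]
    push_cast
    ring_nf
  have hint (m : ℕ) (_ : (m : ℕ∞) ≤ ⊤) : Integrable fun x : ℝ ↦ x ^ m • f x := by
    simp only [hf, Complex.real_smul, ← Complex.ofReal_mul]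
    exact (integrable_pow_mul_exp_neg_mul_sq (by positivity) m).ofReal
  have hnorm (x : ℝ) : ‖(-2 * π * I * x) ^ n • f x‖ =
      |2 * π * x| ^ n * Real.exp (-(2 * π * x) ^ 2 / 2) := by
    rw [hf, norm_smul, norm_pow, Complex.norm_real, Real.norm_of_nonneg (Real.exp_pos _).le]
    congr 2
    · simp [abs_mul]
    · ring
  have hbound : ‖iteratedDeriv n (𝓕 f) u‖ ≤ (2 * π)⁻¹ * gaussAbsMoment n := by
    rw [Real.iteratedDeriv_fourier hint le_top]
    refine (VectorFourier.norm_fourierIntegral_le_integral_norm _ _ _ _ _).trans_eq ?_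
    simp only [hnorm]
    rw [Measure.integral_comp_mul_left (fun k ↦ |k| ^ n * Real.exp (-k ^ 2 / 2)), smul_eq_mul,
      abs_of_pos (by positivity), gaussAbsMoment]
  rw [fourier_cexp_neg_two_pi_sq_mul_sq, iteratedDeriv_const_mul_gaussHermite_zero,
    norm_mul, norm_mul, norm_pow, norm_neg, norm_one, one_pow, one_mul, norm_inv,
    Complex.norm_real, Complex.norm_real, Real.norm_of_nonneg (by positivity),
    Real.norm_eq_abs] at hbound
  have hsqrt : √(2 * π) ^ 2 = 2 * π := Real.sq_sqrt (by positivity)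
  calc √(2 * π) * |gaussHermite n u| = √(2 * π) ^ 2 * ((√(2 * π))⁻¹ * |gaussHermite n u|) := by
        field_simp
    _ ≤ 2 * π * ((2 * π)⁻¹ * gaussAbsMoment n) := by
        rw [hsqrt]
        exact mul_le_mul_of_nonneg_left hbound (by positivity)
    _ = gaussAbsMoment n := by field_simp

lemma integrable_abs_pow_mul_exp (n : ℕ) :
    Integrable fun k : ℝ ↦ |k| ^ n * Real.exp (-k ^ 2 / 2) := by
  refine (integrable_pow_mul_exp_neg_mul_sq one_half_pos n).norm.congr
    (Eventually.of_forall fun k ↦ ?_)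
  simp only [norm_mul, norm_pow, Real.norm_eq_abs, Real.abs_exp]
  ring_nf

lemma gaussAbsMoment_zero : gaussAbsMoment 0 = √(2 * π) := by
  simpa [gaussAbsMoment, neg_div, div_eq_inv_mul, mul_comm] using integral_gaussian 2⁻¹

lemma gaussAbsMoment_two_mul_add_one (n : ℕ) :
    gaussAbsMoment (2 * n + 1) = 2 ^ (n + 1) * n.factorial := by
  have hGamma := _root_.integral_rpow_mul_exp_neg_mul_rpow (p := 2) (q := 2 * n + 1) (b := 1 / 2)
    two_pos (by linarith [n.cast_nonneg (α := ℝ)]) one_half_pos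
  have hq : (2 * n + 1 + 1 : ℝ) / 2 = (n + 1 : ℕ) := by
    push_cast
    ring
  have habs := integral_comp_abs (f := fun k ↦ k ^ (2 * n + 1) * Real.exp (-k ^ 2 / 2))
  simp only [sq_abs] at habs
  rw [neg_div, hq, Nat.cast_succ, Real.Gamma_nat_eq_factorial, ← Nat.cast_succ,
    Real.rpow_neg (by norm_num), Real.rpow_natCast, Nat.succ_eq_add_one] at hGamma
  calc gaussAbsMoment (2 * n + 1)
      = 2 * ∫ k in Set.Ioi (0 : ℝ), k ^ (2 * n + 1) * Real.exp (-k ^ 2 / 2) := habs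
    _ = 2 * ∫ k in Set.Ioi (0 : ℝ), k ^ (2 * n + 1 : ℝ) * Real.exp (-(1 / 2) * k ^ (2 : ℝ)) := by
        congr 1
        refine setIntegral_congr_fun measurableSet_Ioi fun k _ ↦ ?_
        norm_cast
        ring_nf
    _ = 2 ^ (n + 1) * n.factorial := by
        rw [hGamma, one_div, inv_pow, inv_inv]
        ring

lemma one_le_two_pow_mul_factorial (n : ℕ) : (1 : ℝ) ≤ 2 ^ n * n.factorial :=
  mod_cast Nat.one_le_iff_ne_zero.2 (by positivity)

lemma gaussAbsMoment_two_mul_le (n : ℕ) :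
    gaussAbsMoment (2 * n) ≤ 5 * (2 ^ n * n.factorial) := by
  have hpow (x : ℝ) (hx : 0 ≤ x) : x ^ (2 * n) ≤ x ^ 0 + x ^ (2 * n + 1) := by
    rcases le_total x 1 with h | h
    · linarith [pow_le_one₀ (n := 2 * n) hx h, pow_nonneg hx (2 * n + 1), pow_zero x]
    · linarith [pow_le_pow_right₀ h (show 2 * n ≤ 2 * n + 1 by omega), pow_zero x]
  have hsplit : gaussAbsMoment (2 * n) ≤ gaussAbsMoment 0 + gaussAbsMoment (2 * n + 1) := by
    simp only [gaussAbsMoment]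
    rw [← integral_add (integrable_abs_pow_mul_exp 0) (integrable_abs_pow_mul_exp _)]
    refine integral_mono (integrable_abs_pow_mul_exp _)
      ((integrable_abs_pow_mul_exp 0).add (integrable_abs_pow_mul_exp _)) fun k ↦ ?_
    simp only [← add_mul]
    exact mul_le_mul_of_nonneg_right (hpow _ (abs_nonneg k)) (Real.exp_pos _).le
  have hzero : gaussAbsMoment 0 ≤ 3 := by
    rw [gaussAbsMoment_zero, Real.sqrt_le_left (by norm_num)]
    linarith [Real.pi_lt_d2]
  rw [gaussAbsMoment_two_mul_add_one, pow_succ] at hsplit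
  linarith [one_le_two_pow_mul_factorial n]

lemma one_le_sqrt_two_pi : 1 ≤ √(2 * π) :=
  Real.one_le_sqrt.2 (by linarith [Real.pi_gt_three])

lemma abs_gaussHermite_le_gaussAbsMoment (n : ℕ) (u : ℝ) : |gaussHermite n u| ≤ gaussAbsMoment n :=
  (le_mul_of_one_le_left (abs_nonneg _) one_le_sqrt_two_pi).trans (abs_gaussHermite_le n u)

lemma abs_gaussHermite_two_mul_le (n : ℕ) (u : ℝ) :
    |gaussHermite (2 * n) u| ≤ 5 * (2 ^ n * n.factorial) :=
  (abs_gaussHermite_le_gaussAbsMoment _ u).trans (gaussAbsMoment_two_mul_le n)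

lemma integral_sign_mul_sub_mul_gaussHermite_succ (n : ℕ) {r : ℝ} (hr : 0 < r) (a : ℝ) :
    ∫ u, Real.sign (r * u - a) * gaussHermite (n + 1) u = 2 * gaussHermite n (a / r) := by
  have hint := (integrable_gaussHermite (n + 1)).neg
  have htotal := integral_eq_zero_of_hasDerivAt_of_integrable (hasDerivAt_gaussHermite n) hint
    (integrable_gaussHermite n)
  have hIic := integral_Iic_of_hasDerivAt_of_tendsto' (a := a / r)
    (fun u _ ↦ hasDerivAt_gaussHermite n u) hint.integrableOn
    (tendsto_zero_of_hasDerivAt_of_integrableOn_Iic (a := 0)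
      (fun u _ ↦ hasDerivAt_gaussHermite n u) hint.integrableOn
      (integrable_gaussHermite n).integrableOn)
  rw [integral_neg] at htotal hIic
  rw [integral_sign_mul_sub_mul (integrable_gaussHermite _) hr]
  linarith

lemma abs_integral_sign_mul_sub_mul_gaussHermite_two_mul_le (n : ℕ) {r : ℝ} (hr : 0 < r) (a : ℝ) :
    |∫ u, Real.sign (r * u - a) * gaussHermite (2 * n) u| ≤ 5 * (2 ^ n * n.factorial) := by
  cases n with
  | zero =>
    refine (abs_integral_sign_sub_mul_le (integrable_gaussHermite 0) a).trans ?_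
    simpa [gaussAbsMoment] using gaussAbsMoment_two_mul_le 0
  | succ n =>
    have hbound := abs_gaussHermite_le_gaussAbsMoment (2 * n + 1) (a / r)
    rw [gaussAbsMoment_two_mul_add_one] at hbound
    rw [show 2 * (n + 1) = 2 * n + 1 + 1 by ring,
      integral_sign_mul_sub_mul_gaussHermite_succ _ hr, abs_mul, abs_two]
    have hfact : (n.factorial : ℝ) ≤ (n + 1).factorial := mod_cast Nat.factorial_le n.le_succ
    calc 2 * |gaussHermite (2 * n + 1) (a / r)| ≤ 5 * (2 ^ (n + 1) * n.factorial) := by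
          linarith [abs_nonneg (gaussHermite (2 * n + 1) (a / r))]
      _ ≤ 5 * (2 ^ (n + 1) * (n + 1).factorial) := by gcongr

end GaussHermite

/-! ### Hermite expansions -/

section HermiteSum

/-- The expansion `e^{-u²/2}/√(2π) · ∑_{n < N} cₙ H_{2n}(u)`, which serves as an approximate
density for `V_y / √(σ/2)`. -/
noncomputable def hermiteSum (c : ℕ → ℝ) (N : ℕ) (u : ℝ) : ℝ :=
  1 / √(2 * π) * ∑ n ∈ Finset.range N, c n * gaussHermite (2 * n) u

variable (c : ℕ → ℝ) (N : ℕ)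

lemma continuous_hermiteSum : Continuous (hermiteSum c N) :=
  continuous_const.mul
    (continuous_finsetSum _ fun n _ ↦ continuous_const.mul (continuous_gaussHermite (2 * n)))

lemma mul_hermiteSum (z u : ℝ) :
    z * hermiteSum c N u =
      1 / √(2 * π) * ∑ n ∈ Finset.range N, c n * (z * gaussHermite (2 * n) u) := by
  simp only [hermiteSum, mul_left_comm z, Finset.mul_sum]

lemma integrable_hermiteSum : Integrable (hermiteSum c N) :=
  (integrable_finsetSum _ fun n _ ↦ (integrable_gaussHermite (2 * n)).const_mul (c n)).const_mul _

lemma integrable_mul_hermiteSum : Integrable fun u ↦ u * hermiteSum c N u := by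
  simp only [mul_hermiteSum]
  refine (integrable_finsetSum _ fun n _ ↦ Integrable.const_mul ?_ (c n)).const_mul _
  simpa using integrable_pow_mul_gaussHermite 1 (2 * n)

lemma integral_hermiteSum_mul_cexp (k : ℝ) :
    ∫ u, (hermiteSum c N u : ℂ) * cexp (I * (k * u : ℝ)) =
      (Real.exp (-k ^ 2 / 2) * ∑ n ∈ Finset.range N, c n * (-k ^ 2) ^ n : ℝ) := by
  have hpi : (√(2 * π) : ℂ) ≠ 0 := mod_cast (Real.sqrt_pos.2 Real.two_pi_pos).ne'
  have hsum (u : ℝ) : (hermiteSum c N u : ℂ) * cexp (I * (k * u : ℝ)) =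
      (1 / √(2 * π) : ℂ) * ∑ n ∈ Finset.range N,
        (c n : ℂ) * (gaussHermite (2 * n) u * cexp (I * (k * u : ℝ))) := by
    rw [hermiteSum, Complex.ofReal_mul, Complex.ofReal_sum, mul_assoc, Finset.sum_mul]
    push_cast
    simp only [mul_assoc]
  simp only [hsum]
  rw [integral_const_mul,
    integral_finsetSum _ fun n _ ↦ (integrable_gaussHermite_mul_cexp (2 * n) k).const_mul _]
  simp only [integral_const_mul, integral_gaussHermite_mul_cexp, pow_mul (I * (k : ℂ)), mul_pow I,
    Complex.I_sq]
  push_cast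
  rw [Finset.mul_sum, Finset.mul_sum]
  refine Finset.sum_congr rfl fun n _ ↦ ?_
  field_simp

lemma integral_sign_mul_sub_mul_hermiteSum (r a : ℝ) :
    ∫ u, Real.sign (r * u - a) * hermiteSum c N u =
      1 / √(2 * π) * ∑ n ∈ Finset.range N,
        c n * ∫ u, Real.sign (r * u - a) * gaussHermite (2 * n) u := by
  simp only [mul_hermiteSum]
  rw [integral_const_mul, integral_finsetSum _ fun n _ ↦
    (integrable_sign_sub_mul (by fun_prop) (integrable_gaussHermite (2 * n)) a).const_mul _]
  simp only [integral_const_mul]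

variable {c N} {M : ℝ}

lemma abs_one_div_sqrt_two_pi_mul_sum_le {b : ℕ → ℝ}
    (hb : ∀ n, |b n| ≤ 5 * (2 ^ n * n.factorial))
    (hc : ∑ n ∈ Finset.range N, |c n| * (5 * (2 ^ n * n.factorial)) ≤ M) :
    |1 / √(2 * π) * ∑ n ∈ Finset.range N, c n * b n| ≤ M := by
  have hpi : |1 / √(2 * π)| ≤ 1 := by
    rw [abs_of_nonneg (by positivity)]
    exact div_le_one_of_le₀ one_le_sqrt_two_pi (by positivity)
  calc |1 / √(2 * π) * ∑ n ∈ Finset.range N, c n * b n|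
      ≤ |∑ n ∈ Finset.range N, c n * b n| := by
        rw [abs_mul]
        exact mul_le_of_le_one_left (abs_nonneg _) hpi
    _ ≤ ∑ n ∈ Finset.range N, |c n| * (5 * (2 ^ n * n.factorial)) := by
        refine (Finset.abs_sum_le_sum_abs _ _).trans (Finset.sum_le_sum fun n _ ↦ ?_)
        rw [abs_mul]
        exact mul_le_mul_of_nonneg_left (hb n) (abs_nonneg _)
    _ ≤ M := hc

lemma abs_hermiteSum_le
    (hc : ∑ n ∈ Finset.range N, |c n| * (5 * (2 ^ n * n.factorial)) ≤ M) (u : ℝ) :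
    |hermiteSum c N u| ≤ M :=
  abs_one_div_sqrt_two_pi_mul_sum_le (fun n ↦ abs_gaussHermite_two_mul_le n u) hc

lemma abs_integral_sign_mul_sub_mul_hermiteSum_le
    (hc : ∑ n ∈ Finset.range N, |c n| * (5 * (2 ^ n * n.factorial)) ≤ M) {r : ℝ} (hr : 0 < r)
    (a : ℝ) : |∫ u, Real.sign (r * u - a) * hermiteSum c N u| ≤ M := by
  rw [integral_sign_mul_sub_mul_hermiteSum]
  exact abs_one_div_sqrt_two_pi_mul_sum_le
    (fun n ↦ abs_integral_sign_mul_sub_mul_gaussHermite_two_mul_le n hr a) hc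

end HermiteSum

/-- The coefficient `Φₙ / (2σ)ⁿ` of `H_{2n}` in the approximate density of `V_y / √(σ/2)`. -/
noncomputable def hermiteCoef (y : ℝ) (n : ℕ) : ℝ := PhiCoefR y n / (2 * sigmay y) ^ n

lemma integral_hermiteSum_hermiteCoef_mul_cexp {y : ℝ} (hσ : 0 < sigmay y) (ν : ℕ) (t : ℝ) :
    ∫ u, (hermiteSum (hermiteCoef y) (ν + 1) u : ℂ) * cexp (I * (t * √(sigmay y / 2) * u : ℝ)) =
      charFunTrunc y ν t := by
  rw [integral_hermiteSum_mul_cexp, mul_pow, Real.sq_sqrt (by positivity), charFunTrunc]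
  congr 2
  · ring_nf
  · refine Finset.sum_congr rfl fun n _ ↦ ?_
    rw [hermiteCoef, show -(t ^ 2 * (sigmay y / 2)) = -(t ^ 2 / 4) * (2 * sigmay y) by ring,
      mul_pow (-(t ^ 2 / 4)), div_mul_eq_mul_div, ← mul_assoc (PhiCoefR y n),
      mul_div_cancel_right₀ _ (by positivity : (2 * sigmay y) ^ n ≠ 0)]

lemma exists_sum_abs_hermiteCoef_le : ∃ C : ℝ, 0 < C ∧ ∀ (y : ℝ) (ν : ℕ), 0 < sigmay y →
    (∀ n, 1 ≤ n → n ≤ ν → 2 * ell n ≤ sigmay y) →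
    ∑ n ∈ Finset.range (ν + 1), |hermiteCoef y n| * (5 * (2 ^ n * n.factorial)) ≤ C := by
  obtain ⟨C, hC, hcoef⟩ := exists_abs_PhiCoefR_le
  refine ⟨5 * (1 + C) * 2, by positivity, fun y ν hσ hell ↦ ?_⟩
  have hterm (n : ℕ) (hn : n ≤ ν) :
      |hermiteCoef y n| * (5 * (2 ^ n * n.factorial)) ≤ 5 * (1 + C) * (1 / 2) ^ n := by
    rcases n.eq_zero_or_pos with rfl | hn₁
    · simp [hermiteCoef, PhiCoefR_zero]
      linarith
    have hratio : ell n / sigmay y ≤ 1 / 2 := by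
      rw [div_le_div_iff₀ hσ two_pos]
      linarith [hell n hn₁ hn]
    have hell₀ := ell_pos hn₁
    calc |hermiteCoef y n| * (5 * (2 ^ n * n.factorial))
        ≤ C * (ell n ^ n / n.factorial) / (2 * sigmay y) ^ n * (5 * (2 ^ n * n.factorial)) := by
          rw [hermiteCoef, abs_div, abs_of_pos (by positivity : 0 < (2 * sigmay y) ^ n)]
          gcongr
          exact hcoef y n hn₁
      _ = 5 * C * (ell n / sigmay y) ^ n := by
          rw [mul_pow, div_pow]
          field_simp
      _ ≤ 5 * (1 + C) * (1 / 2) ^ n := by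
          gcongr
          linarith
  calc ∑ n ∈ Finset.range (ν + 1), |hermiteCoef y n| * (5 * (2 ^ n * n.factorial))
      ≤ ∑ n ∈ Finset.range (ν + 1), 5 * (1 + C) * (1 / 2) ^ n :=
        Finset.sum_le_sum fun n hn ↦ hterm n (Finset.mem_range_succ_iff.1 hn)
    _ ≤ 5 * (1 + C) * 2 := by
        rw [← Finset.mul_sum]
        gcongr
        exact sum_geometric_two_le _

/-! ### Choice of parameters -/

section Parameters

lemma real_sign_mul_of_pos {c : ℝ} (hc : 0 < c) (x : ℝ) : Real.sign (c * x) = Real.sign x := by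
  unfold Real.sign
  simp only [← smul_eq_mul, smul_neg_iff_of_pos_left hc, smul_pos_iff_of_pos_left hc]

lemma ell_le_log_add {n : ℕ} (hn : 1 ≤ n) {x : ℝ} (hx : 1 ≤ x) (hnx : n ≤ Real.exp x) :
    ell n ≤ Real.log x + (Real.log 2 + 1) := by
  have hn' : (1 : ℝ) ≤ n := mod_cast hn
  have hlog : Real.log (n + 1) ≤ 2 * x := by
    rw [Real.log_le_iff_le_exp (by linarith), two_mul, Real.exp_add]
    nlinarith [Real.add_one_le_exp x]
  have hloglog : Real.log (Real.log (n + 1)) ≤ Real.log 2 + Real.log x := by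
    rw [← Real.log_mul two_ne_zero (by linarith)]
    exact Real.log_le_log (Real.log_pos (by linarith)) hlog
  rw [ell]
  linarith

lemma two_mul_ell_le_sigmay {y : ℝ} (hy : 2 ≤ y) (hly : 1 ≤ Real.log y)
    (hlly : 10 ≤ Real.log (Real.log y)) {n : ℕ} (hn : 1 ≤ n)
    (hny : n ≤ Real.exp (Real.log y ^ ((1 : ℝ) / 4))) : 2 * ell n ≤ sigmay y := by
  have hell := ell_le_log_add hn (Real.one_le_rpow hly (by norm_num)) hny
  rw [Real.log_rpow (by linarith)] at hell
  linarith [log_log_sub_one_le_sigmay hy, Real.log_two_lt_d9]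

lemma exp_neg_half_le_one_div_sqrt {x : ℝ} (hx : 0 < x) : Real.exp (-(x / 2)) ≤ 1 / √x := by
  rw [Real.exp_neg, ← one_div]
  refine one_div_le_one_div_of_le (Real.sqrt_pos.2 hx) ?_
  nlinarith [Real.add_one_le_exp (x / 2), Real.sq_sqrt hx.le, sq_nonneg (√x - 1)]

lemma exists_even_mul_le_le {u v : ℝ} (hu : 0 < u) (huv : 16 * u ≤ v) :
    ∃ k : ℕ, Even k ∧ k ≠ 0 ∧ 8 * u * k ≤ v ∧ v ≤ 16 * u * k := by
  have hx : 1 ≤ v / (16 * u) := (one_le_div (by positivity)).2 huv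
  have hj : 1 ≤ ⌊v / (16 * u)⌋₊ := Nat.le_floor (mod_cast hx)
  have hj' : (1 : ℝ) ≤ ⌊v / (16 * u)⌋₊ := mod_cast hj
  have hle := (le_div_iff₀ (by positivity)).1 (Nat.floor_le (zero_le_one.trans hx))
  have hlt := (div_lt_iff₀ (by positivity)).1 (Nat.lt_floor_add_one (v / (16 * u)))
  refine ⟨2 * ⌊v / (16 * u)⌋₊, even_two_mul _, by omega, ?_, ?_⟩ <;> push_cast <;> nlinarith

lemma one_div_sqrt_le_four_mul_sqrt_div {u v x : ℝ} (hv : 0 < v) (hx : 0 < x)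
    (hvx : v ≤ 16 * u * x) : 1 / √x ≤ 4 * √(u / v) := by
  rw [show (4 : ℝ) = √(4 ^ 2) from (Real.sqrt_sq (by norm_num)).symm,
    ← Real.sqrt_mul (by norm_num), ← Real.sqrt_one, ← Real.sqrt_div zero_le_one]
  refine Real.sqrt_le_sqrt ?_
  rw [← mul_div_assoc, div_le_div_iff₀ hx hv]
  linarith

lemma smoothingError_le {y H L k : ℝ} (hH : 0 < H) (hk : 1 ≤ k) (hly : 1 ≤ Real.log y)
    (hkH : 8 * Real.log y * k ≤ Real.log H) (hLy : L ≤ Real.log y)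
    (hLk : 4 * L ^ 2 * sigmay y ≤ k) :
    2 / H * Real.exp (2 * k * Real.log y) * Real.exp L + 4 * Real.exp (2 * L ^ 2 * sigmay y - k) ≤
      6 * (1 / √k) := by
  have hfirst : 2 / H * Real.exp (2 * k * Real.log y) * Real.exp L ≤ 2 * Real.exp (-(k / 2)) := by
    rw [div_eq_mul_inv, ← Real.exp_log hH, ← Real.exp_neg, mul_assoc, mul_assoc, ← Real.exp_add,
      ← Real.exp_add]
    gcongr
    nlinarith
  have hsecond : Real.exp (2 * L ^ 2 * sigmay y - k) ≤ Real.exp (-(k / 2)) := by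
    gcongr
    linarith
  linarith [exp_neg_half_le_one_div_sqrt (zero_lt_one.trans_le hk)]

lemma one_div_min_mul_le {a b c : ℝ} (ha : 0 < a) (hb : 0 < b) (hc : 0 < c) :
    1 / (min a b * c) ≤ 1 / (a * c) + 1 / (b * c) := by
  rcases min_choice a b with h | h <;> rw [h]
  · exact le_add_of_nonneg_right (by positivity)
  · exact le_add_of_nonneg_left (by positivity)

lemma one_div_sqrt_div_mul_sqrt_le {x s : ℝ} (hx : 0 < x) (hs : 0 < s) :
    1 / (√(x / (4 * s)) * √(s / 2)) ≤ 3 * (1 / √x) := by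
  rw [← Real.sqrt_mul (by positivity), show x / (4 * s) * (s / 2) = x / 8 by field_simp; norm_num,
    Real.sqrt_div hx.le, one_div_div, div_eq_mul_one_div]
  refine mul_le_mul_of_nonneg_right ?_ (by positivity)
  exact Real.sqrt_le_iff.2 ⟨by norm_num, by norm_num⟩

lemma one_div_sqrt_mul_mul_sqrt_le {u l s : ℝ} (hu : 0 < u) (hl : 0 < l) (hs : l ≤ 2 * s) :
    1 / (√(u * l) * √(s / 2)) ≤ 2 * (1 / (√u * l)) := by
  have hlower : √u * l / 2 ≤ √(u * l) * √(s / 2) := by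
    rw [← Real.sqrt_mul (by positivity)]
    refine Real.le_sqrt_of_sq_le ?_
    rw [div_pow, mul_pow, Real.sq_sqrt hu.le]
    nlinarith [mul_pos hu hl]
  calc 1 / (√(u * l) * √(s / 2)) ≤ 1 / (√u * l / 2) :=
        one_div_le_one_div_of_le (by positivity) hlower
    _ = 2 * (1 / (√u * l)) := by rw [one_div_div, mul_one_div]

lemma exists_smoothing_parameters {y H : ℝ} (hy : 2 ≤ y) (hH : 0 < H) (hly : 1 ≤ Real.log y)
    (hlly : 10 ≤ Real.log (Real.log y)) (hyH : 16 * Real.log y ≤ Real.log H) :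
    ∃ (L : ℝ) (k : ℕ), 0 < L ∧ Even k ∧ k ≠ 0 ∧ L ^ 2 ≤ 4 * Real.log y ^ 2 ∧
      2 / H * y ^ (2 * k) * Real.exp L + 4 * Real.exp (2 * L ^ 2 * sigmay y - k) ≤
        24 * √(Real.log y / Real.log H) ∧
      1 / (L * √(sigmay y / 2)) ≤
        12 * √(Real.log y / Real.log H) + 2 * (1 / (√(Real.log y) * Real.log (Real.log y))) := by
  have hσ := log_log_sub_one_le_sigmay hy
  have hσ₀ : 0 < sigmay y := by linarith
  have hllly : Real.log (Real.log y) ≤ Real.log y :=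
    (Real.log_le_sub_one_of_pos (by linarith)).trans (by linarith)
  obtain ⟨k, hkeven, hk₀, hkH, hHk⟩ := exists_even_mul_le_le (by linarith) hyH
  have hk : (1 : ℝ) ≤ k := mod_cast Nat.one_le_iff_ne_zero.2 hk₀
  have hkpos := zero_lt_one.trans_le hk
  have hsqrt := one_div_sqrt_le_four_mul_sqrt_div (by linarith) hkpos hHk
  set L₁ := √(k / (4 * sigmay y))
  set L₂ := √(Real.log y * Real.log (Real.log y))
  have hL₁ : 0 < L₁ := Real.sqrt_pos.2 (by positivity)
  have hL₂ : 0 < L₂ := Real.sqrt_pos.2 (mul_pos (by linarith) (by linarith))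
  have hL : 0 < min L₁ L₂ := lt_min hL₁ hL₂
  have hLk : 4 * min L₁ L₂ ^ 2 * sigmay y ≤ k := by
    have hle := (Real.le_sqrt hL.le (by positivity)).1 (min_le_left L₁ L₂)
    rw [le_div_iff₀ (by positivity)] at hle
    linarith
  have hLy : min L₁ L₂ ≤ Real.log y :=
    (min_le_right _ _).trans (Real.sqrt_le_iff.2 ⟨by linarith, by nlinarith⟩)
  refine ⟨min L₁ L₂, k, hL, hkeven, hk₀, by nlinarith, ?_, ?_⟩
  · have herror := smoothingError_le hH hk hly hkH hLy hLk
    have hpow : y ^ (2 * k) = Real.exp (2 * k * Real.log y) := by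
      rw [← Real.exp_log (by linarith : 0 < y), ← Real.exp_nat_mul, Real.log_exp]
      push_cast
      rfl
    rw [hpow]
    linarith
  · have hmin := one_div_min_mul_le hL₁ hL₂ (Real.sqrt_pos.2 (half_pos hσ₀))
    have hterm₁ := one_div_sqrt_div_mul_sqrt_le hkpos hσ₀
    have hterm₂ := one_div_sqrt_mul_mul_sqrt_le (u := Real.log y) (l := Real.log (Real.log y))
      (s := sigmay y) (by linarith) (by linarith) (by linarith)
    linarith

end Parameters

/-! ### Comparison of distributions -/

section Comparison

lemma continuous_Vy (y : ℝ) : Continuous (Vy y) := by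
  unfold Vy
  fun_prop

lemma integrable_Vy (y : ℝ) (μ : Measure ℝ) [IsFiniteMeasure μ] : Integrable (Vy y) μ :=
  integrable_finsetSum _ fun p _ ↦ (Integrable.of_bound (C := 1)
    (by fun_prop) (Eventually.of_forall fun t ↦ Real.abs_sin_le_one _)).div_const _

/-- The quantity `Δ` in the error term, with `(log y)^{1/2}` and `(log y / log H)^{1/2}` written as
square roots. -/
noncomputable def errorTerm (y H : ℝ) (ν : ℕ) : ℝ :=
  1 / (√(Real.log y) * Real.log (Real.log y)) + √(Real.log y / Real.log H) +
    ellTerm (sigmay y) (ν + 1)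

/-- The difference between the mean of `sgn (V_y - a)` over `(T, T + H]` and its approximation by
the Hermite expansion of order `ν`. -/
noncomputable def signDiscrepancy (y T H : ℝ) (ν : ℕ) (a : ℝ) : ℝ :=
  (∫ t, Real.sign (Vy y t - a) ∂uniformIoc T (T + H)) -
    ∫ u, Real.sign (√(sigmay y / 2) * u - a) * hermiteSum (hermiteCoef y) (ν + 1) u

lemma exists_abs_signDiscrepancy_le_of_charFun : ∃ C : ℝ, 0 < C ∧
    ∀ {y T H L M : ℝ} {ν : ℕ} {w : ℝ → ℝ}, 0 < sigmay y → 0 < H → 0 < L →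
      (∑ n ∈ Finset.range (ν + 1), |hermiteCoef y n| * (5 * (2 ^ n * n.factorial)) ≤ M) →
      Continuous w →
      (∀ l, 0 < l → l ≤ 1 → ‖charFunVy y T H (L * l) - charFunTrunc y ν (L * l)‖ ≤ l * w l) →
      ∀ a, |signDiscrepancy y T H ν a| ≤
        C * ((∫ l in (0 : ℝ)..1, w l) + M / (L * √(sigmay y / 2))) := by
  obtain ⟨C, hC, hEsseen⟩ := exists_abs_integral_sign_sub_le
  refine ⟨C, hC, fun {y T H L M ν w} hσ hH hL hM hw hchar a ↦ ?_⟩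
  have := isProbabilityMeasure_uniformIoc (lt_add_of_pos_right T hH)
  have hg := continuous_hermiteSum (hermiteCoef y) (ν + 1)
  have hbound := hEsseen (μ := uniformIoc T (T + H)) (X := fun t ↦ L * Vy y t)
    (r := L * √(sigmay y / 2)) ((continuous_Vy y).const_mul L).measurable
    ((integrable_Vy y _).const_mul L) hg.measurable (integrable_hermiteSum _ _)
    (integrable_mul_hermiteSum _ _) (abs_hermiteSum_le hM) (by positivity) hw ?_ (L * a)
  · simpa only [signDiscrepancy, mul_assoc L, ← mul_sub L, real_sign_mul_of_pos hL] using hbound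
  · intro l hl hl₁
    convert hchar l hl hl₁ using 3
    · simp only [charFunVy, mul_assoc, mul_left_comm l]
    · rw [← integral_hermiteSum_hermiteCoef_mul_cexp hσ]
      simp only [mul_assoc, mul_left_comm l]

lemma abs_integral_sign_sub_le_one {μ : Measure ℝ} [IsProbabilityMeasure μ] (f : ℝ → ℝ) (a : ℝ) :
    |∫ t, Real.sign (f t - a) ∂μ| ≤ 1 := by
  simpa using norm_integral_le_of_norm_le_const (μ := μ) (f := fun t ↦ Real.sign (f t - a))
    (Eventually.of_forall fun t ↦ abs_real_sign_le_one _)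

lemma abs_signDiscrepancy_le {y T H M : ℝ} {ν : ℕ} (hσ : 0 < sigmay y) (hH : 0 < H)
    (hM : ∑ n ∈ Finset.range (ν + 1), |hermiteCoef y n| * (5 * (2 ^ n * n.factorial)) ≤ M) (a : ℝ) :
    |signDiscrepancy y T H ν a| ≤ 1 + M :=
  have := isProbabilityMeasure_uniformIoc (lt_add_of_pos_right T hH)
  (abs_sub _ _).trans (add_le_add (abs_integral_sign_sub_le_one _ _)
    (abs_integral_sign_mul_sub_mul_hermiteSum_le hM (by positivity) a))

lemma one_div_le_two_mul_one_div_sqrt_mul_log {x : ℝ} (hx : 1 < x) :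
    1 / x ≤ 2 * (1 / (√x * Real.log x)) := by
  have hsqrt : 0 < √x := Real.sqrt_pos.2 (by linarith)
  have hlog := Real.log_le_sub_one_of_pos hsqrt
  rw [Real.log_sqrt (by linarith)] at hlog
  have hlogpos := Real.log_pos hx
  rw [mul_one_div, div_le_div_iff₀ (by linarith) (by positivity)]
  nlinarith [Real.sq_sqrt (by linarith : 0 ≤ x)]

lemma errorTerm_nonneg {y : ℝ} (hlly : 0 ≤ Real.log (Real.log y)) (hσ : 0 ≤ sigmay y) (H : ℝ)
    (ν : ℕ) : 0 ≤ errorTerm y H ν := by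
  have := ellTerm_nonneg hσ ν.succ_pos
  unfold errorTerm
  positivity

lemma abs_signDiscrepancy_le_of_log_lt {y T H M : ℝ} {ν : ℕ} (hlly : 0 ≤ Real.log (Real.log y))
    (hσ : 0 < sigmay y) (hH : 1 < H) (hHy : Real.log H < 16 * Real.log y)
    (hM : ∑ n ∈ Finset.range (ν + 1), |hermiteCoef y n| * (5 * (2 ^ n * n.factorial)) ≤ M) (a : ℝ) :
    |signDiscrepancy y T H ν a| ≤ 4 * (1 + M) * errorTerm y H ν := by
  have htrivial := abs_signDiscrepancy_le (T := T) hσ (zero_lt_one.trans hH) hM a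
  have hellTerm := ellTerm_nonneg hσ.le ν.succ_pos
  have hfirst : 0 ≤ 1 / (√(Real.log y) * Real.log (Real.log y)) := by positivity
  have hsqrt : 1 / 4 ≤ √(Real.log y / Real.log H) := by
    refine Real.le_sqrt_of_sq_le ((le_div_iff₀ (Real.log_pos hH)).2 ?_)
    linarith
  have herror : 1 / 4 ≤ errorTerm y H ν := by
    unfold errorTerm
    linarith
  nlinarith [abs_nonneg (signDiscrepancy y T H ν a)]

lemma eventually_ten_le_log_log :
    ∀ᶠ y : ℝ in atTop, 2 ≤ y ∧ 1 ≤ Real.log y ∧ 10 ≤ Real.log (Real.log y) :=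
  (eventually_ge_atTop 2).and ((Real.tendsto_log_atTop.eventually_ge_atTop 1).and
    ((Real.tendsto_log_atTop.comp Real.tendsto_log_atTop).eventually_ge_atTop 10))

lemma exists_charFunVy_majorant : ∃ C : ℝ, 0 < C ∧ ∀ᶠ y : ℝ in atTop, ∀ (T : ℝ) {H : ℝ} (ν : ℕ),
    0 < H → 16 * Real.log y ≤ Real.log H → ∃ (L : ℝ) (w : ℝ → ℝ), 0 < L ∧ Continuous w ∧
      (∀ l, 0 < l → l ≤ 1 → ‖charFunVy y T H (L * l) - charFunTrunc y ν (L * l)‖ ≤ l * w l) ∧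
      ∫ l in (0 : ℝ)..1, w l ≤ C * errorTerm y H ν ∧
      1 / (L * √(sigmay y / 2)) ≤ C * errorTerm y H ν := by
  obtain ⟨B, hB, hmajorant⟩ := exists_charFunTrunc_majorant
  refine ⟨24 + 2 * B, by positivity, ?_⟩
  filter_upwards [hmajorant, eventually_ten_le_log_log]
    with y hmajorant ⟨hy, hly, hlly⟩ T H ν hH hyH
  have hσ : 0 ≤ sigmay y := by linarith [log_log_sub_one_le_sigmay hy]
  obtain ⟨L, k, hL, hkeven, hk₀, hLy, herror, hscale⟩ :=
    exists_smoothing_parameters hy hH hly hlly hyH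
  obtain ⟨w, hw, hwtrunc, hwint⟩ := hmajorant ν L hL hLy
  set c := 2 / H * y ^ (2 * k) * Real.exp L + 4 * Real.exp (2 * L ^ 2 * sigmay y - k)
  have hlog := one_div_le_two_mul_one_div_sqrt_mul_log (x := Real.log y)
    (by linarith [Real.log_le_sub_one_of_pos (zero_lt_one.trans_le hly)])
  have hellTerm := ellTerm_nonneg hσ ν.succ_pos
  have hS := Real.sqrt_nonneg (Real.log y / Real.log H)
  have hD : 0 ≤ 1 / (√(Real.log y) * Real.log (Real.log y)) := by positivity
  refine ⟨L, fun l ↦ c + w l, hL, continuous_const.add hw, fun l hl hl₁ ↦ ?_, ?_, ?_⟩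
  · rw [mul_add]
    exact (norm_sub_le_norm_sub_add_norm_sub _ (charFunModel y (L * l)) _).trans (add_le_add
      (norm_charFunVy_sub_charFunModel_le (by linarith) T hH hL.le hl.le hl₁ hkeven hk₀)
      (hwtrunc l hl.le hl₁))
  · rw [intervalIntegral.integral_add (by simp) (hw.intervalIntegrable _ _),
      intervalIntegral.integral_const, sub_zero, one_smul, errorTerm]
    nlinarith [mul_le_mul_of_nonneg_left hlog hB.le, mul_nonneg hB.le hS]
  · rw [errorTerm]
    nlinarith [mul_nonneg hB.le hD, mul_nonneg hB.le hS, mul_nonneg hB.le hellTerm]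

lemma exists_abs_signDiscrepancy_le_of_le_log : ∃ C : ℝ, 0 < C ∧ ∀ᶠ y : ℝ in atTop,
    ∀ {T H M : ℝ} {ν : ℕ}, 0 < H → 16 * Real.log y ≤ Real.log H →
      (∑ n ∈ Finset.range (ν + 1), |hermiteCoef y n| * (5 * (2 ^ n * n.factorial)) ≤ M) →
      ∀ a, |signDiscrepancy y T H ν a| ≤ C * (1 + M) * errorTerm y H ν := by
  obtain ⟨A, hA, hcompare⟩ := exists_abs_signDiscrepancy_le_of_charFun
  obtain ⟨B, hB, hmajorant⟩ := exists_charFunVy_majorant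
  refine ⟨A * B, by positivity, ?_⟩
  filter_upwards [hmajorant, eventually_ten_le_log_log]
    with y hmajorant ⟨hy, _, hlly⟩ T H M ν hH hyH hM a
  have hσ : 0 < sigmay y := by linarith [log_log_sub_one_le_sigmay hy]
  have hM₀ : 0 ≤ M := (Finset.sum_nonneg fun n _ ↦ by positivity).trans hM
  obtain ⟨L, w, hL, hw, hchar, hwint, hscale⟩ := hmajorant T ν hH hyH
  calc |signDiscrepancy y T H ν a|
      ≤ A * ((∫ l in (0 : ℝ)..1, w l) + M * (1 / (L * √(sigmay y / 2)))) := by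
        simpa only [mul_one_div] using hcompare hσ hH hL hM hw hchar a
    _ ≤ A * (B * errorTerm y H ν + M * (B * errorTerm y H ν)) := by gcongr
    _ = A * B * (1 + M) * errorTerm y H ν := by ring

lemma exists_abs_signDiscrepancy_le : ∃ C : ℝ, 0 < C ∧ ∀ᶠ y : ℝ in atTop,
    ∀ {H : ℝ}, 1 < H → ∀ (T a : ℝ) (ν : ℕ), ν ≤ Real.exp (Real.log y ^ ((1 : ℝ) / 4)) →
      |signDiscrepancy y T H ν a| ≤ C * errorTerm y H ν := by
  obtain ⟨M, hM, hcoef⟩ := exists_sum_abs_hermiteCoef_le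
  obtain ⟨C, hC, hlarge⟩ := exists_abs_signDiscrepancy_le_of_le_log
  refine ⟨(C + 4) * (1 + M), by positivity, ?_⟩
  filter_upwards [hlarge, eventually_ten_le_log_log]
    with y hlarge ⟨hy, hly, hlly⟩ H hH T a ν hν
  have hσ : 0 < sigmay y := by linarith [log_log_sub_one_le_sigmay hy]
  have hsum := hcoef y ν hσ fun n hn hnν ↦
    two_mul_ell_le_sigmay hy hly hlly hn ((Nat.cast_le.2 hnν).trans hν)
  have herror := errorTerm_nonneg (by linarith) hσ.le H ν
  rcases lt_or_ge (Real.log H) (16 * Real.log y) with hHy | hHy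
  · refine (abs_signDiscrepancy_le_of_log_lt (by linarith) hσ hH hHy hsum a).trans ?_
    gcongr
    linarith
  · refine (hlarge (zero_lt_one.trans hH) hHy hsum a).trans ?_
    gcongr
    linarith

lemma errorTerm_eq {y : ℝ} (hy : 1 ≤ y) (H : ℝ) (ν : ℕ) :
    errorTerm y H ν = Real.log y ^ (-(1 : ℝ) / 2) / Real.log (Real.log y) +
      (Real.log y / Real.log H) ^ ((1 : ℝ) / 2) +
      1 / ((ν : ℝ) + 1) *
        ((Real.log (Real.log ((ν : ℝ) + 2)) + 1) / sigmay y) ^ (ν + 1) := by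
  rw [errorTerm, ellTerm, ell, ← Real.sqrt_eq_rpow, neg_div, Real.rpow_neg (Real.log_nonneg hy),
    ← Real.sqrt_eq_rpow, one_div, mul_inv, div_eq_mul_inv]
  push_cast
  ring_nf

lemma mul_signDiscrepancy (y T : ℝ) {H : ℝ} (hH : 0 < H) (ν : ℕ) (a : ℝ) :
    H * signDiscrepancy y T H ν a = (∫ t in T..(T + H), Real.sign (Vy y t - a)) -
      H / √(2 * π) * ∑ n ∈ Finset.range (ν + 1), PhiCoefR y n / (2 * sigmay y) ^ n *
        ∫ u : ℝ, Real.exp (-u ^ 2 / 2) * hermiteEval (2 * n) u *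
          Real.sign (u * √(sigmay y / 2) - a) := by
  rw [signDiscrepancy, integral_sign_mul_sub_mul_hermiteSum,
    integral_uniformIoc (lt_add_of_pos_right T hH), add_sub_cancel_left, smul_eq_mul, mul_sub,
    mul_inv_cancel_left₀ hH.ne', ← mul_assoc, mul_one_div]
  simp only [hermiteCoef, gaussHermite, mul_comm (Real.sign _), mul_comm (√(sigmay y / 2))]

end Comparison

theorem sgn_Vy_asymptotic_general :
    ∃ C y₀ : ℝ, 0 < C ∧ 2 < y₀ ∧ ∀ H y : ℝ, 1 < H → y₀ < y →
      ∀ T α : ℝ, ∀ ν : ℕ, (ν : ℝ) ≤ Real.exp (Real.log y ^ ((1 : ℝ) / 4)) →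
        |(∫ t in T..(T + H), Real.sign (Vy y t - α))
          - H / √(2 * π) * ∑ n ∈ Finset.range (ν + 1),
              (PhiCoefR y n / (2 * sigmay y) ^ n) *
                ∫ u : ℝ, Real.exp (-u ^ 2 / 2) * hermiteEval (2 * n) u *
                  Real.sign (u * √(sigmay y / 2) - α)|
        ≤ C * H * (Real.log y ^ (-(1 : ℝ) / 2) / Real.log (Real.log y)
            + (Real.log y / Real.log H) ^ ((1 : ℝ) / 2)
            + (1 / ((ν : ℝ) + 1)) *
                ((Real.log (Real.log ((ν : ℝ) + 2)) + 1) / sigmay y) ^ (ν + 1)) := by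
  obtain ⟨C, hC, hlarge⟩ := exists_abs_signDiscrepancy_le
  obtain ⟨y₀, hy₀⟩ := eventually_atTop.1 hlarge
  refine ⟨C, max y₀ 3, hC, lt_max_of_lt_right (by norm_num), fun H y hH hy T α ν hν ↦ ?_⟩
  obtain ⟨hyy₀, hy₃⟩ := max_lt_iff.1 hy
  have hH₀ : 0 < H := zero_lt_one.trans hH
  rw [← mul_signDiscrepancy y T hH₀, ← errorTerm_eq (by linarith), abs_mul, abs_of_pos hH₀,
    mul_comm C, mul_assoc]
  exact mul_le_mul_of_nonneg_left (hy₀ y hyy₀.le hH T α ν hν) hH₀.le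

/-- **Theorem 3** (Ivić–Korolev). For `1 < H₀ < H`, `y₀ < y ≤ exp(log H/(c log log H))` with
`c = 1.4·10⁴` and `y₀` a sufficiently large absolute constant, any real `T`, `α`, and any
integer `0 ≤ ν ≤ exp((log y)^{1/4})`,
`∫_T^{T+H} sgn(V_y(t)-α) dt = (H/√(2π)) ∑_{n=0}^{ν} (Φ_n/(2σ)ⁿ)
  ∫_{-∞}^{∞} e^{-u²/2} H_{2n}(u) sgn(u√(σ/2)-α) du + O(HΔ)`,
with an absolute `O`-constant. -/
theorem sgn_Vy_asymptotic :
    ∃ C y₀ : ℝ, 0 < C ∧ 2 < y₀ ∧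
      ∀ H₀ H y : ℝ, 1 < H₀ → H₀ < H →
        y₀ < y → y ≤ Real.exp (Real.log H / (14000 * Real.log (Real.log H))) →
        ∀ T α : ℝ, ∀ ν : ℕ, (ν : ℝ) ≤ Real.exp ((Real.log y) ^ ((1 : ℝ) / 4)) →
          |(∫ t in T..(T + H), Real.sign (Vy y t - α))
            - H / Real.sqrt (2 * π) * ∑ n ∈ Finset.range (ν + 1),
                (PhiCoefR y n / (2 * sigmay y) ^ n) *
                  ∫ u : ℝ, Real.exp (-u ^ 2 / 2) * hermiteEval (2 * n) u *
                    Real.sign (u * Real.sqrt (sigmay y / 2) - α)|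
          ≤ C * H * ((Real.log y) ^ (-(1 : ℝ) / 2) / Real.log (Real.log y)
              + (Real.log y / Real.log H) ^ ((1 : ℝ) / 2)
              + (1 / ((ν : ℝ) + 1)) *
                  ((Real.log (Real.log ((ν : ℝ) + 2)) + 1) / sigmay y) ^ (ν + 1)) := by
  obtain ⟨C, y₀, hC, hy₀, h⟩ := sgn_Vy_asymptotic_general
  exact ⟨C, y₀, hC, hy₀, fun _ H y hH₀ hH hy _ ↦ h H y (hH₀.trans hH) hy⟩
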